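/- Let T be a scalar Calderón–Zygmund operator on ℝ^d with modulus of continuity ω satisfying the Dini condition, let ρ ∈ (2,∞), and assume V_ρ(T_*) is bounded on L^q(ℝ^d) for some q ∈ (1,∞). Let Q₀ ⊂ ℝ^d be a fixed cube and let p ∈ (1,q]. Then the local grand maximal truncated operator M_{V_ρ(T_*),Q₀} is bounded on L^p(ℝ^d) and is of weak type (1,1); moreover, the operator norms ‖M_{V_ρ(T_*),Q₀}‖_{L^p→L^p} and ‖M_{V_ρ(T_*),Q₀}‖_{L^1→L^{1,∞}} are bounded by constants independent of the cube Q₀. -/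

import Mathlib

open MeasureTheory Set Filter Classical
open scoped ENNReal
noncomputable section

abbrev Rd (d : ℕ) := EuclideanSpace ℝ (Fin d)

/-- An axis-parallel (half-open) cube in `ℝ^d`, given by its center and side length. -/
structure Cube (d : ℕ) where
  c : Fin d → ℝ
  l : ℝ
  hl : 0 < l

/-- The underlying (half-open) set of a cube. -/
def Cube.set {d : ℕ} (Q : Cube d) : Set (Rd d) :=
  {y | ∀ i, Q.c i - Q.l / 2 ≤ y i ∧ y i < Q.c i + Q.l / 2}

/-- The (half-open) set `tQ`, the cube concentric with `Q` of side length `t·ℓ(Q)`. -/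
def Cube.dilate {d : ℕ} (Q : Cube d) (t : ℝ) : Set (Rd d) :=
  {y | ∀ i, Q.c i - t * Q.l / 2 ≤ y i ∧ y i < Q.c i + t * Q.l / 2}

/-- The volume `|Q| = ℓ(Q)^d` of a cube, as an extended nonnegative real. -/
def Cube.vol {d : ℕ} (Q : Cube d) : ℝ≥0∞ := ENNReal.ofReal (Q.l ^ d)

/-- `Q` is one of the dyadic subcubes of `Q₀` obtained by repeated subdivision of `Q₀`
into `2^d` congruent subcubes. -/
def IsDyadicSubcube {d : ℕ} (Q₀ Q : Cube d) : Prop :=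
  ∃ (k : ℕ) (m : Fin d → ℕ), (∀ i, m i < 2 ^ k) ∧ Q.l = Q₀.l / 2 ^ k ∧
    ∀ i, Q.c i = Q₀.c i - Q₀.l / 2 + ((m i : ℝ) + 1 / 2) * (Q₀.l / 2 ^ k)
/-- A scalar Calderón–Zygmund operator on `ℝ^d` with Dini modulus of continuity:
a linear operator `T` bounded on `L²(ℝ^d)` associated with a kernel `K` satisfying the
size condition and the `ω`-smoothness condition, where `ω` is increasing, subadditive,
vanishes at `0`, and satisfies the Dini condition `∫₀¹ ω(t) dt/t < ∞`. -/
structure CZO (d : ℕ) where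
  K : Rd d → Rd d → ℝ
  measK : Measurable (Function.uncurry K)
  ω : ℝ → ℝ
  Cst : ℝ
  hCst : 0 < Cst
  ω_mono : MonotoneOn ω (Set.Ici 0)
  ω_zero : ω 0 = 0
  ω_subadd : ∀ s t : ℝ, 0 ≤ s → 0 ≤ t → ω (s + t) ≤ ω s + ω t
  dini : IntegrableOn (fun t => ω t / t) (Set.Ioo (0 : ℝ) 1)
  size : ∀ x y : Rd d, x ≠ y → |K x y| ≤ Cst / dist x y ^ d
  smooth : ∀ x x' y : Rd d, x ≠ y → dist x x' ≤ dist x y / 2 →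
    |K x y - K x' y| + |K y x - K y x'| ≤ Cst * ω (dist x x' / dist x y) / dist x y ^ d
  T : Lp ℝ 2 (volume : Measure (Rd d)) →L[ℝ] Lp ℝ 2 (volume : Measure (Rd d))
  assoc : ∀ f : Lp ℝ 2 (volume : Measure (Rd d)),
    ∀ᵐ x ∂(volume : Measure (Rd d)), x ∉ tsupport (f : Rd d → ℝ) →
      (T f : Rd d → ℝ) x = ∫ y, K x y * f y

/-- The truncated singular integral `T_ε f(x) = ∫_{|x-y|>ε} K(x,y) f(y) dy`. -/
def CZO.trunc {d : ℕ} (S : CZO d) (ε : ℝ) (f : Rd d → ℝ) (x : Rd d) : ℝ :=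
  ∫ y in {y : Rd d | ε < dist x y}, S.K x y * f y

/-- The variation operator `V_ρ(T_* f)(x)`, with values in `[0,∞]`: the supremum over all
strictly decreasing positive sequences `ε_i → 0` of `(Σ_i |T_{ε_{i+1}}f(x) - T_{ε_i}f(x)|^ρ)^{1/ρ}`. -/
def CZO.var {d : ℕ} (S : CZO d) (ρ : ℝ) (f : Rd d → ℝ) (x : Rd d) : ℝ≥0∞ :=
  ⨆ (ε : ℕ → ℝ) (_ : StrictAnti ε ∧ (∀ i, 0 < ε i) ∧ Tendsto ε atTop (nhds 0)),
    (∑' i : ℕ, ENNReal.ofReal |S.trunc (ε (i + 1)) f x - S.trunc (ε i) f x| ^ ρ) ^ (1 / ρ)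

/-- `V_ρ(T_*)` is bounded on `L^q(ℝ^d)`. -/
def CZO.VarBdd {d : ℕ} (S : CZO d) (ρ q : ℝ) : Prop :=
  ∃ A : ℝ, 0 < A ∧ ∀ f : Rd d → ℝ, Measurable f →
    ∫⁻ x, S.var ρ f x ^ q ∂volume ≤ ENNReal.ofReal A * ∫⁻ x, ENNReal.ofReal |f x| ^ q ∂volume

/-- The weak `(1,1)` operator (quasi-)norm `‖V_ρ(T_*)‖_{L¹ → L^{1,∞}}`. -/
def CZO.weak11Norm {d : ℕ} (S : CZO d) (ρ : ℝ) : ℝ≥0∞ :=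
  sInf {A : ℝ≥0∞ | ∀ f : Rd d → ℝ, Measurable f → ∀ t : ℝ, 0 < t →
    ENNReal.ofReal t * volume {x | ENNReal.ofReal t < S.var ρ f x} ≤
      A * ∫⁻ x, ENNReal.ofReal |f x| ∂volume}

/-- The local grand maximal truncated operator `M_{V_ρ(T_*),Q₀}`. -/
def CZO.grandMaxLoc {d : ℕ} (S : CZO d) (ρ : ℝ) (Q₀ : Cube d) (f : Rd d → ℝ) (x : Rd d) : ℝ≥0∞ :=
  if x ∈ Q₀.set then
    ⨆ (Q : Cube d) (_ : x ∈ Q.set ∧ Q.set ⊆ Q₀.set),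
      essSup (fun ξ => S.var ρ ((Q₀.dilate 3 \ Q.dilate 3).indicator f) ξ)
        (volume.restrict Q.set)
  else 0

/-- The (global) grand maximal truncated operator `M_{V_ρ(T_*)}`. -/
def CZO.grandMax {d : ℕ} (S : CZO d) (ρ : ℝ) (f : Rd d → ℝ) (x : Rd d) : ℝ≥0∞ :=
  ⨆ (Q : Cube d) (_ : x ∈ Q.set),
    essSup (fun ξ => S.var ρ (((Q.dilate 3)ᶜ).indicator f) ξ) (volume.restrict Q.set)

/-- The Hardy–Littlewood maximal operator over cubes, with values in `[0,∞]`. -/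
def maxCube {d : ℕ} (f : Rd d → ℝ) (x : Rd d) : ℝ≥0∞ :=
  ⨆ (Q : Cube d) (_ : x ∈ Q.set), Q.vol⁻¹ * ∫⁻ y in Q.set, ENNReal.ofReal |f y|

/-- The average `⟨|f|⟩_{3Q} = (1/|3Q|) ∫_{3Q} |f|`. -/
def avg3 {d : ℕ} (Q : Cube d) (f : Rd d → ℝ) : ℝ :=
  (∫ y in Q.dilate 3, |f y|) / (3 * Q.l) ^ d
/-- The Euclidean norm of a vector in `ℝ^n`. -/
def enorm' {n : ℕ} (v : Fin n → ℝ) : ℝ := Real.sqrt (∑ i, v i ^ 2)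

/-- The operator norm (with respect to Euclidean norms) of an `n × n` real matrix. -/
def matOpNorm {n : ℕ} (A : Matrix (Fin n) (Fin n) ℝ) : ℝ :=
  sSup ((fun v => enorm' (A.mulVec v)) '' {v | enorm' v ≤ 1})

/-- The spectral power `A^s` of a symmetric matrix `A = U D Uᵗ`, defined as `U D^s Uᵗ`
(junk value `A` if `A` is not symmetric). -/
def Matrix.rpowH {n : ℕ} (A : Matrix (Fin n) (Fin n) ℝ) (s : ℝ) : Matrix (Fin n) (Fin n) ℝ :=
  if h : A.IsHermitian then
    (h.eigenvectorUnitary : Matrix (Fin n) (Fin n) ℝ) *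
      Matrix.diagonal (fun i => h.eigenvalues i ^ s) *
      star (h.eigenvectorUnitary : Matrix (Fin n) (Fin n) ℝ)
  else A

/-- A matrix weight on `ℝ^d`: a measurable function with a.e. symmetric positive definite
values whose operator norm is locally integrable. -/
structure MatrixWeight (d n : ℕ) where
  W : Rd d → Matrix (Fin n) (Fin n) ℝ
  meas : ∀ i j, Measurable fun x => W x i j
  pd : ∀ᵐ x : Rd d, (W x).PosDef
  locInt : LocallyIntegrable (fun x => matOpNorm (W x)) (volume : Measure (Rd d))

/-- The matrix `A_p` characteristic `[W]_{A_p}`. -/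
def MatrixWeight.apConst {d n : ℕ} (W : MatrixWeight d n) (p : ℝ) : ℝ≥0∞ :=
  ⨆ Q : Cube d, Q.vol⁻¹ * ∫⁻ x in Q.set,
    (Q.vol⁻¹ * ∫⁻ t in Q.set,
        ENNReal.ofReal (matOpNorm ((W.W x).rpowH (1 / p) * (W.W t).rpowH (-(1 / p))))
          ^ (p / (p - 1))) ^ (p - 1)

/-- The norm of `f` in `L^p(W)`. -/
def MatrixWeight.wNorm {d n : ℕ} (W : MatrixWeight d n) (p : ℝ)
    (f : Rd d → Fin n → ℝ) : ℝ≥0∞ :=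
  (∫⁻ x, ENNReal.ofReal (enorm' (((W.W x).rpowH (1 / p)).mulVec (f x))) ^ p) ^ (1 / p)

/-- The Euclidean length `|V_ρ(T_{n,*} f⃗)(x)|` of the componentwise variation vector
(with values in `[0,∞]`). -/
def CZO.varVecNorm {d : ℕ} (n : ℕ) (S : CZO d) (ρ : ℝ) (f : Rd d → Fin n → ℝ)
    (x : Rd d) : ℝ≥0∞ :=
  (∑ j : Fin n, S.var ρ (fun y => f y j) x ^ (2 : ℝ)) ^ ((1 : ℝ) / 2)

/-- An `η`-sparse family of cubes. -/
def IsSparse {d : ℕ} (η : ℝ) (F : Set (Cube d)) : Prop :=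
  ∃ E : Cube d → Set (Rd d),
    (∀ Q ∈ F, E Q ⊆ Q.set ∧ MeasurableSet (E Q) ∧ ENNReal.ofReal η * Q.vol ≤ volume (E Q)) ∧
    F.PairwiseDisjoint E

/-- The convex body average `⟨⟨f⃗⟩⟩_{tQ}` of a vector-valued function over the cube `tQ`. -/
def convexBodyAvg {d n : ℕ} (f : Rd d → Fin n → ℝ) (Q : Cube d) (t : ℝ) :
    Set (Fin n → ℝ) :=
  {v | ∃ φ : Rd d → ℝ, Measurable φ ∧ (∀ y, |φ y| ≤ 1) ∧
    ∀ j, v j = (∫ y in Q.dilate t, φ y * f y j) / (t * Q.l) ^ d}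

/-!
For `f` supported away from `3Q`, the variations of the truncations at two points `x, ξ` of `Q`
differ by two effects. The kernels differ, which the Dini condition controls by the maximal
function; and the annuli `{ε' < |x - y| ≤ ε}` and `{ε' < |ξ - y| ≤ ε}` differ by shells of thickness
`≲ ℓ(Q)`, whose `ℓ^r` sum over disjoint annuli is controlled, for every `r > 1`, by
`(M |f|^r)^{1/r}` through Hölder's inequality on each shell. With `1 < r < q` this dominates the
grand maximal function by `V_ρ(T_* f)` and maximal functions, which gives the bound on `L^q`.

For weak type `(1,1)`, decompose `f` at height `α` into a good and a bad part. The good part is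
handled by the `L^q` bound. Off the dilated cells, an annulus meets each cell of the bad part
entirely or along its boundary. In the first case cancellation and the Dini condition apply. In the
second case the cell lies within its own scale of a sphere; since the mean of the bad part over a
cell is `≲ α`, the straddling cells contribute `≲ α^{ρ-1}` times a summable tail to the `ρ`-th power
of the variation, uniformly in the annuli. All exponents in between follow by real interpolation.
-/

open Metric Module Topology

/-! ### Marcinkiewicz interpolation from level-set bounds -/

section Interpolation

lemma rpow_sub_one_mul_self {q : ℝ} (hq : 1 ≤ q) (x : ℝ≥0∞) : x ^ (q - 1) * x = x ^ q := by
  simpa using (ENNReal.rpow_add_of_nonneg (x := x) (q - 1) 1 (sub_nonneg.2 hq) zero_le_one).symm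

lemma lintegral_rpow_sub_one_of_lt {a : ℝ} (ha : 0 < a) (u : ℝ≥0∞) :
    ∫⁻ t in {t : ℝ | 0 < t ∧ ENNReal.ofReal t < u}, ENNReal.ofReal (t ^ (a - 1)) =
      u ^ a / ENNReal.ofReal a := by
  induction u with
  | top =>
    have hset : {t : ℝ | 0 < t ∧ ENNReal.ofReal t < ∞} = Ioi 0 := by ext; simp
    rw [hset, ENNReal.top_rpow_of_pos ha, ENNReal.top_div_of_ne_top ENNReal.ofReal_ne_top]
    by_contra h
    refine not_integrableOn_Ioi_rpow (a - 1) ((lintegral_ofReal_ne_top_iff_integrable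
      (by fun_prop) ?_).1 h)
    filter_upwards [ae_restrict_mem measurableSet_Ioi] with t ht
    exact Real.rpow_nonneg (le_of_lt ht) _
  | coe s =>
    have hset : {t : ℝ | 0 < t ∧ ENNReal.ofReal t < s} = Ioo 0 (s : ℝ) := by
      ext t
      refine and_congr_right fun ht => ?_
      rw [← ENNReal.ofReal_coe_nnreal, ENNReal.ofReal_lt_ofReal_iff_of_nonneg ht.le]
    have hint := intervalIntegral.intervalIntegrable_rpow' (a := 0) (b := s) (r := a - 1)
      (by linarith)
    rw [intervalIntegrable_iff_integrableOn_Ioc_of_le s.coe_nonneg] at hint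
    rw [hset, restrict_Ioo_eq_restrict_Ioc, ← ofReal_integral_eq_lintegral_ofReal hint,
      ← intervalIntegral.integral_of_le s.coe_nonneg, integral_rpow (Or.inl (by linarith)),
      sub_add_cancel, Real.zero_rpow ha.ne', sub_zero, ENNReal.ofReal_div_of_pos ha,
      ← ENNReal.ofReal_rpow_of_nonneg s.coe_nonneg ha.le, ENNReal.ofReal_coe_nnreal]
    filter_upwards [ae_restrict_mem measurableSet_Ioc] with t ht
    exact Real.rpow_nonneg ht.1.le _

lemma lintegral_rpow_neg_sub_one_of_ge {b : ℝ} (hb : 0 < b) {u : ℝ≥0∞} (hu : u ≠ 0) :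
    ∫⁻ t in {t : ℝ | 0 < t ∧ u ≤ ENNReal.ofReal t}, ENNReal.ofReal (t ^ (-b - 1)) =
      u ^ (-b) / ENNReal.ofReal b := by
  induction u with
  | top => simp [hb]
  | coe s =>
    have hs : 0 < (s : ℝ) := by simpa [pos_iff_ne_zero] using hu
    have hset : {t : ℝ | 0 < t ∧ (s : ℝ≥0∞) ≤ ENNReal.ofReal t} = Ici (s : ℝ) := by
      ext t
      rw [mem_ofPred_eq, ← ENNReal.ofReal_coe_nnreal]
      refine ⟨fun h => (ENNReal.ofReal_le_ofReal_iff h.1.le).1 h.2, fun h => ?_⟩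
      exact ⟨hs.trans_le h, ENNReal.ofReal_le_ofReal h⟩
    have hlt : -b - 1 < -1 := by linarith
    rw [hset, ← restrict_Ioi_eq_restrict_Ici, ← ofReal_integral_eq_lintegral_ofReal
      (integrableOn_Ioi_rpow_of_lt hlt hs), integral_Ioi_rpow_of_lt hlt hs, sub_add_cancel,
      neg_div_neg_eq, ENNReal.ofReal_div_of_pos hb, ← ENNReal.ofReal_rpow_of_pos hs,
      ENNReal.ofReal_coe_nnreal]
    filter_upwards [ae_restrict_mem measurableSet_Ioi] with t ht
    exact Real.rpow_nonneg (hs.trans ht).le _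

variable {α : Type*} [MeasurableSpace α] {μ : Measure α} [SFinite μ]

lemma lintegral_mul_measure_section {β : Type*} [MeasurableSpace β] {ν : Measure β} [SFinite ν]
    {A : Set (α × β)} (hA : MeasurableSet A) {g : β → ℝ≥0∞} (hg : Measurable g) :
    ∫⁻ t, g t * μ ((·, t) ⁻¹' A) ∂ν = ∫⁻ x, ∫⁻ t in Prod.mk x ⁻¹' A, g t ∂ν ∂μ := by
  have hmeas : Measurable (A.indicator fun z : α × β => g z.2) :=
    (hg.comp measurable_snd).indicator hA
  calc ∫⁻ t, g t * μ ((·, t) ⁻¹' A) ∂ν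
      = ∫⁻ t, ∫⁻ x, A.indicator (fun z : α × β => g z.2) (x, t) ∂μ ∂ν := by
        refine lintegral_congr fun t => ?_
        rw [← setLIntegral_const, ← lintegral_indicator (measurable_prodMk_right hA)]
        rfl
    _ = ∫⁻ x, ∫⁻ t, A.indicator (fun z : α × β => g z.2) (x, t) ∂ν ∂μ :=
        lintegral_lintegral_swap (hmeas.comp measurable_swap).aemeasurable
    _ = ∫⁻ x, ∫⁻ t in Prod.mk x ⁻¹' A, g t ∂ν ∂μ := by
        refine lintegral_congr fun x => ?_
        rw [← lintegral_indicator (measurable_prodMk_left hA)]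
        rfl

lemma lintegral_rpow_eq_lintegral_superlevel {F : α → ℝ≥0∞} (hF : Measurable F) {a : ℝ}
    (ha : 0 < a) :
    ∫⁻ t in Ioi (0 : ℝ), ENNReal.ofReal (t ^ (a - 1)) * μ {x | ENNReal.ofReal t < F x} =
      (∫⁻ x, F x ^ a ∂μ) / ENNReal.ofReal a := by
  have hA : MeasurableSet {z : α × ℝ | ENNReal.ofReal z.2 < F z.1} :=
    measurableSet_lt (by fun_prop) (by fun_prop)
  rw [ENNReal.div_eq_inv_mul, ← lintegral_const_mul' _ _ (by simpa using ha)]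
  refine (lintegral_mul_measure_section hA (by fun_prop)).trans (lintegral_congr fun x => ?_)
  rw [← ENNReal.div_eq_inv_mul, ← lintegral_rpow_sub_one_of_lt ha,
    Measure.restrict_restrict (measurable_prodMk_left hA)]
  congr 2
  ext t
  exact and_comm

lemma lintegral_sublevel_eq_lintegral_rpow_neg {F : α → ℝ≥0∞} (hF : Measurable F)
    (hF0 : ∀ᵐ x ∂μ, F x ≠ 0) {b : ℝ} (hb : 0 < b) :
    ∫⁻ t in Ioi (0 : ℝ), ENNReal.ofReal (t ^ (-b - 1)) * μ {x | F x ≤ ENNReal.ofReal t} =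
      (∫⁻ x, F x ^ (-b) ∂μ) / ENNReal.ofReal b := by
  have hA : MeasurableSet {z : α × ℝ | F z.1 ≤ ENNReal.ofReal z.2} :=
    measurableSet_le (by fun_prop) (by fun_prop)
  rw [ENNReal.div_eq_inv_mul, ← lintegral_const_mul' _ _ (by simpa using hb)]
  refine (lintegral_mul_measure_section hA (by fun_prop)).trans (lintegral_congr_ae ?_)
  filter_upwards [hF0] with x hx
  rw [← ENNReal.div_eq_inv_mul, ← lintegral_rpow_neg_sub_one_of_ge hb hx,
    Measure.restrict_restrict (measurable_prodMk_left hA)]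
  congr 2
  ext t
  exact and_comm

lemma lintegral_rpow_le_lintegral_superlevel (F : α → ℝ≥0∞) {p : ℝ} (hp : 0 < p) :
    ∫⁻ x, F x ^ p ∂μ ≤ ENNReal.ofReal p *
      ∫⁻ t in Ioi (0 : ℝ), ENNReal.ofReal (t ^ (p - 1)) * μ {x | ENNReal.ofReal t < F x} := by
  obtain ⟨G, hG, hGF, hGe⟩ := exists_measurable_le_lintegral_eq μ (fun x => F x ^ p)
  have hroot (x : α) : (G x ^ p⁻¹) ^ p = G x := ENNReal.rpow_inv_rpow hp.ne' _
  have hle (x : α) : G x ^ p⁻¹ ≤ F x := (ENNReal.rpow_inv_le_iff hp).2 (hGF x)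
  calc ∫⁻ x, F x ^ p ∂μ
      = ENNReal.ofReal p * ((∫⁻ x, (G x ^ p⁻¹) ^ p ∂μ) / ENNReal.ofReal p) := by
        rw [ENNReal.mul_div_cancel (by simpa using hp) ENNReal.ofReal_ne_top, hGe]
        simp only [hroot]
    _ = ENNReal.ofReal p * ∫⁻ t in Ioi (0 : ℝ), ENNReal.ofReal (t ^ (p - 1)) *
          μ {x | ENNReal.ofReal t < G x ^ p⁻¹} := by
        rw [lintegral_rpow_eq_lintegral_superlevel (hG.pow_const _) hp]
    _ ≤ _ := by
        gcongr with t x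
        exact hle x

lemma lintegral_superlevel_mass {u : α → ℝ≥0∞} (hu : Measurable u) {p : ℝ} (hp : 1 < p) :
    ∫⁻ t in Ioi (0 : ℝ), ENNReal.ofReal (t ^ (p - 1 - 1)) *
      ∫⁻ y in {y | ENNReal.ofReal t < u y}, u y ∂μ =
      (∫⁻ y, u y ^ p ∂μ) / ENNReal.ofReal (p - 1) := by
  have hcake := lintegral_rpow_eq_lintegral_superlevel (μ := μ.withDensity u) hu (sub_pos.2 hp)
  rw [lintegral_withDensity_eq_lintegral_mul _ hu (by fun_prop)] at hcake
  have hpow (y : α) : (u * fun x => u x ^ (p - 1)) y = u y ^ p := by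
    rw [Pi.mul_apply, mul_comm, rpow_sub_one_mul_self hp.le]
  simp only [hpow] at hcake
  rw [← hcake]
  refine lintegral_congr fun t => ?_
  rw [withDensity_apply _ (measurableSet_lt measurable_const hu)]

lemma lintegral_sublevel_mass_le {u : α → ℝ≥0∞} (hu : Measurable u) {p q : ℝ} (hp : 0 < p)
    (hpq : p < q) :
    ∫⁻ t in Ioi (0 : ℝ), ENNReal.ofReal (t ^ (-(q - p) - 1)) *
      ∫⁻ y in {y | u y ≤ ENNReal.ofReal t}, u y ^ q ∂μ ≤
      (∫⁻ y, u y ^ p ∂μ) / ENNReal.ofReal (q - p) := by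
  have hu0 : ∀ᵐ y ∂μ.withDensity fun y => u y ^ q, u y ≠ 0 := by
    rw [ae_withDensity_iff (hu.pow_const q)]
    refine ae_of_all _ fun y hy h0 => hy ?_
    rw [h0, ENNReal.zero_rpow_of_pos (hp.trans hpq)]
  have hcake := lintegral_sublevel_eq_lintegral_rpow_neg hu hu0 (sub_pos.2 hpq)
  rw [lintegral_withDensity_eq_lintegral_mul _ (hu.pow_const q) (by fun_prop)] at hcake
  calc _ = (∫⁻ y, u y ^ q * u y ^ (-(q - p)) ∂μ) / ENNReal.ofReal (q - p) := by
        refine Eq.trans (lintegral_congr fun t => ?_) hcake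
        rw [withDensity_apply _ (measurableSet_le hu measurable_const)]
    _ ≤ _ := by
        gcongr with y
        rcases eq_or_ne (u y) 0 with h0 | h0
        · simp [h0, hp.trans hpq]
        rcases eq_or_ne (u y) ∞ with htop | htop
        · simp [htop, hpq, hp]
        rw [← ENNReal.rpow_add _ _ h0 htop, show q + -(q - p) = p by ring]

lemma ofReal_rpow_sub_one_mul_le_of_le_add {t : ℝ} (ht : 0 < t) (p q : ℝ) {C₁ C₂ m a b : ℝ≥0∞}
    (h : m ≤ C₁ * (ENNReal.ofReal t)⁻¹ * a + C₂ * (ENNReal.ofReal t ^ q)⁻¹ * b) :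
    ENNReal.ofReal (t ^ (p - 1)) * m ≤ C₁ * (ENNReal.ofReal (t ^ (p - 1 - 1)) * a) +
      C₂ * (ENNReal.ofReal (t ^ (-(q - p) - 1)) * b) := by
  have h₁ : ENNReal.ofReal (t ^ (p - 1 - 1)) =
      ENNReal.ofReal (t ^ (p - 1)) * (ENNReal.ofReal t)⁻¹ := by
    rw [Real.rpow_sub_one ht.ne', ENNReal.ofReal_div_of_pos ht, div_eq_mul_inv]
  have h₂ : ENNReal.ofReal (t ^ (-(q - p) - 1)) =
      ENNReal.ofReal (t ^ (p - 1)) * (ENNReal.ofReal t ^ q)⁻¹ := by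
    rw [show -(q - p) - 1 = p - 1 - q by ring, Real.rpow_sub ht,
      ENNReal.ofReal_div_of_pos (by positivity), ENNReal.ofReal_rpow_of_pos ht, div_eq_mul_inv]
  rw [h₁, h₂]
  exact (mul_le_mul_right h _).trans_eq (by ring)

lemma marcinkiewicz_interpolation {p q : ℝ} (hp : 1 < p) (hpq : p < q) (C₁ C₂ : ℝ≥0∞) (F : α → ℝ≥0∞)
    {u : α → ℝ≥0∞} (hu : Measurable u)
    (h : ∀ t : ℝ, 0 < t → μ {x | ENNReal.ofReal t < F x} ≤
      C₁ * (ENNReal.ofReal t)⁻¹ * ∫⁻ y in {y | ENNReal.ofReal t < u y}, u y ∂μ +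
      C₂ * (ENNReal.ofReal t ^ q)⁻¹ * ∫⁻ y in {y | u y ≤ ENNReal.ofReal t}, u y ^ q ∂μ) :
    ∫⁻ x, F x ^ p ∂μ ≤ ENNReal.ofReal p *
      (C₁ / ENNReal.ofReal (p - 1) + C₂ / ENNReal.ofReal (q - p)) * ∫⁻ x, u x ^ p ∂μ := by
  have hp0 : 0 < p := by linarith
  set high : ℝ → ℝ≥0∞ := fun t => ∫⁻ y in {y | ENNReal.ofReal t < u y}, u y ∂μ
  set low : ℝ → ℝ≥0∞ := fun t => ∫⁻ y in {y | u y ≤ ENNReal.ofReal t}, u y ^ q ∂μ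
  have hhigh : Measurable high := by
    refine Antitone.measurable fun s t hst => lintegral_mono_set fun y hy => ?_
    exact (ENNReal.ofReal_le_ofReal hst).trans_lt hy
  have hlow : Measurable low := by
    refine Monotone.measurable fun s t hst => lintegral_mono_set fun y hy => ?_
    exact le_trans hy (ENNReal.ofReal_le_ofReal hst)
  calc ∫⁻ x, F x ^ p ∂μ
      ≤ ENNReal.ofReal p * ∫⁻ t in Ioi (0 : ℝ), (C₁ * (ENNReal.ofReal (t ^ (p - 1 - 1)) * high t) +
          C₂ * (ENNReal.ofReal (t ^ (-(q - p) - 1)) * low t)) := by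
        refine (lintegral_rpow_le_lintegral_superlevel F hp0).trans ?_
        gcongr ENNReal.ofReal p * ?_
        exact setLIntegral_mono' measurableSet_Ioi fun t ht =>
          ofReal_rpow_sub_one_mul_le_of_le_add ht p q (h t ht)
    _ ≤ ENNReal.ofReal p * (C₁ * ((∫⁻ y, u y ^ p ∂μ) / ENNReal.ofReal (p - 1)) +
          C₂ * ((∫⁻ y, u y ^ p ∂μ) / ENNReal.ofReal (q - p))) := by
        rw [lintegral_add_left (by fun_prop), lintegral_const_mul _ (by fun_prop),
          lintegral_const_mul _ (by fun_prop), lintegral_superlevel_mass hu hp]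
        gcongr
        exact lintegral_sublevel_mass_le hu hp0 hpq
    _ = _ := by simp only [div_eq_mul_inv]; ring

end Interpolation

/-! ### The Hardy–Littlewood maximal function -/

section HardyLittlewood

variable {E : Type*} [NormedAddCommGroup E] [MeasurableSpace E] {μ : Measure E}

/-- The centred Hardy–Littlewood maximal function, taken over open balls so that it is lower
semicontinuous for every `u`. -/
def hlMaximal (μ : Measure E) (u : E → ℝ≥0∞) (x : E) : ℝ≥0∞ :=
  ⨆ (r : ℝ) (_ : 0 < r), ⨍⁻ y in ball x r, u y ∂μ

lemma hlMaximal_mono {u v : E → ℝ≥0∞} (h : u ≤ v) : hlMaximal μ u ≤ hlMaximal μ v :=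
  fun _ => iSup₂_mono fun _ _ => lintegral_mono h

lemma hlMaximal_add_le {u v : E → ℝ≥0∞} (hu : Measurable u) (x : E) :
    hlMaximal μ (u + v) x ≤ hlMaximal μ u x + hlMaximal μ v x := by
  refine iSup₂_le fun r hr => ?_
  simp only [laverage, Pi.add_apply, lintegral_add_left hu]
  exact add_le_add (le_iSup₂_of_le r hr le_rfl) (le_iSup₂_of_le r hr le_rfl)

lemma lowerSemicontinuous_setLIntegral_ball (μ : Measure E) (u : E → ℝ≥0∞) (r : ℝ) :
    LowerSemicontinuous fun x => ∫⁻ y in ball x r, u y ∂μ := by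
  intro x a (ha : a < ∫⁻ y in ball x r, u y ∂μ)
  have hball : ball x r = ⋃ n : ℕ, ball x (r - 1 / (n + 1)) := by
    ext y
    simp only [mem_iUnion, mem_ball]
    refine ⟨fun h => ?_, fun ⟨n, hn⟩ => hn.trans (sub_lt_self _ Nat.one_div_pos_of_nat)⟩
    obtain ⟨n, hn⟩ := exists_nat_one_div_lt (sub_pos.2 h)
    exact ⟨n, by linarith⟩
  have hmono : Monotone fun n : ℕ => ball x (r - 1 / (n + 1)) := fun m n hmn =>
    ball_subset_ball (sub_le_sub_left (Nat.one_div_le_one_div hmn) r)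
  rw [hball, setLIntegral_iUnion_of_directed _ hmono.directed_le, lt_iSup_iff] at ha
  obtain ⟨n, hn⟩ := ha
  filter_upwards [ball_mem_nhds x (Nat.one_div_pos_of_nat (n := n) (α := ℝ))] with z hz
  refine hn.trans_le (lintegral_mono_set (ball_subset_ball' ?_))
  rw [mem_ball, dist_comm] at hz
  linarith

variable [μ.IsAddHaarMeasure]

lemma measurable_hlMaximal [BorelSpace E] (u : E → ℝ≥0∞) : Measurable (hlMaximal μ u) := by
  refine (lowerSemicontinuous_biSup fun r hr => ?_).measurable
  simp only [setLAverage_eq, Measure.addHaar_ball_center μ _ r, ENNReal.div_eq_inv_mul]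
  have hinv : (μ (ball 0 r))⁻¹ ≠ ∞ := ENNReal.inv_ne_top.2 (measure_ball_pos μ 0 hr).ne'
  exact (ENNReal.continuous_const_mul hinv).comp_lowerSemicontinuous
    (lowerSemicontinuous_setLIntegral_ball μ u r) fun _ _ h => mul_le_mul_right h _

variable [NormedSpace ℝ E] [FiniteDimensional ℝ E]

lemma setLIntegral_ball_le_hlMaximal (u : E → ℝ≥0∞) (x : E) {r : ℝ} (hr : 0 < r) :
    ∫⁻ y in ball x r, u y ∂μ ≤ μ (ball x r) * hlMaximal μ u x := by
  rw [← measure_mul_setLAverage u measure_ball_lt_top.ne]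
  gcongr
  exact le_iSup₂_of_le r hr le_rfl

lemma hlMaximal_const_le (a : ℝ≥0∞) (x : E) : hlMaximal μ (fun _ => a) x ≤ a :=
  iSup₂_le fun _ hr => (setLAverage_const (measure_ball_pos μ x hr).ne'
    measure_ball_lt_top.ne a).le

variable [BorelSpace E]

lemma mul_measure_le_lintegral_of_forall_closedBall {u : E → ℝ≥0∞} {t : ℝ≥0∞} {A : Set E}
    {r : E → ℝ} {R : ℝ} (hr : ∀ x ∈ A, 0 < r x) (hrR : ∀ x ∈ A, r x ≤ R)
    (h : ∀ x ∈ A, t * μ (closedBall x (r x)) ≤ ∫⁻ y in closedBall x (r x), u y ∂μ) :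
    t * μ A ≤ 5 ^ finrank ℝ E * ∫⁻ y, u y ∂μ := by
  obtain ⟨w, hwA, hdisj, hcover⟩ :=
    Vitali.exists_disjoint_subfamily_covering_enlargement_closedBall A (fun x => x) r R hrR 5
      (by norm_num)
  have hw : w.Countable := hdisj.countable_of_nonempty_interior fun x hx =>
    ⟨x, ball_subset_interior_closedBall (mem_ball_self (hr x (hwA hx)))⟩
  have hA : A ⊆ ⋃ x ∈ w, closedBall x (5 * r x) := fun x hx => by
    obtain ⟨b, hb, hsub⟩ := hcover x hx
    exact mem_biUnion hb (hsub (mem_closedBall_self (hr x hx).le))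
  have hdilate : ∀ x ∈ w, μ (closedBall x (5 * r x)) =
      5 ^ finrank ℝ E * μ (closedBall x (r x)) := fun x hx => by
    rw [Measure.addHaar_closedBall_mul μ x (by norm_num) (hr x (hwA hx)).le,
      Measure.addHaar_closedBall_center μ x, ENNReal.ofReal_pow (by norm_num), ENNReal.ofReal_ofNat]
  have := hw.to_subtype
  calc t * μ A ≤ t * ∑' x : w, μ (closedBall x (5 * r x)) := by
        gcongr
        exact (measure_mono hA).trans (measure_biUnion_le _ hw _)
    _ = ∑' x : w, 5 ^ finrank ℝ E * (t * μ (closedBall x (r x))) := by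
        rw [← ENNReal.tsum_mul_left]
        exact tsum_congr fun x => by rw [hdilate x x.2, mul_left_comm]
    _ ≤ ∑' x : w, 5 ^ finrank ℝ E * ∫⁻ y in closedBall (x : E) (r x), u y ∂μ :=
        ENNReal.tsum_le_tsum fun x => by gcongr; exact h x (hwA x.2)
    _ = 5 ^ finrank ℝ E * ∫⁻ y in ⋃ x ∈ w, closedBall x (r x), u y ∂μ := by
        rw [ENNReal.tsum_mul_left,
          lintegral_biUnion hw (fun _ _ => measurableSet_closedBall) hdisj]
    _ ≤ 5 ^ finrank ℝ E * ∫⁻ y, u y ∂μ := by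
        gcongr
        exact Measure.restrict_le_self

lemma hlMaximal_weak_type [Nontrivial E] (u : E → ℝ≥0∞) (t : ℝ≥0∞) :
    t * μ {x | t < hlMaximal μ u x} ≤ 5 ^ finrank ℝ E * ∫⁻ y, u y ∂μ := by
  rcases eq_or_ne t 0 with rfl | ht
  · simp
  rcases eq_or_ne (∫⁻ y, u y ∂μ) ∞ with htop | hfin
  · simp [htop]
  have hex : ∀ x ∈ {x | t < hlMaximal μ u x}, ∃ r, 0 < r ∧
      t * μ (closedBall x r) ≤ ∫⁻ y in closedBall x r, u y ∂μ := fun x hx => by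
    obtain ⟨r, hr, hlt⟩ : ∃ r, ∃ _ : 0 < r, t < ⨍⁻ y in ball x r, u y ∂μ := by
      simpa only [hlMaximal, lt_iSup_iff, mem_ofPred_eq] using hx
    refine ⟨r, hr, ?_⟩
    rw [Measure.addHaar_closedBall_eq_addHaar_ball, mul_comm]
    calc μ (ball x r) * t ≤ μ (ball x r) * ⨍⁻ y in ball x r, u y ∂μ := by gcongr
      _ = ∫⁻ y in ball x r, u y ∂μ := measure_mul_setLAverage u measure_ball_lt_top.ne
      _ ≤ ∫⁻ y in closedBall x r, u y ∂μ := lintegral_mono_set ball_subset_closedBall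
  choose! r hr h using hex
  have hunbounded : Tendsto (fun n : ℕ => μ (ball (0 : E) n)) atTop (𝓝 ∞) := by
    have := NormedSpace.noncompactSpace ℝ E
    rw [← measure_univ_of_isAddLeftInvariant μ, ← iUnion_ball_nat 0]
    exact tendsto_measure_iUnion_atTop fun m n hmn => ball_subset_ball (Nat.cast_le.2 hmn)
  obtain ⟨n, hn⟩ := (hunbounded.eventually (lt_mem_nhds (ENNReal.div_lt_top hfin ht))).exists
  refine mul_measure_le_lintegral_of_forall_closedBall hr (R := n) (fun x hx => ?_) h
  by_contra! hlt
  refine hn.not_ge ((ENNReal.le_div_iff_mul_le (.inl ht) (.inr hfin)).2 ?_)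
  calc μ (ball 0 n) * t ≤ t * μ (closedBall x (r x)) := by
        rw [mul_comm, ← Measure.addHaar_ball_center μ x]
        gcongr
        exact ball_subset_closedBall.trans (closedBall_subset_closedBall hlt.le)
    _ ≤ ∫⁻ y in closedBall x (r x), u y ∂μ := h x hx
    _ ≤ ∫⁻ y, u y ∂μ := setLIntegral_le_lintegral _ _

lemma measure_lt_hlMaximal_le [Nontrivial E] {u : E → ℝ≥0∞} (hu : Measurable u) {t : ℝ}
    (ht : 0 < t) :
    μ {x | ENNReal.ofReal t < hlMaximal μ u x} ≤ 5 ^ finrank ℝ E * (ENNReal.ofReal t)⁻¹ *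
      ∫⁻ y in {y | ENNReal.ofReal t < 2 * u y}, 2 * u y ∂μ := by
  set a := ENNReal.ofReal t
  have ha0 : a ≠ 0 := (ENNReal.ofReal_pos.2 ht).ne'
  set A : Set E := {y | a < 2 * u y}
  have hA : MeasurableSet A := measurableSet_lt measurable_const (hu.const_mul 2)
  have hsplit : u ≤ A.indicator u + fun _ => a / 2 := fun y => by
    by_cases hy : y ∈ A
    · simp [hy]
    · simpa [hy] using (ENNReal.le_div_iff_mul_le (by simp) (by simp)).2
        ((mul_comm _ _).trans_le (not_lt.1 hy))
  have hsub : {x | a < hlMaximal μ u x} ⊆ {x | a / 2 < hlMaximal μ (A.indicator u) x} := by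
    intro x hx
    by_contra hle
    have : hlMaximal μ u x ≤ a / 2 + a / 2 := calc
      hlMaximal μ u x ≤ hlMaximal μ (A.indicator u) x + hlMaximal μ (fun _ => a / 2) x :=
        (hlMaximal_mono hsplit x).trans (hlMaximal_add_le (hu.indicator hA) x)
      _ ≤ a / 2 + a / 2 := add_le_add (not_lt.1 hle) (hlMaximal_const_le _ x)
    exact (ENNReal.add_halves a ▸ this).not_gt hx
  have hweak := hlMaximal_weak_type (μ := μ) (A.indicator u) (a / 2)
  rw [lintegral_indicator hA] at hweak
  calc μ {x | a < hlMaximal μ u x}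
      ≤ μ {x | a / 2 < hlMaximal μ (A.indicator u) x} := measure_mono hsub
    _ = 2 * a⁻¹ * (a / 2 * μ {x | a / 2 < hlMaximal μ (A.indicator u) x}) := by
        rw [← mul_assoc, ENNReal.div_eq_inv_mul, mul_mul_mul_comm,
          ENNReal.mul_inv_cancel two_ne_zero ENNReal.ofNat_ne_top,
          ENNReal.inv_mul_cancel ha0 ENNReal.ofReal_ne_top, one_mul, one_mul]
    _ ≤ 2 * a⁻¹ * (5 ^ finrank ℝ E * ∫⁻ y in A, u y ∂μ) := by gcongr
    _ = 5 ^ finrank ℝ E * a⁻¹ * ∫⁻ y in A, 2 * u y ∂μ := by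
        rw [lintegral_const_mul' _ _ ENNReal.ofNat_ne_top]
        ring

lemma exists_lintegral_hlMaximal_rpow_le [Nontrivial E] (μ : Measure E) [μ.IsAddHaarMeasure]
    {s : ℝ} (hs : 1 < s) :
    ∃ C : ℝ≥0∞, C ≠ ∞ ∧ ∀ u : E → ℝ≥0∞, Measurable u →
      ∫⁻ x, hlMaximal μ u x ^ s ∂μ ≤ C * ∫⁻ x, u x ^ s ∂μ := by
  refine ⟨ENNReal.ofReal s * (5 ^ finrank ℝ E / ENNReal.ofReal (s - 1)) * 2 ^ s, ?_,
    fun u hu => ?_⟩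
  · refine ENNReal.mul_ne_top (ENNReal.mul_ne_top ENNReal.ofReal_ne_top (ENNReal.div_ne_top
      (by simp) (ENNReal.ofReal_pos.2 (sub_pos.2 hs)).ne')) ?_
    exact ENNReal.rpow_ne_top_of_nonneg (by linarith) ENNReal.ofNat_ne_top
  · have hmarc := marcinkiewicz_interpolation (μ := μ) hs (lt_add_one s) (5 ^ finrank ℝ E) 0
      (hlMaximal μ u) (hu.const_mul 2) fun t ht => by
        simpa using measure_lt_hlMaximal_le hu ht
    simp only [ENNReal.zero_div, add_zero, ENNReal.mul_rpow_of_nonneg _ _ (zero_le_one.trans hs.le)]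
      at hmarc
    rwa [lintegral_const_mul' _ _ (ENNReal.rpow_ne_top_of_nonneg (by linarith)
      ENNReal.ofNat_ne_top), ← mul_assoc] at hmarc

end HardyLittlewood

/-! ### Dyadic estimates for radial kernels -/

section RadialKernel

/-- `φ(h/w) w⁻ⁿ` for `w ≥ h` and `0` otherwise: the bound for a kernel difference at distance `w`
caused by a displacement of size `h`, when `φ` is a modulus of continuity. -/
def radialKernel (φ : ℝ → ℝ) (n : ℕ) (h w : ℝ) : ℝ≥0∞ :=
  if h ≤ w then ENNReal.ofReal (φ (h / w) / w ^ n) else 0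

/-- The sum `∑ₖ φ(2⁻ᵏ)`, which is finite exactly for Dini moduli of continuity `φ`. -/
def dyadicSum (φ : ℝ → ℝ) : ℝ≥0∞ := ∑' k : ℕ, ENNReal.ofReal (φ ((2 ^ k)⁻¹))

lemma dyadicSum_rpow_ne_top {a : ℝ} (ha : 0 < a) : dyadicSum (fun t => t ^ a) ≠ ∞ := by
  have hgeom : ∀ k : ℕ, ((2 : ℝ) ^ k)⁻¹ ^ a = ((2 : ℝ)⁻¹ ^ a) ^ k := fun k => by
    rw [← inv_pow, ← Real.rpow_natCast, ← Real.rpow_natCast, ← Real.rpow_mul (by norm_num),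
      ← Real.rpow_mul (by norm_num), mul_comm]
  simp_rw [dyadicSum, hgeom]
  exact (summable_geometric_of_lt_one (by positivity)
    (Real.rpow_lt_one (by norm_num) (by norm_num) ha)).tsum_ofReal_ne_top

lemma measurable_radialKernel {φ : ℝ → ℝ} (hφ : MonotoneOn φ (Ici 0)) (n : ℕ) {h : ℝ}
    (hh : 0 ≤ h) : Measurable (radialKernel φ n h) := by
  have hmono : Monotone fun t => φ (max t 0) := fun s t hst =>
    hφ (le_max_right s 0) (le_max_right t 0) (max_le_max hst le_rfl)
  have heq : radialKernel φ n h = fun w =>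
      if h ≤ w then ENNReal.ofReal (φ (max (h / w) 0) / w ^ n) else 0 := by
    ext w
    unfold radialKernel
    split_ifs with hw
    · rw [max_eq_left (div_nonneg hh (hh.trans hw))]
    · rfl
  rw [heq]
  refine Measurable.ite measurableSet_Ici (Measurable.ennreal_ofReal ?_) measurable_const
  exact (hmono.measurable.comp (measurable_const.div measurable_id)).div (measurable_id.pow_const n)

lemma radialKernel_le_of_two_pow_mul_le {φ : ℝ → ℝ} (hφ : MonotoneOn φ (Ici 0)) (n : ℕ) {h w : ℝ}
    (hh : 0 < h) {k : ℕ} (hw : 2 ^ k * h ≤ w) :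
    radialKernel φ n h w ≤
      ENNReal.ofReal (φ ((2 ^ k)⁻¹)) * (ENNReal.ofReal ((2 ^ k * h) ^ n))⁻¹ := by
  have hw0 : 0 < w := lt_of_lt_of_le (by positivity) hw
  unfold radialKernel
  split_ifs
  · rw [ENNReal.ofReal_div_of_pos (by positivity), ENNReal.div_eq_inv_mul, mul_comm]
    gcongr
    refine hφ (mem_Ici.2 (by positivity)) (mem_Ici.2 (by positivity)) ?_
    rw [div_le_iff₀ hw0, inv_mul_eq_div, le_div_iff₀' (by positivity)]
    exact hw
  · exact zero_le

variable {E : Type*} [NormedAddCommGroup E] [NormedSpace ℝ E] [FiniteDimensional ℝ E]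
  [MeasurableSpace E] [BorelSpace E] (μ : Measure E) [μ.IsAddHaarMeasure]

lemma setLIntegral_dyadicShell_radialKernel_mul_le {φ : ℝ → ℝ} (hφ : MonotoneOn φ (Ici 0)) {h : ℝ}
    (hh : 0 < h) (x : E) (u : E → ℝ≥0∞) (k : ℕ) :
    ∫⁻ y in dist x ⁻¹' Ico (2 ^ k * h) (2 ^ (k + 1) * h),
        radialKernel φ (finrank ℝ E) h (dist x y) * u y ∂μ ≤
      2 ^ finrank ℝ E * μ (ball 0 1) * ENNReal.ofReal (φ ((2 ^ k)⁻¹)) * hlMaximal μ u x := by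
  set n := finrank ℝ E
  set a := ENNReal.ofReal ((2 ^ k * h) ^ n)
  have ha : a ≠ 0 := (ENNReal.ofReal_pos.2 (by positivity)).ne'
  have hball : μ (ball x (2 ^ (k + 1) * h)) = 2 ^ n * a * μ (ball 0 1) := by
    rw [Measure.addHaar_ball_of_pos μ x (by positivity), pow_succ', mul_assoc, mul_pow,
      ENNReal.ofReal_mul (by positivity), ENNReal.ofReal_pow (by norm_num), ENNReal.ofReal_ofNat]
  calc _ ≤ ∫⁻ y in dist x ⁻¹' Ico (2 ^ k * h) (2 ^ (k + 1) * h),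
          ENNReal.ofReal (φ ((2 ^ k)⁻¹)) * a⁻¹ * u y ∂μ := by
        refine setLIntegral_mono' ((by fun_prop : Measurable (dist x)) measurableSet_Ico)
          fun y hy => ?_
        gcongr
        exact radialKernel_le_of_two_pow_mul_le hφ n hh hy.1
    _ ≤ ENNReal.ofReal (φ ((2 ^ k)⁻¹)) * a⁻¹ * ∫⁻ y in ball x (2 ^ (k + 1) * h), u y ∂μ := by
        rw [lintegral_const_mul' _ _ (by finiteness)]
        gcongr
        exact fun y hy => mem_ball'.2 hy.2
    _ ≤ ENNReal.ofReal (φ ((2 ^ k)⁻¹)) * a⁻¹ * (2 ^ n * a * μ (ball 0 1) * hlMaximal μ u x) := by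
        rw [← hball]
        gcongr
        exact setLIntegral_ball_le_hlMaximal u x (by positivity)
    _ = a⁻¹ * a * (2 ^ n * μ (ball 0 1) * ENNReal.ofReal (φ ((2 ^ k)⁻¹)) * hlMaximal μ u x) := by
        ring
    _ = _ := by rw [ENNReal.inv_mul_cancel ha ENNReal.ofReal_ne_top, one_mul]

lemma lintegral_radialKernel_mul_le {φ : ℝ → ℝ} (hφ : MonotoneOn φ (Ici 0)) {h : ℝ} (hh : 0 < h)
    (x : E) (u : E → ℝ≥0∞) :
    ∫⁻ y, radialKernel φ (finrank ℝ E) h (dist x y) * u y ∂μ ≤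
      2 ^ finrank ℝ E * μ (ball 0 1) * dyadicSum φ * hlMaximal μ u x := by
  set n := finrank ℝ E
  set shell : ℕ → Set E := fun k => dist x ⁻¹' Ico (2 ^ k * h) (2 ^ (k + 1) * h)
  have hshell : ∀ k, MeasurableSet (shell k) := fun k =>
    (by fun_prop : Measurable (dist x)) measurableSet_Ico
  have hsupport : (⋃ k, shell k).indicator (fun y => radialKernel φ n h (dist x y) * u y) =
      fun y => radialKernel φ n h (dist x y) * u y := by
    refine indicator_eq_self.2 fun y hy => ?_
    have hw : h ≤ dist x y := by
      by_contra hlt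
      exact hy (by simp [radialKernel, hlt])
    obtain ⟨k, hk, hk'⟩ := exists_nat_pow_near ((one_le_div hh).2 hw) (by norm_num : (1 : ℝ) < 2)
    exact mem_iUnion.2 ⟨k, (le_div_iff₀ hh).1 hk, (div_lt_iff₀ hh).1 hk'⟩
  rw [← hsupport, lintegral_indicator (MeasurableSet.iUnion hshell)]
  refine (lintegral_iUnion_le _ _).trans ((ENNReal.tsum_le_tsum
    (setLIntegral_dyadicShell_radialKernel_mul_le μ hφ hh x u)).trans_eq ?_)
  rw [ENNReal.tsum_mul_right, ENNReal.tsum_mul_left, dyadicSum]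

lemma lintegral_radialKernel_le {φ : ℝ → ℝ} (hφ : MonotoneOn φ (Ici 0)) {h : ℝ} (hh : 0 < h)
    (x : E) :
    ∫⁻ y, radialKernel φ (finrank ℝ E) h (dist x y) ∂μ ≤
      2 ^ finrank ℝ E * μ (ball 0 1) * dyadicSum φ := by
  have h1 := lintegral_radialKernel_mul_le μ hφ hh x 1
  simp only [Pi.one_apply, mul_one] at h1
  exact h1.trans (mul_le_of_le_one_right' (hlMaximal_const_le 1 x))

end RadialKernel

section SphericalShell

variable {E : Type*} [NormedAddCommGroup E] [NormedSpace ℝ E]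

/-- A dyadic majorant of `√(ε / |dist x y - ε|) ε⁻ⁿ` near the sphere of radius `ε` about `x`: it
is large at the sphere and yet has mass bounded independently of `ε`. -/
def sphereWeight (x : E) (ε : ℝ) (y : E) : ℝ≥0∞ :=
  ∑' k : ℕ, {y | |dist x y - ε| ≤ ε / 2 ^ k}.indicator
    (fun _ => ENNReal.ofReal (√(2 ^ (k + 1)) / ε ^ finrank ℝ E)) y

lemma ofReal_sqrt_div_le_sphereWeight {x y : E} {ε δ : ℝ} (hδ : 0 < δ) (hδε : δ ≤ ε)
    (hy : |dist x y - ε| ≤ δ) :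
    ENNReal.ofReal (√(ε / δ) / ε ^ finrank ℝ E) ≤ sphereWeight x ε y := by
  have hε : 0 < ε := hδ.trans_le hδε
  obtain ⟨k, hk, hk'⟩ := exists_nat_pow_near ((one_le_div hδ).2 hδε) (by norm_num : (1 : ℝ) < 2)
  have hmem : |dist x y - ε| ≤ ε / 2 ^ k :=
    hy.trans ((le_div_comm₀ hδ (by positivity)).2 hk)
  refine le_trans ?_ (ENNReal.le_tsum k)
  rw [indicator_of_mem (show y ∈ {y | |dist x y - ε| ≤ ε / 2 ^ k} from hmem)]
  gcongr

lemma measurableSet_abs_dist_sub_le {X : Type*} [PseudoMetricSpace X] [MeasurableSpace X]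
    [OpensMeasurableSpace X] (x : X) (ε h : ℝ) : MeasurableSet {y | |dist x y - ε| ≤ h} :=
  ((continuous_const.dist continuous_id).sub continuous_const).abs.measurable measurableSet_Iic

variable [MeasurableSpace E] [BorelSpace E]

lemma measurable_sphereWeight (x : E) (ε : ℝ) : Measurable (sphereWeight x ε) :=
  Measurable.tsum fun _ =>
    measurable_const.indicator (measurableSet_abs_dist_sub_le x ε _)

variable [FiniteDimensional ℝ E] [Nontrivial E] (μ : Measure E) [μ.IsAddHaarMeasure]

lemma measure_abs_dist_sub_le_le (x : E) {ε h : ℝ} (hε : 0 ≤ ε) (hh : 0 ≤ h) :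
    μ {y | |dist x y - ε| ≤ h} ≤
      ENNReal.ofReal (2 * h * finrank ℝ E * (ε + h) ^ (finrank ℝ E - 1)) * μ (ball 0 1) := by
  set n := finrank ℝ E
  set m := max 0 (ε - h)
  have hm : 0 ≤ m := le_max_left _ _
  have hle : m ≤ ε + h := max_le (by linarith) (by linarith)
  have hsub : {y | |dist x y - ε| ≤ h} ⊆ closedBall x (ε + h) \ ball x m := fun y hy => by
    rw [mem_ofPred_eq, abs_le] at hy
    rw [Set.mem_sdiff, mem_closedBall', mem_ball', not_lt]
    exact ⟨by linarith, max_le dist_nonneg (by linarith)⟩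
  refine (measure_mono hsub).trans ?_
  rw [measure_sdiff (ball_subset_closedBall.trans (closedBall_subset_closedBall hle))
    measurableSet_ball.nullMeasurableSet measure_ball_lt_top.ne, Measure.addHaar_ball μ x hm,
    Measure.addHaar_closedBall μ x (by positivity),
    ← ENNReal.sub_mul (fun _ _ => measure_ball_lt_top.ne), ← ENNReal.ofReal_sub _ (by positivity)]
  gcongr
  calc (ε + h) ^ n - m ^ n
      ≤ |ε + h - m| * n * max |ε + h| |m| ^ (n - 1) :=
        (le_abs_self _).trans (abs_pow_sub_pow_le _ _ n)
    _ ≤ 2 * h * n * (ε + h) ^ (n - 1) := by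
        rw [abs_of_nonneg (sub_nonneg.2 hle), abs_of_nonneg hm,
          abs_of_nonneg (hm.trans hle), max_eq_left hle]
        gcongr
        linarith [le_max_right 0 (ε - h)]

lemma lintegral_shell_dist_div_pow_le (x : E) {ε h : ℝ} (hε : 0 ≤ ε) (hh : 0 < h) :
    ∫⁻ y in {y | h < dist x y ∧ |dist x y - ε| ≤ h},
        ENNReal.ofReal (dist x y / dist x y ^ finrank ℝ E) ∂μ ≤
      ENNReal.ofReal (2 * finrank ℝ E * 3 ^ (finrank ℝ E - 1)) * μ (ball 0 1) *
        ENNReal.ofReal h := by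
  obtain ⟨n, hn⟩ : ∃ n, finrank ℝ E = n + 1 := Nat.exists_eq_add_one.2 finrank_pos
  have hmeas : MeasurableSet {y : E | h < dist x y ∧ |dist x y - ε| ≤ h} :=
    (by fun_prop : Measurable (dist x))
      (measurableSet_Ioi.inter (by measurability : MeasurableSet {w : ℝ | |w - ε| ≤ h}))
  have hpoint : ∀ y ∈ {y | h < dist x y ∧ |dist x y - ε| ≤ h},
      ENNReal.ofReal (dist x y / dist x y ^ (n + 1)) ≤ ENNReal.ofReal ((3 / (ε + h)) ^ n) := by
    rintro y ⟨hy, hyε⟩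
    have hw : 0 < dist x y := hh.trans hy
    have heq : dist x y / dist x y ^ (n + 1) = (1 / dist x y) ^ n := by
      rw [pow_succ', one_div, inv_pow]
      field_simp
    rw [heq]
    refine ENNReal.ofReal_le_ofReal (pow_le_pow_left₀ (by positivity) ?_ n)
    rw [div_le_div_iff₀ hw (by positivity)]
    linarith [(abs_le.1 hyε).1]
  rw [hn, Nat.add_sub_cancel]
  calc _ ≤ ∫⁻ _ in {y | h < dist x y ∧ |dist x y - ε| ≤ h}, ENNReal.ofReal ((3 / (ε + h)) ^ n) ∂μ :=
        setLIntegral_mono' hmeas hpoint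
    _ ≤ ENNReal.ofReal ((3 / (ε + h)) ^ n) *
        (ENNReal.ofReal (2 * h * (n + 1 : ℕ) * (ε + h) ^ n) * μ (ball 0 1)) := by
        rw [setLIntegral_const]
        gcongr
        have := measure_abs_dist_sub_le_le μ x hε hh.le
        rw [hn, Nat.add_sub_cancel] at this
        exact (measure_mono fun y hy => hy.2).trans this
    _ = _ := by
        rw [mul_right_comm _ (μ _), ← mul_assoc, ← ENNReal.ofReal_mul (by positivity),
          ← ENNReal.ofReal_mul (by positivity)]
        congr 2
        rw [div_pow]
        field_simp

lemma exists_lintegral_sphereWeight_le :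
    ∃ C : ℝ≥0∞, C ≠ ∞ ∧ ∀ (x : E) (ε : ℝ), 0 < ε → ∫⁻ y, sphereWeight x ε y ∂μ ≤ C := by
  obtain ⟨n, hn⟩ : ∃ n, finrank ℝ E = n + 1 := Nat.exists_eq_add_one.2 finrank_pos
  refine ⟨dyadicSum (fun t => t ^ (1 / 2 : ℝ)) *
    (ENNReal.ofReal (√2 * (n + 1 : ℕ) * 2 ^ (n + 1)) * μ (ball 0 1)), ?_, fun x ε hε => ?_⟩
  · exact ENNReal.mul_ne_top (dyadicSum_rpow_ne_top (by norm_num))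
      (ENNReal.mul_ne_top ENNReal.ofReal_ne_top measure_ball_lt_top.ne)
  have hmeas (k : ℕ) := measurableSet_abs_dist_sub_le x ε (ε / 2 ^ k)
  unfold sphereWeight
  rw [lintegral_tsum fun k => (measurable_const.indicator (hmeas k)).aemeasurable, dyadicSum,
    ← ENNReal.tsum_mul_right]
  refine ENNReal.tsum_le_tsum fun k => ?_
  have hsqrt : (((2 : ℝ) ^ k)⁻¹) ^ (1 / 2 : ℝ) = √(2 ^ k) / 2 ^ k := by
    rw [← Real.sqrt_eq_rpow, Real.sqrt_inv, Real.sqrt_div_self]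
  have hpow : ε + ε / 2 ^ k ≤ 2 * ε := by
    linarith [div_le_self hε.le (one_le_pow₀ (M₀ := ℝ) (a := 2) (n := k) (by norm_num))]
  calc _ = ENNReal.ofReal (√(2 ^ (k + 1)) / ε ^ (n + 1)) *
          μ {y : E | |dist x y - ε| ≤ ε / 2 ^ k} := by
        rw [lintegral_indicator_const (hmeas k), hn]
    _ ≤ ENNReal.ofReal (√(2 ^ (k + 1)) / ε ^ (n + 1)) *
          (ENNReal.ofReal (2 * (ε / 2 ^ k) * (n + 1 : ℕ) * (2 * ε) ^ n) * μ (ball 0 1)) := by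
        gcongr
        refine (measure_abs_dist_sub_le_le μ x hε.le (by positivity)).trans ?_
        rw [hn, Nat.add_sub_cancel]
        gcongr
    _ = _ := by
        rw [← mul_assoc, ← mul_assoc, ← ENNReal.ofReal_mul (by positivity),
          ← ENNReal.ofReal_mul (by positivity), hsqrt, pow_succ', Real.sqrt_mul zero_le_two]
        congr 2
        field_simp
        ring

end SphericalShell

section Sequences

lemma tsum_add_rpow_le {ι : Type*} [Countable ι] {p : ℝ} (hp : 1 ≤ p) (a b : ι → ℝ≥0∞) :
    (∑' i, (a i + b i) ^ p) ^ (1 / p) ≤ (∑' i, a i ^ p) ^ (1 / p) + (∑' i, b i ^ p) ^ (1 / p) := by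
  let _ : MeasurableSpace ι := ⊤
  simpa only [lintegral_count, Pi.add_apply] using
    ENNReal.lintegral_Lp_add_le (μ := Measure.count) (f := a) (g := b)
      measurable_from_top.aemeasurable measurable_from_top.aemeasurable hp

lemma tsum_rpow_le_rpow_tsum {ι : Type*} {p : ℝ} (hp : 1 ≤ p) (a : ι → ℝ≥0∞) :
    ∑' i, a i ^ p ≤ (∑' i, a i) ^ p := by
  have hsplit : ∀ b : ℝ≥0∞, b ^ p = b * b ^ (p - 1) := fun b => by
    nth_rw 2 [← ENNReal.rpow_one b]
    rw [← ENNReal.rpow_add_of_nonneg _ _ zero_le_one (by linarith), add_sub_cancel]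
  simp_rw [hsplit]
  rw [← ENNReal.tsum_mul_right]
  exact ENNReal.tsum_le_tsum fun i =>
    mul_le_mul_right (ENNReal.rpow_le_rpow (ENNReal.le_tsum i) (by linarith)) _

lemma tsum_rpow_rpow_inv_antitone {ι : Type*} {r p : ℝ} (hr : 0 < r) (hrp : r ≤ p)
    (a : ι → ℝ≥0∞) : (∑' i, a i ^ p) ^ (1 / p) ≤ (∑' i, a i ^ r) ^ (1 / r) := by
  have hp : 0 < p := hr.trans_le hrp
  have h := tsum_rpow_le_rpow_tsum ((one_le_div hr).2 hrp) fun i => a i ^ r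
  simp_rw [← ENNReal.rpow_mul, mul_div_cancel₀ p hr.ne'] at h
  calc (∑' i, a i ^ p) ^ (1 / p) ≤ ((∑' i, a i ^ r) ^ (p / r)) ^ (1 / p) := by gcongr
    _ = (∑' i, a i ^ r) ^ (1 / r) := by
        rw [← ENNReal.rpow_mul]
        congr 1
        field_simp

lemma rpow_lintegral_mul_le {α : Type*} [MeasurableSpace α] {μ : Measure α} {r : ℝ} (hr : 1 < r)
    {m v : α → ℝ≥0∞} (hm : Measurable m) (hv : Measurable v) :
    (∫⁻ y, m y * v y ∂μ) ^ r ≤ (∫⁻ y, m y ∂μ) ^ (r - 1) * ∫⁻ y, m y * v y ^ r ∂μ := by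
  have hr0 : 0 < r := by linarith
  have hr1 : 0 < r - 1 := by linarith
  have hconj : (r / (r - 1)).HolderConjugate r := (Real.HolderConjugate.conjExponent hr).symm
  have hprod : ∀ y, m y ^ ((r - 1) / r) * (m y ^ (1 / r) * v y) = m y * v y := fun y => by
    rw [← mul_assoc, ← ENNReal.rpow_add_of_nonneg _ _ (by positivity) (by positivity), ← add_div,
      sub_add_cancel, div_self hr0.ne', ENNReal.rpow_one]
  have hleft : ∀ y, (m y ^ ((r - 1) / r)) ^ (r / (r - 1)) = m y := fun y => by
    rw [← ENNReal.rpow_mul, div_mul_div_cancel₀ hr0.ne', div_self hr1.ne', ENNReal.rpow_one]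
  have hright : ∀ y, (m y ^ (1 / r) * v y) ^ r = m y * v y ^ r := fun y => by
    rw [ENNReal.mul_rpow_of_nonneg _ _ hr0.le, ← ENNReal.rpow_mul, one_div_mul_cancel hr0.ne',
      ENNReal.rpow_one]
  have hholder := ENNReal.lintegral_mul_le_Lp_mul_Lq μ hconj
    (f := fun y => m y ^ ((r - 1) / r)) (g := fun y => m y ^ (1 / r) * v y)
    (hm.pow_const _).aemeasurable ((hm.pow_const _).mul hv).aemeasurable
  simp only [Pi.mul_apply, hprod, hleft, hright] at hholder
  calc (∫⁻ y, m y * v y ∂μ) ^ r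
      ≤ ((∫⁻ y, m y ∂μ) ^ (1 / (r / (r - 1))) * (∫⁻ y, m y * v y ^ r ∂μ) ^ (1 / r)) ^ r := by
        gcongr
    _ = (∫⁻ y, m y ∂μ) ^ (r - 1) * ∫⁻ y, m y * v y ^ r ∂μ := by
        rw [ENNReal.mul_rpow_of_nonneg _ _ hr0.le, ← ENNReal.rpow_mul, ← ENNReal.rpow_mul,
          one_div_mul_cancel hr0.ne', ENNReal.rpow_one, one_div_div, div_mul_cancel₀ _ hr0.ne']

end Sequences

/-! ### Truncations and variation of a Calderón–Zygmund operator -/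

section Annulus

variable {α : Type*} [PseudoMetricSpace α]

/-- The half-open annulus `{y | a < dist x y ≤ b}`, over which the difference of the truncations at
levels `a` and `b` integrates the kernel. -/
def annulus (x : α) (a b : ℝ) : Set α := dist x ⁻¹' Ioc a b

lemma pairwise_disjoint_annulus (x : α) {ε : ℕ → ℝ} (hε : Antitone ε) :
    Pairwise (Function.onFun Disjoint fun i => annulus x (ε (i + 1)) (ε i)) :=
  fun _ _ hij => (hε.pairwise_disjoint_on_Ioc_succ hij).preimage (dist x)

variable [MeasurableSpace α] [OpensMeasurableSpace α]

lemma measurableSet_annulus (x : α) (a b : ℝ) : MeasurableSet (annulus x a b) :=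
  (continuous_const.dist continuous_id).measurable measurableSet_Ioc

lemma measurableSet_lt_dist (x : α) (a : ℝ) : MeasurableSet {y : α | a < dist x y} :=
  (continuous_const.dist continuous_id).measurable measurableSet_Ioi

lemma tsum_setLIntegral_annulus_le (μ : Measure α) (x : α) {ε : ℕ → ℝ} (hε : Antitone ε)
    (u : α → ℝ≥0∞) : ∑' i, ∫⁻ y in annulus x (ε (i + 1)) (ε i), u y ∂μ ≤ ∫⁻ y, u y ∂μ := by
  rw [← lintegral_iUnion (fun i => measurableSet_annulus x _ _) (pairwise_disjoint_annulus x hε)]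
  exact setLIntegral_le_lintegral _ _

end Annulus

lemma exists_strictAnti_extension {n : ℕ} {a : ℕ → ℝ} (hanti : ∀ i < n, a (i + 1) < a i)
    (hpos : 0 < a n) :
    ∃ b : ℕ → ℝ, StrictAnti b ∧ (∀ i, 0 < b i) ∧ Tendsto b atTop (𝓝 0) ∧ ∀ i ≤ n, b i = a i := by
  set b : ℕ → ℝ := fun i => if i ≤ n then a i else a n / ((i - n : ℕ) + 1)
  have hhead : ∀ i ≤ n, b i = a i := fun i hi => if_pos hi
  have htail : ∀ i, b (i + n) = a n / (i + 1) := fun i => by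
    rcases i.eq_zero_or_pos with rfl | hi
    · simp [b]
    · simp [b, hi.ne']
  have hstrict : StrictAnti b := strictAnti_nat_of_succ_lt fun i => by
    rcases lt_or_ge i n with hi | hi
    · rw [hhead i hi.le, hhead (i + 1) hi]
      exact hanti i hi
    · obtain ⟨k, rfl⟩ := Nat.exists_eq_add_of_le' hi
      rw [htail k, add_right_comm, htail (k + 1)]
      push_cast
      gcongr
      linarith
  have hlim : Tendsto b atTop (𝓝 0) := by
    rw [← tendsto_add_atTop_iff_nat n]
    simp_rw [htail]
    exact ((tendsto_const_div_atTop_nhds_zero_nat (a n)).comp (tendsto_add_atTop_nat 1)).congr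
      fun i => by simp
  refine ⟨b, hstrict, fun i => ?_, hlim, hhead⟩
  exact (hstrict.antitone.le_of_tendsto hlim (i + 1)).trans_lt (hstrict i.lt_succ_self)

namespace CZO

variable {d : ℕ} (S : CZO d) {ρ : ℝ} {f g : Rd d → ℝ} {a b : ℝ}

section Modulus

lemma ω_nonneg {t : ℝ} (ht : 0 ≤ t) : 0 ≤ S.ω t :=
  S.ω_zero ▸ S.ω_mono self_mem_Ici ht ht

lemma ω_nat_mul_le (n : ℕ) {t : ℝ} (ht : 0 ≤ t) : S.ω (n * t) ≤ n * S.ω t := by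
  induction n with
  | zero => simp [S.ω_zero]
  | succ n ih =>
    push_cast
    rw [add_one_mul, add_one_mul]
    linarith [S.ω_subadd (n * t) t (by positivity) ht]

lemma ofReal_ω_le_setLIntegral (k : ℕ) :
    ENNReal.ofReal (S.ω ((2 ^ (k + 1))⁻¹)) ≤
      2 * ∫⁻ t in Ioo ((2 ^ (k + 1))⁻¹) ((2 ^ k)⁻¹), ENNReal.ofReal (S.ω t / t) := by
  set a : ℝ := (2 ^ (k + 1))⁻¹ with ha_def
  have ha : 0 < a := by positivity
  have hdouble : ((2 : ℝ) ^ k)⁻¹ = 2 * a := by rw [ha_def, pow_succ]; field_simp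
  rw [hdouble]
  calc ENNReal.ofReal (S.ω a) = 2 * ∫⁻ _ in Ioo a (2 * a), ENNReal.ofReal (S.ω a / (2 * a)) := by
        have hω := S.ω_nonneg ha.le
        rw [setLIntegral_const, Real.volume_Ioo, ← ENNReal.ofReal_mul (by positivity),
          ← ENNReal.ofReal_ofNat 2, ← ENNReal.ofReal_mul (by positivity)]
        congr 1
        field_simp
        ring
    _ ≤ 2 * ∫⁻ t in Ioo a (2 * a), ENNReal.ofReal (S.ω t / t) := by
        gcongr 2 * ?_
        refine setLIntegral_mono' measurableSet_Ioo fun t ⟨hat, hta⟩ => ENNReal.ofReal_le_ofReal ?_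
        have ht : 0 < t := ha.trans hat
        exact div_le_div₀ (S.ω_nonneg ht.le) (S.ω_mono ha.le ht.le hat.le) ht hta.le

lemma dyadicSum_ω_ne_top : dyadicSum S.ω ≠ ∞ := by
  set I : ℕ → Set ℝ := fun k => Ioo ((2 ^ (k + 1))⁻¹) ((2 ^ k)⁻¹)
  have hanti : Antitone fun k : ℕ => ((2 : ℝ) ^ k)⁻¹ := fun i j hij => by
    dsimp only
    gcongr
    norm_num
  have hdisj : Pairwise (Function.onFun Disjoint I) := hanti.pairwise_disjoint_on_Ioo_succ
  have hsub : ⋃ k, I k ⊆ Ioo (0 : ℝ) 1 := iUnion_subset fun k =>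
    Ioo_subset_Ioo (by positivity) (inv_le_one_of_one_le₀ (one_le_pow₀ (by norm_num)))
  have htail : ∑' k : ℕ, ENNReal.ofReal (S.ω ((2 ^ (k + 1))⁻¹)) ≤
      2 * ∫⁻ t in Ioo (0 : ℝ) 1, ENNReal.ofReal (S.ω t / t) :=
    calc _ ≤ ∑' k, 2 * ∫⁻ t in I k, ENNReal.ofReal (S.ω t / t) :=
          ENNReal.tsum_le_tsum S.ofReal_ω_le_setLIntegral
      _ = 2 * ∫⁻ t in ⋃ k, I k, ENNReal.ofReal (S.ω t / t) := by
          rw [ENNReal.tsum_mul_left, lintegral_iUnion (fun k => measurableSet_Ioo) hdisj]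
      _ ≤ _ := by gcongr
  rw [dyadicSum, tsum_eq_zero_add' ENNReal.summable]
  exact ENNReal.add_ne_top.2 ⟨ENNReal.ofReal_ne_top,
    ne_top_of_le_ne_top (ENNReal.mul_ne_top ENNReal.ofNat_ne_top S.dini.lintegral_lt_top.ne) htail⟩

end Modulus

section Truncation

lemma measurable_K (x : Rd d) : Measurable (S.K x) :=
  S.measK.comp (measurable_const.prodMk measurable_id)

lemma abs_K_le {x y : Rd d} (ha : 0 < a) (h : a ≤ dist x y) : |S.K x y| ≤ S.Cst / a ^ d := by
  have := S.hCst
  refine (S.size x y (dist_pos.1 (ha.trans_le h))).trans ?_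
  gcongr

lemma integrableOn_K_mul (hf : Integrable f) (x : Rd d) (ha : 0 < a) :
    IntegrableOn (fun y => S.K x y * f y) {y | a < dist x y} := by
  refine Integrable.mono' (hf.norm.const_mul (S.Cst / a ^ d)).integrableOn
    ((S.measurable_K x).aestronglyMeasurable.mul hf.1).restrict ?_
  refine (ae_restrict_iff' (measurableSet_lt_dist x a)).2 (ae_of_all _ fun y hy => ?_)
  rw [norm_mul]
  gcongr
  exact S.abs_K_le ha (le_of_lt hy)

lemma trunc_sub_trunc (hf : Integrable f) (x : Rd d) (ha : 0 < a) (hab : a ≤ b) :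
    S.trunc a f x - S.trunc b f x = ∫ y in annulus x a b, S.K x y * f y := by
  have hunion : {y | a < dist x y} = annulus x a b ∪ {y | b < dist x y} :=
    (congrArg (dist x ⁻¹' ·) (Ioc_union_Ioi_eq_Ioi hab)).symm
  have hdisj : Disjoint (annulus x a b) {y | b < dist x y} :=
    disjoint_left.2 fun y hy hy' => absurd hy.2 (not_le.2 hy')
  have hint := S.integrableOn_K_mul hf x ha
  rw [trunc, trunc, hunion, setIntegral_union hdisj (measurableSet_lt_dist x b)
    (hint.mono_set fun y hy => hy.1) (hint.mono_set fun y hy => hab.trans_lt hy),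
    add_sub_cancel_right]

lemma trunc_add (hf : Integrable f) (hg : Integrable g) (x : Rd d) (ha : 0 < a) :
    S.trunc a (fun y => f y + g y) x = S.trunc a f x + S.trunc a g x := by
  simp only [trunc, mul_add]
  exact integral_add (S.integrableOn_K_mul hf x ha) (S.integrableOn_K_mul hg x ha)

lemma trunc_indicator_lt_dist (f : Rd d → ℝ) (x : Rd d) (ε h : ℝ) :
    S.trunc ε ({y | h < dist x y}.indicator f) x = S.trunc (max ε h) f x := by
  simp only [trunc, ← indicator_mul_right]
  rw [setIntegral_indicator (measurableSet_lt_dist x h)]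
  congr 2
  ext y
  exact (max_lt_iff (α := ℝ)).symm

lemma measurable_trunc (hf : Measurable f) (a : ℝ) : Measurable (S.trunc a f) := by
  have heq : S.trunc a f = fun x => ∫ y, {z : Rd d × Rd d | a < dist z.1 z.2}.indicator
      (fun z => S.K z.1 z.2 * f z.2) (x, y) := by
    ext x
    exact (integral_indicator (measurableSet_lt_dist x a)).symm
  rw [heq]
  have hmeas : Measurable ({z : Rd d × Rd d | a < dist z.1 z.2}.indicator
      fun z => S.K z.1 z.2 * f z.2) :=
    (S.measK.mul (hf.comp measurable_snd)).indicator
      (measurableSet_lt measurable_const measurable_dist)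
  exact hmeas.stronglyMeasurable.integral_prod_right'.measurable

lemma continuousWithinAt_trunc (hf : Integrable f) (x : Rd d) (ha : 0 < a) :
    ContinuousWithinAt (fun ε => S.trunc ε f x) (Ici a) a := by
  simp only [ContinuousWithinAt, trunc, ← integral_indicator (measurableSet_lt_dist x _)]
  refine tendsto_integral_filter_of_dominated_convergence
    (fun y => ‖{y | a < dist x y}.indicator (fun y => S.K x y * f y) y‖) ?_ ?_ ?_ ?_
  · exact Eventually.of_forall fun ε =>
      ((S.measurable_K x).aestronglyMeasurable.mul hf.1).indicator (measurableSet_lt_dist x ε)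
  · filter_upwards [self_mem_nhdsWithin] with ε hε
    have hsub : {y | ε < dist x y} ⊆ {y | a < dist x y} := fun z (hz : ε < dist x z) =>
      show a < dist x z from lt_of_le_of_lt hε hz
    exact ae_of_all _ fun y => norm_indicator_le_of_subset hsub _ y
  · exact ((integrable_indicator_iff (measurableSet_lt_dist x a)).2
      (S.integrableOn_K_mul hf x ha)).norm
  · refine ae_of_all _ fun y => tendsto_const_nhds.congr' ?_
    have hmem : ∀ᶠ ε in 𝓝[≥] a, (a < dist x y ↔ ε < dist x y) := by
      by_cases hy : a < dist x y
      · filter_upwards [mem_nhdsWithin_of_mem_nhds (Iio_mem_nhds hy)] with ε hε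
        exact iff_of_true hy hε
      · filter_upwards [self_mem_nhdsWithin] with ε hε
        exact iff_of_false hy fun h => hy (lt_of_le_of_lt hε h)
    filter_upwards [hmem] with ε hε
    simp only [indicator, mem_ofPred_eq, hε]

end Truncation

section Variation

/-- The `ρ`-th power of the variation of the truncations along the levels `a 0, …, a n`. -/
def varSum (ρ : ℝ) (f : Rd d → ℝ) (x : Rd d) (n : ℕ) (a : ℕ → ℝ) : ℝ≥0∞ :=
  ∑ i ∈ Finset.range n, ENNReal.ofReal |S.trunc (a (i + 1)) f x - S.trunc (a i) f x| ^ ρ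

variable {S} in
lemma varSum_congr {x : Rd d} {n : ℕ} {a b : ℕ → ℝ} (h : ∀ i ≤ n, a i = b i) :
    S.varSum ρ f x n a = S.varSum ρ f x n b := by
  refine Finset.sum_congr rfl fun i hi => ?_
  rw [h i (Finset.mem_range.1 hi).le, h (i + 1) (Finset.mem_range.1 hi)]

lemma tsum_rpow_le_var (ρ : ℝ) (f : Rd d → ℝ) (x : Rd d) {ε : ℕ → ℝ} (hanti : StrictAnti ε)
    (hpos : ∀ i, 0 < ε i) (hlim : Tendsto ε atTop (𝓝 0)) :
    (∑' i, ENNReal.ofReal |S.trunc (ε (i + 1)) f x - S.trunc (ε i) f x| ^ ρ) ^ (1 / ρ) ≤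
      S.var ρ f x :=
  le_iSup₂_of_le ε ⟨hanti, hpos, hlim⟩ le_rfl

lemma var_le_of_varSum_le (hρ : 0 < ρ) {x : Rd d} {R : ℝ≥0∞}
    (h : ∀ (n : ℕ) (a : ℕ → ℝ), StrictAnti a → (∀ i, 0 < a i) → S.varSum ρ f x n a ≤ R ^ ρ) :
    S.var ρ f x ≤ R :=
  iSup₂_le fun ε hε => by
    rw [one_div, ENNReal.rpow_inv_le_iff hρ]
    exact ENNReal.tsum_le_of_sum_range_le fun n => h n ε hε.1 hε.2.1

lemma varSum_le_var_of_strict (hρ : 0 < ρ) (f : Rd d → ℝ) (x : Rd d) {n : ℕ} {a : ℕ → ℝ}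
    (hanti : ∀ i < n, a (i + 1) < a i) (hpos : 0 < a n) :
    S.varSum ρ f x n a ≤ S.var ρ f x ^ ρ := by
  obtain ⟨b, hb, hb_pos, hb_lim, hba⟩ := exists_strictAnti_extension hanti hpos
  have h := S.tsum_rpow_le_var ρ f x hb hb_pos hb_lim
  rw [one_div, ENNReal.rpow_inv_le_iff hρ] at h
  rw [← varSum_congr hba]
  exact (ENNReal.sum_le_tsum _).trans h

lemma tendsto_varSum (ρ : ℝ) (hf : Integrable f) (x : Rd d) {n : ℕ} {a : ℕ → ℝ}
    (ha : ∀ i ≤ n, 0 < a i) {u : ℕ → ℕ → ℝ} (hu : ∀ i m, a i ≤ u m i)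
    (hlim : ∀ i, Tendsto (fun m => u m i) atTop (𝓝 (a i))) :
    Tendsto (fun m => S.varSum ρ f x n (u m)) atTop (𝓝 (S.varSum ρ f x n a)) := by
  have htrunc : ∀ i ≤ n, Tendsto (fun m => S.trunc (u m i) f x) atTop (𝓝 (S.trunc (a i) f x)) :=
    fun i hi => (S.continuousWithinAt_trunc hf x (ha i hi)).tendsto.comp
      (tendsto_nhdsWithin_iff.2 ⟨hlim i, Eventually.of_forall (hu i)⟩)
  refine tendsto_finsetSum _ fun i hi => ?_
  have hi : i < n := Finset.mem_range.1 hi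
  exact (ENNReal.continuous_rpow_const.tendsto _).comp ((ENNReal.continuous_ofReal.tendsto _).comp
    ((htrunc (i + 1) hi).sub (htrunc i hi.le)).abs)

lemma varSum_le_var (hρ : 0 < ρ) (hf : Integrable f) (x : Rd d) {n : ℕ} {a : ℕ → ℝ}
    (hanti : ∀ i < n, a (i + 1) ≤ a i) (hpos : ∀ i ≤ n, 0 < a i) :
    S.varSum ρ f x n a ≤ S.var ρ f x ^ ρ := by
  have hlim := S.tendsto_varSum ρ hf x hpos
    (u := fun m i => a i + (n - i : ℕ) * (1 / ((m : ℝ) + 1)))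
    (fun i m => le_add_of_nonneg_right (by positivity)) fun i => by
      simpa using ((tendsto_one_div_add_atTop_nhds_zero_nat (𝕜 := ℝ)).const_mul
        ((n - i : ℕ) : ℝ)).const_add (a i)
  refine le_of_tendsto hlim (Eventually.of_forall fun m => ?_)
  refine S.varSum_le_var_of_strict hρ f x (fun i hi => ?_) (by simpa using hpos n le_rfl)
  have hgap : n - (i + 1) < n - i := by omega
  exact add_lt_add_of_le_of_lt (hanti i hi) (by gcongr)

lemma var_rpow_eq_iSup_rat (hρ : 0 < ρ) (hf : Integrable f) (x : Rd d) :
    S.var ρ f x ^ ρ = ⨆ (n : ℕ) (c : ℕ →₀ ℚ) (_ : (∀ i < n, c (i + 1) < c i) ∧ 0 < c n),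
      S.varSum ρ f x n fun i => c i := by
  apply le_antisymm
  · rw [← ENNReal.le_rpow_inv_iff hρ]
    refine S.var_le_of_varSum_le hρ fun n a ha hpos => ?_
    rw [ENNReal.rpow_inv_rpow hρ.ne']
    choose u _ hau hu_lim using fun i => Real.exists_seq_rat_strictAnti_tendsto (a i)
    refine le_of_tendsto (S.tendsto_varSum ρ hf x (fun i _ => hpos i) (u := fun m i => (u i m : ℝ))
      (fun i m => (hau i m).le) hu_lim) ?_
    have hev : ∀ᶠ m in atTop, ∀ i ∈ Finset.range n, (u (i + 1) m : ℝ) < u i m :=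
      (eventually_all_finset _).2 fun i _ =>
        (hu_lim (i + 1)).eventually_lt (hu_lim i) (ha i.lt_succ_self)
    filter_upwards [hev] with m hm
    set c : ℕ →₀ ℚ := (Finsupp.equivFunOnFinite.symm fun j : Fin (n + 1) => u j m).embDomain
      Fin.valEmbedding
    have hc : ∀ i ≤ n, c i = u i m := fun i hi => by
      simpa using Finsupp.embDomain_apply_self Fin.valEmbedding
        (Finsupp.equivFunOnFinite.symm fun j : Fin (n + 1) => u j m) ⟨i, Nat.lt_succ_of_le hi⟩
    rw [varSum_congr (b := fun i => (c i : ℝ)) fun i hi => by rw [hc i hi]]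
    refine le_iSup_of_le n (le_iSup₂_of_le c ⟨fun i hi => ?_, ?_⟩ le_rfl)
    · rw [hc i hi.le, hc (i + 1) hi]
      exact_mod_cast hm i (Finset.mem_range.2 hi)
    · rw [hc n le_rfl]
      exact_mod_cast (hpos n).trans (hau n m)
  · exact iSup_le fun n => iSup₂_le fun c hc => S.varSum_le_var_of_strict hρ f x
      (fun i hi => by exact_mod_cast hc.1 i hi) (by exact_mod_cast hc.2)

lemma measurable_var (hρ : 0 < ρ) (hfm : Measurable f) (hf : Integrable f) :
    Measurable (S.var ρ f) := by
  have heq : S.var ρ f = fun x => (S.var ρ f x ^ ρ) ^ ρ⁻¹ := by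
    ext x
    rw [ENNReal.rpow_rpow_inv hρ.ne']
  rw [heq]
  simp only [S.var_rpow_eq_iSup_rat hρ hf]
  refine Measurable.pow_const (Measurable.iSup fun n => Measurable.iSup fun c =>
    Measurable.iSup_Prop _ (Finset.measurable_sum _ fun i _ => ?_)) _
  exact ((S.measurable_trunc hfm _).sub (S.measurable_trunc hfm _)).abs.ennreal_ofReal.pow_const ρ

lemma var_add_le (hρ : 1 ≤ ρ) (hf : Integrable f) (hg : Integrable g) (x : Rd d) :
    S.var ρ (fun y => f y + g y) x ≤ S.var ρ f x + S.var ρ g x := by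
  refine iSup₂_le fun ε ⟨hanti, hpos, hlim⟩ => ?_
  refine le_trans ?_ ((tsum_add_rpow_le hρ _ _).trans (add_le_add
    (S.tsum_rpow_le_var ρ f x hanti hpos hlim) (S.tsum_rpow_le_var ρ g x hanti hpos hlim)))
  gcongr with i
  rw [← ENNReal.ofReal_add (abs_nonneg _) (abs_nonneg _), S.trunc_add hf hg x (hpos _),
    S.trunc_add hf hg x (hpos _), add_sub_add_comm]
  exact ENNReal.ofReal_le_ofReal (abs_add_le _ _)

lemma ofReal_abs_trunc_sub_le (hf : Integrable f) (x : Rd d) (ha : 0 < a) (hab : a ≤ b) :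
    ENNReal.ofReal |S.trunc a f x - S.trunc b f x| ≤ ∫⁻ y in annulus x a b, ‖S.K x y * f y‖ₑ := by
  rw [S.trunc_sub_trunc hf x ha hab, ← Real.enorm_eq_ofReal_abs]
  exact enorm_integral_le_lintegral_enorm _

lemma var_le_lintegral_enorm (hρ : 1 ≤ ρ) (hf : Integrable f) (x : Rd d) :
    S.var ρ f x ≤ ∫⁻ y, ‖S.K x y * f y‖ₑ := by
  refine iSup₂_le fun ε ⟨hanti, hpos, _⟩ => (tsum_rpow_rpow_inv_antitone one_pos hρ _).trans ?_
  simp only [ENNReal.rpow_one, div_one]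
  exact (ENNReal.tsum_le_tsum fun i => S.ofReal_abs_trunc_sub_le hf x (hpos _)
    (hanti.antitone i.le_succ)).trans (tsum_setLIntegral_annulus_le volume x hanti.antitone _)

lemma var_indicator_lt_dist_le (hρ : 0 < ρ) (hf : Integrable f) (x : Rd d) {h : ℝ} (hh : 0 < h) :
    S.var ρ ({y | h < dist x y}.indicator f) x ≤ S.var ρ f x := by
  refine S.var_le_of_varSum_le hρ fun n a ha _ => ?_
  simp only [varSum, S.trunc_indicator_lt_dist]
  exact S.varSum_le_var hρ hf x (a := fun i => max (a i) h)
    (fun i _ => max_le_max (ha i.lt_succ_self).le le_rfl) fun i _ => lt_max_of_lt_right hh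

end Variation

end CZO

/-! ### Oscillation of the variation over nearby points -/

section Layer

lemma ofReal_div_pow_mul_rpow_eq {r : ℝ} (hr : 1 < r) (n : ℕ) {h w : ℝ} (hh : 0 < h) (hw : h ≤ w)
    (a : ℝ≥0∞) :
    ENNReal.ofReal (w / w ^ n) * (ENNReal.ofReal w⁻¹ * a) ^ r =
      (ENNReal.ofReal h)⁻¹ ^ (r - 1) * (radialKernel (fun t => t ^ (r - 1)) n h w * a ^ r) := by
  have hw0 : 0 < w := hh.trans_le hw
  have hr0 : 0 ≤ r := by linarith
  have hsplit : w⁻¹ ^ r = w⁻¹ ^ (r - 1) * w⁻¹ := by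
    rw [← Real.rpow_add_one (inv_pos.2 hw0).ne', sub_add_cancel]
  rw [radialKernel, if_pos hw, ENNReal.mul_rpow_of_nonneg _ _ hr0, ← mul_assoc, ← mul_assoc,
    ← ENNReal.ofReal_inv_of_pos hh, ENNReal.ofReal_rpow_of_pos (inv_pos.2 hw0),
    ENNReal.ofReal_rpow_of_pos (inv_pos.2 hh), ← ENNReal.ofReal_mul (by positivity),
    ← ENNReal.ofReal_mul (by positivity), hsplit, Real.inv_rpow hw0.le, Real.inv_rpow hh.le,
    Real.div_rpow hh.le hw0.le]
  congr 2
  have := Real.rpow_pos_of_pos hh (r - 1)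
  field_simp

variable {E : Type*} [NormedAddCommGroup E] [NormedSpace ℝ E] [FiniteDimensional ℝ E]
  [Nontrivial E] [MeasurableSpace E] [BorelSpace E]

lemma setLIntegral_layer_dist_div_pow_le (μ : Measure E) [μ.IsAddHaarMeasure] (x : E)
    {h ε₁ ε₂ : ℝ} (hh : 0 < h) (hε₁ : 0 ≤ ε₁) (hε₂ : 0 ≤ ε₂) {D : Set E}
    (hDh : ∀ y ∈ D, h < dist x y) (hDε : ∀ y ∈ D, |dist x y - ε₁| ≤ h ∨ |dist x y - ε₂| ≤ h) :
    ∫⁻ y in D, ENNReal.ofReal (dist x y / dist x y ^ finrank ℝ E) ∂μ ≤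
      2 * (ENNReal.ofReal (2 * finrank ℝ E * 3 ^ (finrank ℝ E - 1)) * μ (ball 0 1)) *
        ENNReal.ofReal h := by
  have hsub : D ⊆ {y | h < dist x y ∧ |dist x y - ε₁| ≤ h} ∪
      {y | h < dist x y ∧ |dist x y - ε₂| ≤ h} := fun y hy =>
    (hDε y hy).imp (fun hε => ⟨hDh y hy, hε⟩) fun hε => ⟨hDh y hy, hε⟩
  rw [mul_assoc, two_mul]
  exact (lintegral_mono_set hsub).trans ((lintegral_union_le _ _ _).trans (add_le_add
    (lintegral_shell_dist_div_pow_le μ x hε₁ hh) (lintegral_shell_dist_div_pow_le μ x hε₂ hh)))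

-- Hölder against the measure `w¹⁻ⁿ dy`, which gives a shell of thickness `h` mass at most `C h`.
lemma rpow_setLIntegral_layer_le (μ : Measure E) [μ.IsAddHaarMeasure] {r : ℝ} (hr : 1 < r) (x : E)
    {h ε₁ ε₂ : ℝ} (hh : 0 < h) (hε₁ : 0 ≤ ε₁) (hε₂ : 0 ≤ ε₂) {D : Set E} (hD : MeasurableSet D)
    (hDh : ∀ y ∈ D, h < dist x y) (hDε : ∀ y ∈ D, |dist x y - ε₁| ≤ h ∨ |dist x y - ε₂| ≤ h)
    {u : E → ℝ≥0∞} (hu : Measurable u) :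
    (∫⁻ y in D, ENNReal.ofReal ((dist x y ^ finrank ℝ E)⁻¹) * u y ∂μ) ^ r ≤
      (2 * (ENNReal.ofReal (2 * finrank ℝ E * 3 ^ (finrank ℝ E - 1)) * μ (ball 0 1))) ^ (r - 1) *
        ∫⁻ y in D, radialKernel (fun t => t ^ (r - 1)) (finrank ℝ E) h (dist x y) * u y ^ r ∂μ := by
  set n := finrank ℝ E
  set c := ENNReal.ofReal (2 * n * 3 ^ (n - 1)) * μ (ball 0 1)
  have hr0 : 0 ≤ r - 1 := by linarith
  have hh0 : ENNReal.ofReal h ≠ 0 := (ENNReal.ofReal_pos.2 hh).ne'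
  have hfactor : ∫⁻ y in D, ENNReal.ofReal ((dist x y ^ n)⁻¹) * u y ∂μ =
      ∫⁻ y in D, ENNReal.ofReal (dist x y / dist x y ^ n) *
        (ENNReal.ofReal (dist x y)⁻¹ * u y) ∂μ := by
    refine setLIntegral_congr_fun hD fun y hy => ?_
    have hw : 0 < dist x y := hh.trans (hDh y hy)
    rw [← mul_assoc, ← ENNReal.ofReal_mul (by positivity)]
    congr 2
    field_simp
  have hpow : ∫⁻ y in D, ENNReal.ofReal (dist x y / dist x y ^ n) *
        (ENNReal.ofReal (dist x y)⁻¹ * u y) ^ r ∂μ = (ENNReal.ofReal h)⁻¹ ^ (r - 1) *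
      ∫⁻ y in D, radialKernel (fun t => t ^ (r - 1)) n h (dist x y) * u y ^ r ∂μ := by
    rw [← lintegral_const_mul' _ _ (by finiteness)]
    exact setLIntegral_congr_fun hD fun y hy =>
      ofReal_div_pow_mul_rpow_eq hr n hh (hDh y hy).le (u y)
  rw [hfactor]
  refine (rpow_lintegral_mul_le hr (by fun_prop) (by fun_prop)).trans ?_
  rw [hpow, ← mul_assoc]
  gcongr
  rw [← ENNReal.mul_rpow_of_nonneg _ _ hr0]
  refine ENNReal.rpow_le_rpow ?_ hr0
  calc _ ≤ 2 * c * ENNReal.ofReal h * (ENNReal.ofReal h)⁻¹ := by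
        gcongr
        exact setLIntegral_layer_dist_div_pow_le μ x hh hε₁ hε₂ hDh hDε
    _ = 2 * c := by rw [mul_assoc, ENNReal.mul_inv_cancel hh0 ENNReal.ofReal_ne_top, mul_one]

end Layer

lemma enorm_setIntegral_le_enorm_setIntegral_add {α : Type*} [MeasurableSpace α] {μ : Measure α}
    {G H : α → ℝ} (hG : Integrable G μ) (hH : Integrable H μ) {A B : Set α}
    (hA : MeasurableSet A) (hB : MeasurableSet B) :
    ‖∫ y in A, G y ∂μ‖ₑ ≤ ‖∫ y in B, H y ∂μ‖ₑ +
      (∫⁻ y in A, ‖G y - H y‖ₑ ∂μ + ∫⁻ y in symmDiff A B, ‖H y‖ₑ ∂μ) := by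
  have hsub : ∫ y in A, (G y - H y) ∂μ = ∫ y in A, G y ∂μ - ∫ y in A, H y ∂μ :=
    integral_sub hG.integrableOn hH.integrableOn
  have hA_split : ∫ y in A ∩ B, H y ∂μ + ∫ y in A \ B, H y ∂μ = ∫ y in A, H y ∂μ :=
    integral_inter_add_sdiff hB hH.integrableOn
  have hB_split : ∫ y in A ∩ B, H y ∂μ + ∫ y in B \ A, H y ∂μ = ∫ y in B, H y ∂μ := by
    rw [inter_comm]
    exact integral_inter_add_sdiff hA hH.integrableOn
  have hdecomp : ∫ y in A, G y ∂μ = ∫ y in B, H y ∂μ + (∫ y in A, (G y - H y) ∂μ +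
      (∫ y in A \ B, H y ∂μ - ∫ y in B \ A, H y ∂μ)) := by
    linear_combination -hsub - hA_split + hB_split
  rw [hdecomp, Set.symmDiff_def, lintegral_union (hB.diff hA)
    (disjoint_sdiff_sdiff : Disjoint (A \ B) (B \ A))]
  refine (enorm_add_le _ _).trans (add_le_add le_rfl ((enorm_add_le _ _).trans (add_le_add ?_
    ((enorm_sub_le).trans (add_le_add ?_ ?_))))) <;>
  exact enorm_integral_le_lintegral_enorm _

lemma abs_dist_sub_le_of_mem_symmDiff_annulus {α : Type*} [PseudoMetricSpace α] {x ξ y : α}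
    {a b h : ℝ} (hxξ : dist x ξ ≤ h) (hy : y ∈ symmDiff (annulus ξ a b) (annulus x a b)) :
    |dist x y - a| ≤ h ∨ |dist x y - b| ≤ h := by
  have hdist := abs_le.1 ((abs_dist_sub_le x ξ y).trans hxξ)
  simp only [mem_symmDiff, annulus, mem_preimage, mem_Ioc, not_and_or, not_lt, not_le] at hy
  simp only [abs_le]
  rcases hy with ⟨⟨hξa, hξb⟩, hx | hx⟩ | ⟨⟨hxa, hxb⟩, hξ | hξ⟩
  · exact Or.inl (by constructor <;> linarith)
  · exact Or.inr (by constructor <;> linarith)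
  · exact Or.inl (by constructor <;> linarith)
  · exact Or.inr (by constructor <;> linarith)

namespace CZO

variable {d : ℕ} (S : CZO d) {ρ : ℝ} {f : Rd d → ℝ}

section NearbyPoints

variable {x ξ : Rd d} {h : ℝ}

lemma abs_K_sub_add_abs_K_sub_le {y : Rd d} (hh : 0 < h) (hxξ : dist x ξ ≤ h / 2)
    (hy : h ≤ dist x y) :
    |S.K x y - S.K ξ y| + |S.K y x - S.K y ξ| ≤ S.Cst * (S.ω (h / dist x y) / dist x y ^ d) := by
  have hw : 0 < dist x y := hh.trans_le hy
  have hω : S.ω (dist x ξ / dist x y) ≤ S.ω (h / dist x y) := by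
    refine S.ω_mono (mem_Ici.2 (by positivity)) (mem_Ici.2 (by positivity)) ?_
    gcongr
    linarith
  have hC := S.hCst
  calc _ ≤ S.Cst * S.ω (dist x ξ / dist x y) / dist x y ^ d :=
        S.smooth x ξ y (dist_pos.1 hw) (by linarith)
    _ = S.Cst * (S.ω (dist x ξ / dist x y) / dist x y ^ d) := mul_div_assoc _ _ _
    _ ≤ _ := by gcongr

lemma enorm_K_sub_le {y : Rd d} (hh : 0 < h) (hxξ : dist x ξ ≤ h / 2) (hy : h ≤ dist x y) :
    ‖S.K ξ y - S.K x y‖ₑ ≤ ENNReal.ofReal S.Cst * radialKernel S.ω d h (dist x y) := by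
  rw [radialKernel, if_pos hy, ← ENNReal.ofReal_mul S.hCst.le, Real.enorm_eq_ofReal_abs,
    abs_sub_comm]
  exact ENNReal.ofReal_le_ofReal ((le_add_of_nonneg_right (abs_nonneg _)).trans
    (S.abs_K_sub_add_abs_K_sub_le hh hxξ hy))

lemma enorm_K_sub_right_le {y : Rd d} (hh : 0 < h) (hxξ : dist x ξ ≤ h / 2) (hy : h ≤ dist x y) :
    ‖S.K y ξ - S.K y x‖ₑ ≤ ENNReal.ofReal S.Cst * radialKernel S.ω d h (dist x y) := by
  rw [radialKernel, if_pos hy, ← ENNReal.ofReal_mul S.hCst.le, Real.enorm_eq_ofReal_abs,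
    abs_sub_comm]
  exact ENNReal.ofReal_le_ofReal ((le_add_of_nonneg_left (abs_nonneg _)).trans
    (S.abs_K_sub_add_abs_K_sub_le hh hxξ hy))

lemma enorm_K_le {y : Rd d} (hxy : x ≠ y) :
    ‖S.K x y‖ₑ ≤ ENNReal.ofReal S.Cst * ENNReal.ofReal ((dist x y ^ d)⁻¹) := by
  rw [← ENNReal.ofReal_mul S.hCst.le, ← div_eq_mul_inv, Real.enorm_eq_ofReal_abs]
  exact ENNReal.ofReal_le_ofReal (S.size x y hxy)

lemma integrable_K_mul (hf : Integrable f) (hh : 0 < h) (hz : ∀ y, dist x y ≤ h → f y = 0) :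
    Integrable fun y => S.K x y * f y := by
  have hsupp : Function.support (fun y => S.K x y * f y) ⊆ {y | h < dist x y} := fun y hy =>
    show h < dist x y from not_le.1 fun hle => hy (by simp only [hz y hle, mul_zero])
  exact (integrableOn_iff_integrable_of_support_subset hsupp).1 (S.integrableOn_K_mul hf x hh)

lemma ofReal_abs_trunc_sub_le_add (hf : Integrable f) (hh : 0 < h) (hxξ : dist x ξ ≤ h / 2)
    (hz : ∀ y, dist x y ≤ h → f y = 0) {a b : ℝ} (ha : 0 < a) (hab : a ≤ b) :
    ENNReal.ofReal |S.trunc a f ξ - S.trunc b f ξ| ≤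
      ENNReal.ofReal |S.trunc a f x - S.trunc b f x| +
      ((∫⁻ y in annulus ξ a b, ‖S.K ξ y * f y - S.K x y * f y‖ₑ) +
        ∫⁻ y in symmDiff (annulus ξ a b) (annulus x a b), ‖S.K x y * f y‖ₑ) := by
  have hzξ : ∀ y, dist ξ y ≤ h / 2 → f y = 0 := fun y hy =>
    hz y ((dist_triangle x ξ y).trans (by linarith))
  rw [S.trunc_sub_trunc hf ξ ha hab, S.trunc_sub_trunc hf x ha hab,
    ← Real.enorm_eq_ofReal_abs, ← Real.enorm_eq_ofReal_abs]
  exact enorm_setIntegral_le_enorm_setIntegral_add (S.integrable_K_mul hf (half_pos hh) hzξ)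
    (S.integrable_K_mul hf hh hz) (measurableSet_annulus _ _ _) (measurableSet_annulus _ _ _)

lemma lintegral_enorm_K_sub_mul_le (hh : 0 < h) (hxξ : dist x ξ ≤ h / 2)
    (hz : ∀ y, dist x y ≤ h → f y = 0) :
    ∫⁻ y, ‖S.K ξ y * f y - S.K x y * f y‖ₑ ≤
      ENNReal.ofReal S.Cst * (2 ^ d * volume (ball (0 : Rd d) 1) * dyadicSum S.ω) *
        hlMaximal volume (fun y => ‖f y‖ₑ) x := by
  have hpt : ∀ y, ‖S.K ξ y * f y - S.K x y * f y‖ₑ ≤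
      ENNReal.ofReal S.Cst * (radialKernel S.ω d h (dist x y) * ‖f y‖ₑ) := fun y => by
    rcases le_or_gt (dist x y) h with hy | hy
    · simp [hz y hy]
    · rw [← sub_mul, enorm_mul, ← mul_assoc]
      gcongr
      exact S.enorm_K_sub_le hh hxξ hy.le
  refine (lintegral_mono hpt).trans ?_
  rw [lintegral_const_mul' _ _ ENNReal.ofReal_ne_top, mul_assoc]
  have hker := lintegral_radialKernel_mul_le volume S.ω_mono hh x fun y => ‖f y‖ₑ
  rw [finrank_euclideanSpace_fin] at hker
  gcongr

variable [NeZero d]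

lemma rpow_setLIntegral_enorm_K_mul_le {r ε₁ ε₂ : ℝ} (hr : 1 < r) (hf : Measurable f) (hh : 0 < h)
    (hz : ∀ y, dist x y ≤ h → f y = 0) (hε₁ : 0 ≤ ε₁) (hε₂ : 0 ≤ ε₂) {D : Set (Rd d)}
    (hD : MeasurableSet D) (hDε : ∀ y ∈ D, |dist x y - ε₁| ≤ h ∨ |dist x y - ε₂| ≤ h) :
    (∫⁻ y in D, ‖S.K x y * f y‖ₑ) ^ r ≤ ENNReal.ofReal S.Cst ^ r *
      ((2 * (ENNReal.ofReal (2 * d * 3 ^ (d - 1)) * volume (ball (0 : Rd d) 1))) ^ (r - 1) *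
        ∫⁻ y in D, radialKernel (fun t => t ^ (r - 1)) d h (dist x y) * ‖f y‖ₑ ^ r) := by
  set far := {y | h < dist x y}
  have hfar : MeasurableSet far := measurableSet_lt_dist x h
  have hpt : ∀ y, ‖S.K x y * f y‖ₑ ≤ ENNReal.ofReal S.Cst *
      far.indicator (fun y => ENNReal.ofReal ((dist x y ^ d)⁻¹) * ‖f y‖ₑ) y := fun y => by
    by_cases hy : h < dist x y
    · rw [indicator_of_mem (show y ∈ far from hy), enorm_mul, ← mul_assoc]
      gcongr
      exact S.enorm_K_le (dist_pos.1 (hh.trans hy))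
    · simp [hz y (not_lt.1 hy)]
  have hlayer := rpow_setLIntegral_layer_le (volume : Measure (Rd d)) hr x hh hε₁ hε₂
    (hD.inter hfar) (fun y hy => hy.2) (fun y hy => hDε y hy.1) hf.enorm
  rw [finrank_euclideanSpace_fin] at hlayer
  calc _ ≤ (ENNReal.ofReal S.Cst *
        ∫⁻ y in D ∩ far, ENNReal.ofReal ((dist x y ^ d)⁻¹) * ‖f y‖ₑ) ^ r := by
        rw [inter_comm, ← setLIntegral_indicator hfar,
          ← lintegral_const_mul' _ _ ENNReal.ofReal_ne_top]
        gcongr with y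
        exact hpt y
    _ ≤ _ := by
        rw [ENNReal.mul_rpow_of_nonneg _ _ (by linarith)]
        gcongr
        exact hlayer.trans (by gcongr; exact inter_subset_left)

lemma exists_tsum_rpow_setLIntegral_symmDiff_le {r : ℝ} (hr : 1 < r) :
    ∃ C : ℝ≥0∞, C ≠ ∞ ∧ ∀ (f : Rd d → ℝ), Measurable f → ∀ (x ξ : Rd d) (h : ℝ), 0 < h →
      dist x ξ ≤ h / 2 → (∀ y, dist x y ≤ h → f y = 0) →
      ∀ ε : ℕ → ℝ, StrictAnti ε → (∀ i, 0 < ε i) →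
      ∑' i, (∫⁻ y in symmDiff (annulus ξ (ε (i + 1)) (ε i)) (annulus x (ε (i + 1)) (ε i)),
        ‖S.K x y * f y‖ₑ) ^ r ≤ C * hlMaximal volume (fun y => ‖f y‖ₑ ^ r) x := by
  set c := (2 * (ENNReal.ofReal (2 * d * 3 ^ (d - 1)) * volume (ball (0 : Rd d) 1))) ^ (r - 1)
  set P := 2 ^ d * volume (ball (0 : Rd d) 1) * dyadicSum fun t => t ^ (r - 1)
  have hc : c ≠ ∞ := ENNReal.rpow_ne_top_of_nonneg (by linarith) (by finiteness)
  have hP : P ≠ ∞ := by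
    have := dyadicSum_rpow_ne_top (sub_pos.2 hr)
    finiteness
  refine ⟨ENNReal.ofReal S.Cst ^ r * (c * (2 * P)), ?_, fun f hf x ξ h hh hxξ hz ε hanti hpos => ?_⟩
  · have := ENNReal.rpow_ne_top_of_nonneg (by linarith : 0 ≤ r) (ENNReal.ofReal_ne_top (r := S.Cst))
    finiteness
  set A := fun i => annulus ξ (ε (i + 1)) (ε i)
  set B := fun i => annulus x (ε (i + 1)) (ε i)
  set u := fun y => radialKernel (fun t => t ^ (r - 1)) d h (dist x y) * ‖f y‖ₑ ^ r
  have hu : ∫⁻ y, u y ≤ P * hlMaximal volume (fun y => ‖f y‖ₑ ^ r) x := by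
    have hmono : MonotoneOn (fun t : ℝ => t ^ (r - 1)) (Ici 0) := fun a ha b _ hab =>
      Real.rpow_le_rpow ha hab (by linarith)
    simpa only [finrank_euclideanSpace_fin] using
      lintegral_radialKernel_mul_le volume hmono hh x fun y => ‖f y‖ₑ ^ r
  calc _ ≤ ∑' i, ENNReal.ofReal S.Cst ^ r * (c * ∫⁻ y in symmDiff (A i) (B i), u y) :=
        ENNReal.tsum_le_tsum fun i => S.rpow_setLIntegral_enorm_K_mul_le hr hf hh hz
          (hpos _).le (hpos _).le ((measurableSet_annulus ξ _ _).symmDiff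
          (measurableSet_annulus x _ _)) fun y hy =>
          abs_dist_sub_le_of_mem_symmDiff_annulus (by linarith) hy
    _ ≤ ∑' i, ENNReal.ofReal S.Cst ^ r * (c * ((∫⁻ y in A i, u y) + ∫⁻ y in B i, u y)) := by
        gcongr with i
        exact (lintegral_mono_set symmDiff_subset_union).trans (lintegral_union_le _ _ _)
    _ ≤ ENNReal.ofReal S.Cst ^ r * (c * ((∫⁻ y, u y) + ∫⁻ y, u y)) := by
        rw [ENNReal.tsum_mul_left, ENNReal.tsum_mul_left, ENNReal.tsum_add]
        gcongr <;> exact tsum_setLIntegral_annulus_le volume _ hanti.antitone u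
    _ ≤ _ := by
        rw [← two_mul, mul_assoc, mul_assoc, mul_assoc]
        gcongr

lemma exists_var_le_var_add {r : ℝ} (hr : 1 < r) (hrρ : r ≤ ρ) :
    ∃ C : ℝ≥0∞, C ≠ ∞ ∧ ∀ (f : Rd d → ℝ), Measurable f → Integrable f →
      ∀ (x ξ : Rd d) (h : ℝ), 0 < h → dist x ξ ≤ h / 2 → (∀ y, dist x y ≤ h → f y = 0) →
      S.var ρ f ξ ≤ S.var ρ f x + C * (hlMaximal volume (fun y => ‖f y‖ₑ) x +
        hlMaximal volume (fun y => ‖f y‖ₑ ^ r) x ^ (1 / r)) := by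
  obtain ⟨C, hC, hlayers⟩ := S.exists_tsum_rpow_setLIntegral_symmDiff_le hr
  set C' := ENNReal.ofReal S.Cst * (2 ^ d * volume (ball (0 : Rd d) 1) * dyadicSum S.ω)
  have hC' : C' ≠ ∞ := by
    have := S.dyadicSum_ω_ne_top
    finiteness
  refine ⟨C' + C ^ (1 / r), by finiteness, fun f hfm hf x ξ h hh hxξ hz =>
    iSup₂_le fun ε ⟨hanti, hpos, hlim⟩ => ?_⟩
  set A := fun i => annulus ξ (ε (i + 1)) (ε i)
  set D := fun i => symmDiff (A i) (annulus x (ε (i + 1)) (ε i))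
  have hρ : 1 ≤ ρ := by linarith
  have hsmooth : (∑' i, (∫⁻ y in A i, ‖S.K ξ y * f y - S.K x y * f y‖ₑ) ^ ρ) ^ (1 / ρ) ≤
      C' * hlMaximal volume (fun y => ‖f y‖ₑ) x := by
    refine (tsum_rpow_rpow_inv_antitone one_pos hρ _).trans ?_
    simp only [ENNReal.rpow_one, div_one]
    exact (tsum_setLIntegral_annulus_le volume ξ hanti.antitone _).trans
      (S.lintegral_enorm_K_sub_mul_le hh hxξ hz)
  have hrough : (∑' i, (∫⁻ y in D i, ‖S.K x y * f y‖ₑ) ^ ρ) ^ (1 / ρ) ≤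
      C ^ (1 / r) * hlMaximal volume (fun y => ‖f y‖ₑ ^ r) x ^ (1 / r) := by
    refine (tsum_rpow_rpow_inv_antitone (by linarith) hrρ _).trans ?_
    rw [← ENNReal.mul_rpow_of_nonneg _ _ (by positivity)]
    gcongr
    exact hlayers f hfm x ξ h hh hxξ hz ε hanti hpos
  calc _ ≤ _ := by
        gcongr with i
        exact S.ofReal_abs_trunc_sub_le_add hf hh hxξ hz (hpos (i + 1)) (hanti.antitone i.le_succ)
    _ ≤ _ := (tsum_add_rpow_le hρ _ _).trans (add_le_add
        (S.tsum_rpow_le_var ρ f x hanti hpos hlim) (tsum_add_rpow_le hρ _ _))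
    _ ≤ _ := by
        rw [mul_add]
        exact add_le_add le_rfl (add_le_add
          (hsmooth.trans (mul_le_mul_left le_self_add _))
          (hrough.trans (mul_le_mul_left le_add_self _)))

end NearbyPoints

end CZO

/-! ### The grand maximal operator on the exponent of the hypothesis -/

lemma dist_le_sqrt_card_mul {ι : Type*} [Fintype ι] {x y : EuclideanSpace ℝ ι} {a : ℝ}
    (ha : 0 ≤ a) (h : ∀ i, |x i - y i| ≤ a) : dist x y ≤ √(Fintype.card ι) * a := by
  rw [EuclideanSpace.dist_eq]
  calc √(∑ i, dist (x i) (y i) ^ 2) ≤ √(∑ _i : ι, a ^ 2) := by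
        gcongr with i
        exact h i
    _ = _ := by simp [Real.sqrt_sq ha]

namespace Cube

variable {d : ℕ} (Q : Cube d) {t : ℝ} {x y : Rd d}

lemma measurableSet_dilate (t : ℝ) : MeasurableSet (Q.dilate t) := by
  simp only [Cube.dilate, ofPred_forall]
  exact MeasurableSet.iInter fun i =>
    (by fun_prop : Measurable fun y : Rd d => y i) measurableSet_Ico

lemma measurableSet_set : MeasurableSet Q.set := by
  simpa only [Cube.set, Cube.dilate, one_mul] using Q.measurableSet_dilate 1

lemma set_subset_dilate_three : Q.set ⊆ Q.dilate 3 := fun y hy i => by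
  have := Q.hl
  constructor <;> linarith [(hy i).1, (hy i).2]

lemma dist_le_of_mem_dilate (ht : 0 ≤ t) (hx : x ∈ Q.dilate t) (hy : y ∈ Q.dilate t) :
    dist x y ≤ √d * (t * Q.l) := by
  have h := dist_le_sqrt_card_mul (mul_nonneg ht Q.hl.le) fun i =>
    abs_le.2 (⟨by linarith [(hx i).1, (hy i).2], by linarith [(hx i).2, (hy i).1]⟩ :
      -(t * Q.l) ≤ x i - y i ∧ x i - y i ≤ t * Q.l)
  rwa [Fintype.card_fin] at h

lemma volume_dilate_lt_top (ht : 0 ≤ t) : volume (Q.dilate t) < ∞ :=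
  (isBounded_iff.2 ⟨_, fun _ hx _ hy => Q.dist_le_of_mem_dilate ht hx hy⟩).measure_lt_top

lemma le_dist_of_notMem_dilate_three (hx : x ∈ Q.set) (hy : y ∉ Q.dilate 3) : Q.l ≤ dist x y := by
  simp only [Cube.dilate, mem_ofPred_eq, not_forall, not_and_or, not_le, not_lt] at hy
  obtain ⟨i, hi⟩ := hy
  have hxi := hx i
  refine le_trans ?_ (PiLp.dist_apply_le x y i)
  rw [Real.dist_eq, le_abs]
  exact hi.imp (fun h => by linarith) fun h => by linarith

lemma dist_le_sqrt_mul_dist {z : Rd d} (hx : x ∈ Q.set) (hy : y ∈ Q.set) (hz : z ∉ Q.dilate 3) :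
    dist x y ≤ √d * dist y z := by
  have h := Q.dist_le_of_mem_dilate zero_le_one (by simpa [Cube.set, Cube.dilate] using hx)
    (by simpa [Cube.set, Cube.dilate] using hy)
  rw [one_mul] at h
  exact h.trans (by gcongr; exact Q.le_dist_of_notMem_dilate_three hy hz)

lemma dist_le_one_add_sqrt_mul_dist {z : Rd d} (hx : x ∈ Q.set) (hy : y ∈ Q.set)
    (hz : z ∉ Q.dilate 3) : dist x z ≤ (1 + √d) * dist y z := by
  linarith [dist_triangle x y z, Q.dist_le_sqrt_mul_dist hx hy hz]

end Cube

lemma indicator_sdiff_eq_indicator_add_indicator {X : Type*} [PseudoMetricSpace X] {x : X} {h : ℝ}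
    (A : Set X) {B : Set X} (f : X → ℝ) (hB : ∀ y ∈ B, dist x y ≤ h) :
    (A \ B).indicator f = fun y => ({y | dist x y ≤ h} \ B).indicator (A.indicator f) y +
      {y | h < dist x y}.indicator (A.indicator f) y := by
  have hcompl : {y | dist x y ≤ h} \ B ∪ {y | h < dist x y} = Bᶜ := by
    ext y
    have hy := hB y
    have hlt := lt_iff_not_ge (a := h) (b := dist x y)
    simp only [mem_union, Set.mem_sdiff, mem_ofPred_eq, mem_compl_iff]
    tauto
  have hdisj : Disjoint ({y | dist x y ≤ h} \ B) {y | h < dist x y} :=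
    disjoint_left.2 fun y hy (hy' : h < dist x y) => hy'.not_ge hy.1
  rw [← indicator_union_of_disjoint hdisj, hcompl, indicator_indicator, inter_comm, sdiff_eq]

lemma integrable_indicator_of_lintegral_rpow_ne_top {α : Type*} [MeasurableSpace α]
    {μ : Measure α} {q : ℝ} (hq : 1 ≤ q) {f : α → ℝ} (hf : Measurable f)
    (hfin : ∫⁻ x, ‖f x‖ₑ ^ q ∂μ ≠ ∞) {A : Set α} (hA : MeasurableSet A) (hμA : μ A < ∞) :
    Integrable (A.indicator f) μ := by
  have hq0 : 0 < q := by linarith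
  have hmem : MemLp f (ENNReal.ofReal q) μ := ⟨hf.aestronglyMeasurable,
    (eLpNorm_lt_top_iff_lintegral_rpow_enorm_lt_top (ENNReal.ofReal_pos.2 hq0).ne'
      ENNReal.ofReal_ne_top).2 (by rw [ENNReal.toReal_ofReal hq0.le]; exact hfin.lt_top)⟩
  have : IsFiniteMeasure (μ.restrict A) := isFiniteMeasure_restrict.2 hμA.ne
  rw [integrable_indicator_iff hA]
  exact (hmem.restrict A).integrable (ENNReal.one_le_ofReal.2 hq)

lemma lintegral_add_rpow_le {α : Type*} [MeasurableSpace α] {μ : Measure α} {q : ℝ} (hq : 1 ≤ q)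
    {u : α → ℝ≥0∞} (hu : Measurable u) (v : α → ℝ≥0∞) :
    ∫⁻ x, (u x + v x) ^ q ∂μ ≤ 2 ^ (q - 1) * (∫⁻ x, u x ^ q ∂μ + ∫⁻ x, v x ^ q ∂μ) := by
  rw [← lintegral_add_left (hu.pow_const q), ← lintegral_const_mul' _ _
    (ENNReal.rpow_ne_top_of_nonneg (by linarith) ENNReal.ofNat_ne_top)]
  exact lintegral_mono fun x => ENNReal.rpow_add_le_mul_rpow_add_rpow _ _ hq

lemma exists_lintegral_hlMaximal_rpow_rpow_le {E : Type*} [NormedAddCommGroup E] [NormedSpace ℝ E]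
    [FiniteDimensional ℝ E] [Nontrivial E] [MeasurableSpace E] [BorelSpace E] (μ : Measure E)
    [μ.IsAddHaarMeasure] {r q : ℝ} (hr : 0 < r) (hrq : r < q) :
    ∃ C : ℝ≥0∞, C ≠ ∞ ∧ ∀ u : E → ℝ≥0∞, Measurable u →
      ∫⁻ x, (hlMaximal μ (fun y => u y ^ r) x ^ (1 / r)) ^ q ∂μ ≤ C * ∫⁻ x, u x ^ q ∂μ := by
  obtain ⟨C, hC, hM⟩ := exists_lintegral_hlMaximal_rpow_le μ ((one_lt_div hr).2 hrq)
  refine ⟨C, hC, fun u hu => ?_⟩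
  have h := hM (fun y => u y ^ r) (hu.pow_const r)
  simp only [← ENNReal.rpow_mul, mul_div_cancel₀ q hr.ne'] at h
  simpa only [← ENNReal.rpow_mul, one_div_mul_eq_div] using h

lemma exists_lintegral_hlMaximal_add_rpow_le {E : Type*} [NormedAddCommGroup E] [NormedSpace ℝ E]
    [FiniteDimensional ℝ E] [Nontrivial E] [MeasurableSpace E] [BorelSpace E] (μ : Measure E)
    [μ.IsAddHaarMeasure] {r q : ℝ} (hr : 0 < r) (hrq : r < q) (hq : 1 < q) :
    ∃ C : ℝ≥0∞, C ≠ ∞ ∧ ∀ u : E → ℝ≥0∞, Measurable u →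
      ∫⁻ x, (hlMaximal μ u x + hlMaximal μ (fun y => u y ^ r) x ^ (1 / r)) ^ q ∂μ ≤
        C * ∫⁻ x, u x ^ q ∂μ := by
  obtain ⟨C₁, hC₁, hM₁⟩ := exists_lintegral_hlMaximal_rpow_le μ hq
  obtain ⟨C₂, hC₂, hM₂⟩ := exists_lintegral_hlMaximal_rpow_rpow_le μ hr hrq
  have hc : (2 : ℝ≥0∞) ^ (q - 1) ≠ ∞ :=
    ENNReal.rpow_ne_top_of_nonneg (by linarith) ENNReal.ofNat_ne_top
  refine ⟨2 ^ (q - 1) * (C₁ + C₂), by finiteness, fun u hu => ?_⟩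
  refine (lintegral_add_rpow_le hq.le (measurable_hlMaximal _) _).trans ?_
  rw [mul_assoc, add_mul]
  gcongr
  exacts [hM₁ u hu, hM₂ u hu]

namespace CZO

variable {d : ℕ} (S : CZO d) {ρ q : ℝ} {f : Rd d → ℝ}

section GrandMaximal

variable {Q₀ : Cube d} {x : Rd d}

lemma grandMaxLoc_le_of_forall {R : ℝ≥0∞}
    (h : ∀ Q : Cube d, x ∈ Q.set → Q.set ⊆ Q₀.set →
      ∀ ξ ∈ Q.set, S.var ρ ((Q₀.dilate 3 \ Q.dilate 3).indicator f) ξ ≤ R) :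
    S.grandMaxLoc ρ Q₀ f x ≤ R := by
  unfold grandMaxLoc
  split_ifs
  · exact iSup₂_le fun Q hQ => essSup_le_of_ae_le _ <|
      (ae_restrict_iff' Q.measurableSet_set).2 (ae_of_all _ fun ξ hξ => h Q hQ.1 hQ.2 ξ hξ)
  · exact zero_le

lemma var_indicator_le_setLIntegral (hρ : 1 ≤ ρ) (hf : Integrable f) {A : Set (Rd d)}
    (hA : MeasurableSet A) (ξ : Rd d) :
    S.var ρ (A.indicator f) ξ ≤ ∫⁻ y in A, ‖S.K ξ y * f y‖ₑ := by
  refine (S.var_le_lintegral_enorm hρ (hf.indicator hA) ξ).trans_eq ?_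
  rw [← lintegral_indicator hA]
  simp only [← indicator_mul_right A (S.K ξ) f, enorm_indicator_eq_indicator_enorm]

lemma setLIntegral_enorm_K_mul_le_hlMaximal (f : Rd d → ℝ) (x ξ : Rd d) {l R : ℝ} (hl : 0 < l)
    (hR : 0 < R) :
    ∫⁻ y in ball x (R * l) \ ball ξ l, ‖S.K ξ y * f y‖ₑ ≤
      ENNReal.ofReal (S.Cst * R ^ d) * volume (ball (0 : Rd d) 1) *
        hlMaximal volume (fun y => ‖f y‖ₑ) x := by
  calc _ ≤ ∫⁻ y in ball x (R * l) \ ball ξ l, ENNReal.ofReal (S.Cst / l ^ d) * ‖f y‖ₑ := by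
        refine setLIntegral_mono' (measurableSet_ball.diff measurableSet_ball) fun y hy => ?_
        rw [enorm_mul, Real.enorm_eq_ofReal_abs]
        gcongr
        exact S.abs_K_le hl (by simpa [dist_comm] using hy.2)
    _ ≤ ENNReal.ofReal (S.Cst / l ^ d) * ∫⁻ y in ball x (R * l), ‖f y‖ₑ := by
        rw [lintegral_const_mul' _ _ ENNReal.ofReal_ne_top]
        gcongr
        exact sdiff_subset
    _ ≤ ENNReal.ofReal (S.Cst / l ^ d) * (volume (ball x (R * l)) * _) := by
        gcongr
        exact setLIntegral_ball_le_hlMaximal _ x (by positivity)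
    _ = _ := by
        rw [Measure.addHaar_ball_of_pos _ _ (by positivity), finrank_euclideanSpace_fin,
          ← mul_assoc, ← mul_assoc, ← ENNReal.ofReal_mul (div_nonneg S.hCst.le (by positivity))]
        congr 3
        rw [mul_pow]
        field_simp

lemma var_indicator_near_le (hρ : 1 ≤ ρ) {F : Rd d → ℝ} (hF : Integrable F) {R : ℝ} (hR : 0 < R)
    {Q : Cube d} {ξ : Rd d} (hξ : ξ ∈ Q.set) (x : Rd d) {A : Set (Rd d)} (hA : MeasurableSet A)
    (hAx : A ⊆ ball x (R * Q.l)) (hAQ : Disjoint A (Q.dilate 3)) :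
    S.var ρ (A.indicator F) ξ ≤ ENNReal.ofReal (S.Cst * R ^ d) * volume (ball (0 : Rd d) 1) *
      hlMaximal volume (fun y => ‖F y‖ₑ) x := by
  refine (S.var_indicator_le_setLIntegral hρ hF hA ξ).trans ((lintegral_mono_set ?_).trans
    (S.setLIntegral_enorm_K_mul_le_hlMaximal F x ξ Q.hl hR))
  refine fun y hy => ⟨hAx hy, ?_⟩
  rw [mem_ball', not_lt]
  exact Q.le_dist_of_notMem_dilate_three hξ (hAQ.notMem_of_mem_left hy)

variable [NeZero d]

lemma exists_grandMaxLoc_le {r : ℝ} (hr : 1 < r) (hrρ : r ≤ ρ) :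
    ∃ C : ℝ≥0∞, C ≠ ∞ ∧ ∀ (Q₀ : Cube d) (f : Rd d → ℝ), Measurable f →
      Integrable ((Q₀.dilate 3).indicator f) → ∀ x, S.grandMaxLoc ρ Q₀ f x ≤
        S.var ρ ((Q₀.dilate 3).indicator f) x +
          C * (hlMaximal volume (fun y => ‖(Q₀.dilate 3).indicator f y‖ₑ) x +
            hlMaximal volume (fun y => ‖(Q₀.dilate 3).indicator f y‖ₑ ^ r) x ^ (1 / r)) := by
  obtain ⟨C, hC, hshift⟩ := S.exists_var_le_var_add hr hrρ
  have hρ : 1 ≤ ρ := by linarith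
  have hd : 0 < √(d : ℝ) := Real.sqrt_pos.2 (Nat.cast_pos.2 (NeZero.pos d))
  set C' := ENNReal.ofReal (S.Cst * (7 * √d) ^ d) * volume (ball (0 : Rd d) 1)
  refine ⟨C' + C, by finiteness, fun Q₀ f hf hF x =>
    S.grandMaxLoc_le_of_forall fun Q hxQ _ ξ hξ => ?_⟩
  set F := (Q₀.dilate 3).indicator f
  have hl := Q.hl
  set h := 6 * √d * Q.l with hh
  have hh0 : 0 < h := by positivity
  have hdiam : ∀ y ∈ Q.dilate 3, dist x y ≤ h / 2 := fun y hy =>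
    (Q.dist_le_of_mem_dilate (by norm_num) (Q.set_subset_dilate_three hxQ) hy).trans
      (by rw [hh]; linarith)
  set near := {y | dist x y ≤ h} \ Q.dilate 3
  set far := {y | h < dist x y}
  have hnear : MeasurableSet near :=
    (measurableSet_le (by fun_prop) measurable_const).diff (Q.measurableSet_dilate 3)
  have hfar : MeasurableSet far := measurableSet_lt_dist x h
  have hvar_near : S.var ρ (near.indicator F) ξ ≤ C' * hlMaximal volume (fun y => ‖F y‖ₑ) x :=
    S.var_indicator_near_le hρ hF (by positivity) hξ x hnear (fun y hy => mem_ball'.2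
      (lt_of_le_of_lt hy.1 (by rw [hh]; gcongr; norm_num))) disjoint_sdiff_left
  have hvar_far : S.var ρ (far.indicator F) ξ ≤ S.var ρ F x +
      C * (hlMaximal volume (fun y => ‖F y‖ₑ) x +
        hlMaximal volume (fun y => ‖F y‖ₑ ^ r) x ^ (1 / r)) := by
    have hle : ∀ y, ‖far.indicator F y‖ₑ ≤ ‖F y‖ₑ := fun y => enorm_indicator_le_enorm_self _ _
    refine (hshift _ ((hf.indicator (Q₀.measurableSet_dilate 3)).indicator hfar)
      (hF.indicator hfar) x ξ h hh0 (hdiam ξ (Q.set_subset_dilate_three hξ))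
      fun y hy => indicator_of_notMem (s := far) hy.not_gt F).trans ?_
    gcongr
    · exact S.var_indicator_lt_dist_le (by linarith) hF x hh0
    · exact hlMaximal_mono hle x
    · exact hlMaximal_mono (fun y => ENNReal.rpow_le_rpow (hle y) (by linarith)) x
  rw [indicator_sdiff_eq_indicator_add_indicator _ f
    fun y hy => (hdiam y hy).trans (half_le_self hh0.le)]
  calc _ ≤ _ := S.var_add_le hρ (hF.indicator hnear) (hF.indicator hfar) ξ
    _ ≤ _ := add_le_add hvar_near hvar_far
    _ ≤ _ := by
        rw [add_mul, ← add_assoc, add_comm (C' * _), add_assoc]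
        gcongr
        exact le_self_add

lemma exists_measurable_majorant_grandMaxLoc (hρ : 1 < ρ) (hq : 1 < q) (hbdd : S.VarBdd ρ q) :
    ∃ C : ℝ≥0∞, C ≠ ∞ ∧ ∀ (Q₀ : Cube d) (f : Rd d → ℝ), Measurable f →
      ∃ Φ : Rd d → ℝ≥0∞, Measurable Φ ∧ S.grandMaxLoc ρ Q₀ f ≤ Φ ∧
        ∫⁻ x, Φ x ^ q ≤ C * ∫⁻ x, ‖f x‖ₑ ^ q := by
  obtain ⟨r, hr, hrq⟩ := exists_between (lt_min hρ hq)
  obtain ⟨hrρ, hrq⟩ := lt_min_iff.1 hrq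
  have hq0 : 0 ≤ q := by linarith
  obtain ⟨C, hC, hpt⟩ := S.exists_grandMaxLoc_le hr hrρ.le
  obtain ⟨B, hB, hmax⟩ := exists_lintegral_hlMaximal_add_rpow_le (volume : Measure (Rd d))
    (zero_lt_one.trans hr) hrq hq
  obtain ⟨A, -, hA⟩ := hbdd
  simp only [← Real.enorm_eq_ofReal_abs] at hA
  set c : ℝ≥0∞ := 2 ^ (q - 1)
  have hc : c ≠ ∞ := ENNReal.rpow_ne_top_of_nonneg (by linarith) ENNReal.ofNat_ne_top
  have hCq : C ^ q ≠ ∞ := ENNReal.rpow_ne_top_of_nonneg hq0 hC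
  refine ⟨c * (ENNReal.ofReal A + C ^ q * B) + 1, by finiteness, fun Q₀ f hf => ?_⟩
  by_cases hfin : ∫⁻ x, ‖f x‖ₑ ^ q = ∞
  · exact ⟨fun _ => ∞, measurable_const, fun _ => le_top, by
      rw [hfin, ENNReal.mul_top (by simp)]; exact le_top⟩
  set F := (Q₀.dilate 3).indicator f
  have hF : Integrable F := integrable_indicator_of_lintegral_rpow_ne_top hq.le hf hfin
    (Q₀.measurableSet_dilate 3) (Q₀.volume_dilate_lt_top (by norm_num))
  have hFm : Measurable F := hf.indicator (Q₀.measurableSet_dilate 3)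
  set M₁ := hlMaximal volume fun y => ‖F y‖ₑ
  set M₂ := hlMaximal volume fun y => ‖F y‖ₑ ^ r
  refine ⟨fun x => S.var ρ F x + C * (M₁ x + M₂ x ^ (1 / r)), ?_, hpt Q₀ f hf hF, ?_⟩
  · exact (S.measurable_var (by linarith) hFm hF).add (((measurable_hlMaximal _).add
      ((measurable_hlMaximal _).pow_const _)).const_mul C)
  set N := ∫⁻ x, ‖F x‖ₑ ^ q
  calc _ ≤ c * ((∫⁻ x, S.var ρ F x ^ q) + ∫⁻ x, (C * (M₁ x + M₂ x ^ (1 / r))) ^ q) :=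
        lintegral_add_rpow_le hq.le (S.measurable_var (by linarith) hFm hF) _
    _ = c * ((∫⁻ x, S.var ρ F x ^ q) + C ^ q * ∫⁻ x, (M₁ x + M₂ x ^ (1 / r)) ^ q) := by
        simp only [ENNReal.mul_rpow_of_nonneg _ _ hq0]
        rw [lintegral_const_mul' _ _ hCq]
    _ ≤ c * (ENNReal.ofReal A * N + C ^ q * (B * N)) := by
        gcongr
        · exact hA F hFm
        · exact hmax _ hFm.enorm
    _ = c * (ENNReal.ofReal A + C ^ q * B) * N := by ring
    _ ≤ _ := by
        refine mul_le_mul' le_self_add (lintegral_mono fun x => ?_)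
        exact ENNReal.rpow_le_rpow (enorm_indicator_le_enorm_self _ _) hq0

lemma exists_lintegral_grandMaxLoc_rpow_le (hρ : 1 < ρ) (hq : 1 < q) (hbdd : S.VarBdd ρ q) :
    ∃ C : ℝ≥0∞, C ≠ ∞ ∧ ∀ (Q₀ : Cube d) (f : Rd d → ℝ), Measurable f →
      ∫⁻ x, S.grandMaxLoc ρ Q₀ f x ^ q ≤ C * ∫⁻ x, ‖f x‖ₑ ^ q := by
  obtain ⟨C, hC, h⟩ := S.exists_measurable_majorant_grandMaxLoc hρ hq hbdd
  refine ⟨C, hC, fun Q₀ f hf => ?_⟩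
  obtain ⟨Φ, -, hle, hΦ⟩ := h Q₀ f hf
  exact (lintegral_mono fun x => ENNReal.rpow_le_rpow (hle x) (by linarith)).trans hΦ

lemma exists_rpow_mul_volume_grandMaxLoc_le (hρ : 1 < ρ) (hq : 1 < q) (hbdd : S.VarBdd ρ q) :
    ∃ C : ℝ≥0∞, C ≠ ∞ ∧ ∀ (Q₀ : Cube d) (f : Rd d → ℝ), Measurable f → ∀ t : ℝ≥0∞,
      t ^ q * volume {x | t < S.grandMaxLoc ρ Q₀ f x} ≤ C * ∫⁻ x, ‖f x‖ₑ ^ q := by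
  obtain ⟨C, hC, h⟩ := S.exists_measurable_majorant_grandMaxLoc hρ hq hbdd
  refine ⟨C, hC, fun Q₀ f hf t => ?_⟩
  obtain ⟨Φ, hΦm, hle, hΦ⟩ := h Q₀ f hf
  refine le_trans ?_ ((mul_meas_ge_le_lintegral₀ (hΦm.pow_const q).aemeasurable (t ^ q)).trans hΦ)
  gcongr with x
  exact fun hx => ENNReal.rpow_le_rpow (hx.le.trans (hle x)) (by linarith)

end GrandMaximal

end CZO

/-! ### Calderón–Zygmund decomposition -/

section Averages

variable {α F : Type*} [MeasurableSpace α] {μ : Measure α} {s : Set α}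
  [NormedAddCommGroup F] [NormedSpace ℝ F]

lemma enorm_setAverage_mul_le (hs : μ s ≠ 0) (hs' : μ s ≠ ∞) (f : α → F) :
    ‖⨍ y in s, f y ∂μ‖ₑ * μ s ≤ ∫⁻ y in s, ‖f y‖ₑ ∂μ := by
  rw [setAverage_eq, enorm_smul,
    enorm_inv (by simp [measureReal_def, ENNReal.toReal_eq_zero_iff, *]), measureReal_def,
    Real.enorm_of_nonneg ENNReal.toReal_nonneg, ENNReal.ofReal_toReal hs', mul_right_comm,
    ENNReal.inv_mul_cancel hs hs', one_mul]
  exact enorm_integral_le_lintegral_enorm _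

lemma setLIntegral_enorm_sub_setAverage_le [MeasurableSpace F] [OpensMeasurableSpace F]
    (hs : μ s ≠ 0) (hs' : μ s ≠ ∞) {f : α → F} (hf : Measurable f) :
    ∫⁻ y in s, ‖f y - ⨍ z in s, f z ∂μ‖ₑ ∂μ ≤ 2 * ∫⁻ y in s, ‖f y‖ₑ ∂μ :=
  calc ∫⁻ y in s, ‖f y - ⨍ z in s, f z ∂μ‖ₑ ∂μ
      ≤ ∫⁻ y in s, (‖f y‖ₑ + ‖⨍ z in s, f z ∂μ‖ₑ) ∂μ := lintegral_mono fun y => enorm_sub_le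
    _ = ∫⁻ y in s, ‖f y‖ₑ ∂μ + ‖⨍ z in s, f z ∂μ‖ₑ * μ s := by
        rw [lintegral_add_left hf.enorm, setLIntegral_const]
    _ ≤ 2 * ∫⁻ y in s, ‖f y‖ₑ ∂μ := by
        rw [two_mul]
        gcongr
        exact enorm_setAverage_mul_le hs hs' f

end Averages

lemma exists_measurable_eqOn_of_pairwise_disjoint {α β ι : Type*} [MeasurableSpace α]
    [MeasurableSpace β] [Zero β] [Countable ι] {s : ι → Set α} (hs : ∀ j, MeasurableSet (s j))
    (hdisj : Pairwise (Function.onFun Disjoint s)) {g : ι → α → β} (hg : ∀ j, Measurable (g j)) :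
    ∃ b : α → β, Measurable b ∧ (∀ j, EqOn b (g j) (s j)) ∧ EqOn b 0 (⋃ j, s j)ᶜ := by
  have hdisj' : ∀ j, Disjoint (⋃ i, s i)ᶜ (s j) := fun j =>
    disjoint_compl_left_iff_subset.2 (subset_iUnion s j)
  obtain ⟨b, hb, hbg⟩ := exists_measurable_piecewise
    (fun o : Option ι => o.elim (⋃ j, s j)ᶜ s)
    (Option.rec (MeasurableSet.iUnion hs).compl hs) (fun o => o.elim 0 g)
    (Option.rec measurable_zero hg) <| by
    rintro (_ | i) (_ | j) hij y ⟨hi, hj⟩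
    · rfl
    · exact ((hdisj' j).notMem_of_mem_left hi hj).elim
    · exact ((hdisj' i).notMem_of_mem_left hj hi).elim
    · exact ((hdisj (ne_of_apply_ne some hij)).notMem_of_mem_left hi hj).elim
  exact ⟨b, hb, fun j => hbg (some j), hbg none⟩

lemma ae_enorm_le_of_setLIntegral_le {E F : Type*} [NormedAddCommGroup E] [NormedSpace ℝ E]
    [FiniteDimensional ℝ E] [MeasurableSpace E] [BorelSpace E] {μ : Measure E}
    [IsLocallyFiniteMeasure μ] [μ.IsOpenPosMeasure] [NormedAddCommGroup F] {f : E → F}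
    (hf : LocallyIntegrable f μ) :
    ∀ᵐ y ∂μ, ∀ (a c : ℝ≥0∞) (s : ℕ → Set E) (r : ℕ → ℝ), c ≠ ∞ →
      Tendsto r atTop (𝓝[>] 0) →
      (∀ k, s k ⊆ closedBall y (r k)) → (∀ k, μ (closedBall y (r k)) ≤ c * μ (s k)) →
      (∀ k, ∫⁻ z in s k, ‖f z‖ₑ ∂μ ≤ a * μ (s k)) → ‖f y‖ₑ ≤ a := by
  filter_upwards [(Besicovitch.vitaliFamily μ).ae_tendsto_lintegral_enorm_sub_div hf]
    with y hy a c s r hc hr hsub hvol hle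
  have hlim : Tendsto (fun k => a + c * ((∫⁻ z in closedBall y (r k), ‖f z - f y‖ₑ ∂μ) /
      μ (closedBall y (r k)))) atTop (𝓝 (a + c * 0)) :=
    (ENNReal.Tendsto.const_mul (hy.comp ((Besicovitch.tendsto_filterAt μ y).comp hr))
      (.inr hc)).const_add a
  rw [mul_zero, add_zero] at hlim
  refine ge_of_tendsto hlim ?_
  filter_upwards [hr.eventually self_mem_nhdsWithin] with k hk
  set B := closedBall y (r k)
  have hB : μ B ≠ 0 := (measure_closedBall_pos μ y hk).ne'
  have hB' : μ B ≠ ∞ := measure_closedBall_lt_top.ne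
  have hs0 : μ (s k) ≠ 0 := fun h => hB (by simpa [h] using hvol k)
  have hs' : μ (s k) ≠ ∞ := ((measure_mono (hsub k)).trans_lt hB'.lt_top).ne
  refine (ENNReal.mul_le_mul_iff_left hs0 hs').1 ?_
  calc ‖f y‖ₑ * μ (s k) = ∫⁻ _ in s k, ‖f y‖ₑ ∂μ := (setLIntegral_const _ _).symm
    _ ≤ ∫⁻ z in s k, (‖f z‖ₑ + ‖f z - f y‖ₑ) ∂μ := lintegral_mono fun z => by
        simpa using enorm_sub_le (a := f z) (b := f z - f y)
    _ ≤ ∫⁻ z in s k, ‖f z‖ₑ ∂μ + ∫⁻ z in B, ‖f z - f y‖ₑ ∂μ := by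
        rw [lintegral_add_left' hf.aestronglyMeasurable.enorm.restrict]
        gcongr
        exact hsub k
    _ ≤ a * μ (s k) + (∫⁻ z in B, ‖f z - f y‖ₑ ∂μ) / μ B * (c * μ (s k)) := by
        nth_rw 1 [← ENNReal.div_mul_cancel hB hB' (b := ∫⁻ z in B, ‖f z - f y‖ₑ ∂μ)]
        gcongr
        exacts [hle k, hvol k]
    _ = _ := by ring

lemma exists_bad_part {X ι : Type*} [MeasurableSpace X] {μ : Measure X} [Countable ι] {f : X → ℝ}
    (hf : Measurable f) {P : ι → Set X} (hP : ∀ j, MeasurableSet (P j))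
    (hdisj : Pairwise (Function.onFun Disjoint P)) (h0 : ∀ j, μ (P j) ≠ 0)
    (htop : ∀ j, μ (P j) ≠ ∞) :
    ∃ b : X → ℝ, Measurable b ∧ EqOn b 0 (⋃ j, P j)ᶜ ∧
      (∀ j, ∀ y ∈ P j, b y = f y - ⨍ z in P j, f z ∂μ) ∧ (∀ j, ∫ y in P j, b y ∂μ = 0) ∧
      (∀ j, ∫⁻ y in P j, ‖b y‖ₑ ∂μ ≤ 2 * ∫⁻ y in P j, ‖f y‖ₑ ∂μ) ∧
      ∫⁻ y, ‖b y‖ₑ ∂μ ≤ 2 * ∫⁻ y, ‖f y‖ₑ ∂μ := by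
  obtain ⟨b, hb, hbP, hb0⟩ := exists_measurable_eqOn_of_pairwise_disjoint hP hdisj
    (g := fun j y => f y - ⨍ z in P j, f z ∂μ) fun j => hf.sub_const _
  have cell_le (j) : ∫⁻ y in P j, ‖b y‖ₑ ∂μ ≤ 2 * ∫⁻ y in P j, ‖f y‖ₑ ∂μ := by
    rw [setLIntegral_congr_fun (hP j) fun y hy => congrArg enorm (hbP j hy)]
    exact setLIntegral_enorm_sub_setAverage_le (h0 j) (htop j) hf
  refine ⟨b, hb, hb0, hbP, fun j => ?_, cell_le, ?_⟩
  · rw [setIntegral_congr_fun (hP j) (hbP j)]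
    exact setAverage_sub_setAverage (htop j) f
  calc ∫⁻ y, ‖b y‖ₑ ∂μ = ∫⁻ y in ⋃ j, P j, ‖b y‖ₑ ∂μ :=
        (setLIntegral_eq_of_support_subset fun y hy => by
          by_contra hyP
          exact hy (by simp [hb0 hyP])).symm
    _ = ∑' j, ∫⁻ y in P j, ‖b y‖ₑ ∂μ := lintegral_iUnion hP hdisj _
    _ ≤ 2 * ∑' j, ∫⁻ y in P j, ‖f y‖ₑ ∂μ := by
        rw [← ENNReal.tsum_mul_left]
        exact ENNReal.tsum_le_tsum cell_le
    _ ≤ 2 * ∫⁻ y, ‖f y‖ₑ ∂μ := by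
        rw [← lintegral_iUnion hP hdisj]
        gcongr
        exact Measure.restrict_le_self

/-- The half-open dyadic cube of side length `2 ^ n` containing `y`. -/
def dyadicCell {d : ℕ} (n : ℤ) (y : Rd d) : Set (Rd d) :=
  {z | ∀ i, ⌊z i / 2 ^ n⌋ = ⌊y i / 2 ^ n⌋}

section DyadicCell

variable {d : ℕ} {n m : ℤ} {y z w : Rd d}

lemma mem_dyadicCell_self (n : ℤ) (y : Rd d) : y ∈ dyadicCell n y := fun _ => rfl

lemma mem_dyadicCell_iff : z ∈ dyadicCell n y ↔
    ∀ i, z i ∈ Ico (2 ^ n * ⌊y i / 2 ^ n⌋ : ℝ) (2 ^ n * (⌊y i / 2 ^ n⌋ + 1)) := by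
  have h2 : (0 : ℝ) < 2 ^ n := by positivity
  refine forall_congr' fun i => ?_
  rw [Int.floor_eq_iff, le_div_iff₀ h2, div_lt_iff₀ h2, mul_comm, mul_comm (_ + 1 : ℝ), mem_Ico]

lemma dyadicCell_eq_preimage (n : ℤ) (y : Rd d) :
    dyadicCell n y = (MeasurableEquiv.toLp 2 (Fin d → ℝ)).symm ⁻¹'
      univ.pi fun i => Ico (2 ^ n * ⌊y i / 2 ^ n⌋) (2 ^ n * (⌊y i / 2 ^ n⌋ + 1)) := by
  ext z
  rw [mem_dyadicCell_iff]
  simp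

lemma measurableSet_dyadicCell (n : ℤ) (y : Rd d) : MeasurableSet (dyadicCell n y) := by
  rw [dyadicCell_eq_preimage]
  exact (MeasurableEquiv.measurable _) (.univ_pi fun _ => measurableSet_Ico)

lemma volume_dyadicCell (n : ℤ) (y : Rd d) :
    volume (dyadicCell n y) = ENNReal.ofReal ((2 ^ n) ^ d) := by
  rw [dyadicCell_eq_preimage,
    (EuclideanSpace.volume_preserving_symm_measurableEquiv_toLp (Fin d)).measure_preimage
      (MeasurableSet.univ_pi fun _ => measurableSet_Ico).nullMeasurableSet, Real.volume_pi_Ico]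
  have side (i : Fin d) : (2 : ℝ) ^ n * (⌊y i / 2 ^ n⌋ + 1) - 2 ^ n * ⌊y i / 2 ^ n⌋ = 2 ^ n := by
    ring
  simp [side, ENNReal.ofReal_pow (show (0 : ℝ) ≤ 2 ^ n by positivity)]

lemma volume_dyadicCell_ne_zero (n : ℤ) (y : Rd d) : volume (dyadicCell n y) ≠ 0 := by
  rw [volume_dyadicCell, Ne, ENNReal.ofReal_eq_zero, not_le]
  positivity

lemma volume_dyadicCell_ne_top (n : ℤ) (y : Rd d) : volume (dyadicCell n y) ≠ ∞ := by
  rw [volume_dyadicCell]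
  exact ENNReal.ofReal_ne_top

lemma volume_dyadicCell_add_one (n : ℤ) (y : Rd d) :
    volume (dyadicCell (n + 1) y) = 2 ^ d * volume (dyadicCell n y) := by
  rw [volume_dyadicCell, volume_dyadicCell, zpow_add_one₀ two_ne_zero, mul_pow, mul_comm,
    ENNReal.ofReal_mul (by positivity)]
  simp [ENNReal.ofReal_pow]

lemma dyadicCell_eq_of_mem (h : z ∈ dyadicCell n y) : dyadicCell n z = dyadicCell n y :=
  Set.ext fun _ => forall_congr' fun i => by rw [h i]

lemma dyadicCell_subset (hnm : n ≤ m) (y : Rd d) : dyadicCell n y ⊆ dyadicCell m y := by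
  intro z hz i
  obtain ⟨k, rfl⟩ := Int.le.dest hnm
  have rescale (t : ℝ) : t / 2 ^ (n + (k : ℤ)) = t / 2 ^ n / ((2 ^ k : ℕ) : ℝ) := by
    rw [zpow_add₀ two_ne_zero, zpow_natCast, div_div, Nat.cast_pow, Nat.cast_ofNat]
  rw [rescale, rescale, Int.floor_div_natCast, Int.floor_div_natCast, hz i]

lemma dist_le_of_mem_dyadicCell (hz : z ∈ dyadicCell n y) (hw : w ∈ dyadicCell n y) :
    dist z w ≤ √d * 2 ^ n := by
  rw [mem_dyadicCell_iff] at hz hw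
  have coord (i : Fin d) : |z i - w i| ≤ 2 ^ n := by
    obtain ⟨hz₁, hz₂⟩ := hz i
    obtain ⟨hw₁, hw₂⟩ := hw i
    rw [abs_le]
    constructor <;> linarith
  simpa using dist_le_sqrt_card_mul (by positivity) coord

lemma volume_closedBall_le_volume_dyadicCell (n : ℤ) (y : Rd d) :
    volume (closedBall y (√d * 2 ^ n)) ≤
      ENNReal.ofReal (√d ^ d) * volume (ball (0 : Rd d) 1) * volume (dyadicCell n y) := by
  rw [Measure.addHaar_closedBall volume y (by positivity), finrank_euclideanSpace_fin,
    volume_dyadicCell, mul_pow, ENNReal.ofReal_mul (by positivity)]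
  exact (mul_right_comm _ _ _).le

end DyadicCell

/-- The dyadic cube of generation `n` at `y` is heavy at height `α` when the average of `|f|` over
it exceeds `α`. -/
def IsHeavy {d : ℕ} (f : Rd d → ℝ) (α : ℝ≥0∞) (n : ℤ) (y : Rd d) : Prop :=
  α * volume (dyadicCell n y) < ∫⁻ z in dyadicCell n y, ‖f z‖ₑ

/-- The maximal heavy dyadic cubes, i.e. the stopping cubes of the Calderón–Zygmund decomposition.
The cube with generation `j.1` and lattice position `j.2` is returned when it is one of them, and
the empty set otherwise. -/
def stoppingCell {d : ℕ} (f : Rd d → ℝ) (α : ℝ≥0∞) (j : ℤ × (Fin d → ℤ)) : Set (Rd d) :=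
  {y | (∀ i, ⌊y i / 2 ^ j.1⌋ = j.2 i) ∧ IsHeavy f α j.1 y ∧ ∀ m, j.1 < m → ¬ IsHeavy f α m y}

section StoppingCell

variable {d : ℕ} {f : Rd d → ℝ} {α : ℝ≥0∞} {j j' : ℤ × (Fin d → ℤ)} {n m : ℤ} {y z : Rd d}

lemma isHeavy_iff_of_mem_dyadicCell (hnm : n ≤ m) (hz : z ∈ dyadicCell n y) :
    IsHeavy f α m z ↔ IsHeavy f α m y := by
  rw [IsHeavy, IsHeavy, dyadicCell_eq_of_mem (dyadicCell_subset hnm y hz)]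

lemma stoppingCell_eq_dyadicCell (hy : y ∈ stoppingCell f α j) :
    stoppingCell f α j = dyadicCell j.1 y := by
  obtain ⟨hpos, hheavy, hmax⟩ := hy
  refine Subset.antisymm (fun z hz i => (hz.1 i).trans (hpos i).symm) fun z hz => ?_
  exact ⟨fun i => (hz i).trans (hpos i), (isHeavy_iff_of_mem_dyadicCell le_rfl hz).2 hheavy,
    fun m hm h => hmax m hm ((isHeavy_iff_of_mem_dyadicCell hm.le hz).1 h)⟩

lemma eq_of_mem_stoppingCell (hy : y ∈ stoppingCell f α j) (hy' : y ∈ stoppingCell f α j') :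
    j = j' := by
  have hgen : j.1 = j'.1 := le_antisymm
    (not_lt.1 fun h => hy'.2.2 _ h hy.2.1) (not_lt.1 fun h => hy.2.2 _ h hy'.2.1)
  refine Prod.ext hgen (funext fun i => ?_)
  rw [← hy.1 i, ← hy'.1 i, hgen]

lemma IsHeavy.exists_mem_stoppingCell [NeZero d] (hα : α ≠ 0) (hf : ∫⁻ y, ‖f y‖ₑ ≠ ∞)
    (h : IsHeavy f α n y) : ∃ j, y ∈ stoppingCell f α j := by
  obtain ⟨k, hk⟩ : ∃ k : ℕ, (∫⁻ y, ‖f y‖ₑ) / α < 2 ^ k := by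
    obtain ⟨k, hk⟩ := ENNReal.exists_nat_gt (ENNReal.div_lt_top hf hα).ne
    exact ⟨k, hk.trans (mod_cast Nat.lt_two_pow_self)⟩
  have bounded (m : ℤ) (hm : IsHeavy f α m y) : m ≤ k := by
    by_contra! hlt
    have hvol : (2 : ℝ≥0∞) ^ k ≤ volume (dyadicCell m y) := by
      have hkm : (2 : ℝ) ^ k ≤ 2 ^ m := by
        rw [← zpow_natCast]
        exact zpow_le_zpow_right₀ one_le_two hlt.le
      rw [volume_dyadicCell, ← ENNReal.ofReal_ofNat 2, ← ENNReal.ofReal_pow (by norm_num)]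
      exact ENNReal.ofReal_le_ofReal
        (hkm.trans (le_self_pow₀ ((one_le_pow₀ one_le_two).trans hkm) (NeZero.ne d)))
    have hheavy : α * volume (dyadicCell m y) < ∫⁻ y, ‖f y‖ₑ :=
      hm.trans_le (setLIntegral_le_lintegral _ _)
    rw [mul_comm] at hheavy
    exact hheavy.not_ge ((ENNReal.div_le_iff_le_mul (.inl hα)
      (.inr (volume_dyadicCell_ne_zero m y))).1 (hk.le.trans hvol))
  obtain ⟨N, hN, hmax⟩ := Int.exists_greatest_of_bdd ⟨(k : ℤ), bounded⟩ ⟨n, h⟩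
  exact ⟨(N, fun i => ⌊y i / 2 ^ N⌋), fun i => rfl, hN, fun m hm h' => (hmax m h').not_gt hm⟩

lemma setLIntegral_stoppingCell_le (hj : (stoppingCell f α j).Nonempty) :
    ∫⁻ z in stoppingCell f α j, ‖f z‖ₑ ≤ 2 ^ d * α * volume (stoppingCell f α j) := by
  obtain ⟨y, hy⟩ := hj
  rw [stoppingCell_eq_dyadicCell hy]
  calc ∫⁻ z in dyadicCell j.1 y, ‖f z‖ₑ ≤ ∫⁻ z in dyadicCell (j.1 + 1) y, ‖f z‖ₑ :=
        lintegral_mono_set (dyadicCell_subset (by lia) y)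
    _ ≤ α * volume (dyadicCell (j.1 + 1) y) := not_lt.1 (hy.2.2 _ (by lia))
    _ = 2 ^ d * α * volume (dyadicCell j.1 y) := by rw [volume_dyadicCell_add_one]; ring

lemma mul_volume_stoppingCell_le (hj : (stoppingCell f α j).Nonempty) :
    α * volume (stoppingCell f α j) ≤ ∫⁻ z in stoppingCell f α j, ‖f z‖ₑ := by
  obtain ⟨y, hy⟩ := hj
  rw [stoppingCell_eq_dyadicCell hy]
  exact hy.2.1.le

lemma ae_enorm_le_of_forall_not_isHeavy [NeZero d] (hf : LocallyIntegrable f) (α : ℝ≥0∞) :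
    ∀ᵐ y, (∀ n, ¬ IsHeavy f α n y) → ‖f y‖ₑ ≤ α := by
  filter_upwards [ae_enorm_le_of_setLIntegral_le hf] with y hy hlight
  have hd : 0 < √(d : ℝ) := Real.sqrt_pos.2 (mod_cast Nat.pos_of_neZero d)
  have hr : Tendsto (fun k : ℕ => √d * 2 ^ (-k : ℤ)) atTop (𝓝[>] 0) := by
    refine tendsto_nhdsWithin_iff.2 ⟨?_, .of_forall fun k => by simp only [mem_Ioi]; positivity⟩
    simpa [← inv_pow] using (tendsto_pow_atTop_nhds_zero_of_lt_one (r := (2 : ℝ)⁻¹)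
      (by norm_num) (by norm_num)).const_mul √d
  exact hy α _ (fun k => dyadicCell (-k) y) _ (by finiteness) hr
    (fun k z hz => dist_le_of_mem_dyadicCell hz (mem_dyadicCell_self _ y))
    (fun k => volume_closedBall_le_volume_dyadicCell _ y) fun k => not_lt.1 (hlight _)

end StoppingCell

/-- A Calderón–Zygmund decomposition `f = (f - bad) + bad` of `f` at height `α`. The cells need not
be cubes: what matters is that cell `j` has diameter at most `scale j` and volume comparable to
`scale j ^ d`. -/
structure CZDecomposition {d : ℕ} (f : Rd d → ℝ) (α : ℝ≥0∞) where
  ι : Type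
  [countable_ι : Countable ι]
  cell : ι → Set (Rd d)
  centre : ι → Rd d
  scale : ι → ℝ
  bad : Rd d → ℝ
  measurableSet_cell : ∀ j, MeasurableSet (cell j)
  pairwise_disjoint_cell : Pairwise (Function.onFun Disjoint cell)
  centre_mem : ∀ j, centre j ∈ cell j
  scale_pos : ∀ j, 0 < scale j
  dist_le_scale : ∀ j, ∀ y ∈ cell j, ∀ z ∈ cell j, dist y z ≤ scale j
  scale_pow_le : ∀ j, ENNReal.ofReal (scale j ^ d) ≤ ENNReal.ofReal (√d ^ d) * volume (cell j)
  measurable_bad : Measurable bad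
  bad_eq_zero : EqOn bad 0 (⋃ j, cell j)ᶜ
  integral_cell_bad : ∀ j, ∫ y in cell j, bad y = 0
  lintegral_cell_bad_le : ∀ j, ∫⁻ y in cell j, ‖bad y‖ₑ ≤ 2 ^ (d + 1) * α * volume (cell j)
  lintegral_bad_le : ∫⁻ y, ‖bad y‖ₑ ≤ 2 * ∫⁻ y, ‖f y‖ₑ
  tsum_volume_cell_le : α * ∑' j, volume (cell j) ≤ ∫⁻ y, ‖f y‖ₑ
  ae_enorm_good_le : ∀ᵐ y, ‖f y - bad y‖ₑ ≤ 2 ^ d * α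

attribute [instance] CZDecomposition.countable_ι

section Existence

variable {d : ℕ} {f : Rd d → ℝ} {α : ℝ≥0∞}

theorem nonempty_czDecomposition [NeZero d] (hf : Measurable f) (hfi : Integrable f)
    (hα : α ≠ 0) : Nonempty (CZDecomposition f α) := by
  have hfin : ∫⁻ y, ‖f y‖ₑ ≠ ∞ := hfi.hasFiniteIntegral.ne
  let ι := {j : ℤ × (Fin d → ℤ) // (stoppingCell f α j).Nonempty}
  let P : ι → Set (Rd d) := fun j => stoppingCell f α j
  let c : ι → Rd d := fun j => j.2.choose
  have hc (j : ι) : c j ∈ P j := j.2.choose_spec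
  have P_eq (j : ι) : P j = dyadicCell j.1.1 (c j) := stoppingCell_eq_dyadicCell (hc j)
  have hP (j : ι) : MeasurableSet (P j) := P_eq j ▸ measurableSet_dyadicCell _ _
  have h0 (j : ι) : volume (P j) ≠ 0 := P_eq j ▸ volume_dyadicCell_ne_zero _ _
  have htop (j : ι) : volume (P j) ≠ ∞ := P_eq j ▸ volume_dyadicCell_ne_top _ _
  have hdisj : Pairwise (Function.onFun Disjoint P) := fun j j' hne =>
    disjoint_left.2 fun y h h' => hne (Subtype.ext (eq_of_mem_stoppingCell h h'))
  obtain ⟨b, hb, hb0, hbP, hmean, hcell, hint⟩ := exists_bad_part hf hP hdisj h0 htop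
  refine ⟨⟨ι, P, c, fun j => √d * 2 ^ j.1.1, b, hP, hdisj, hc, fun j => ?_, fun j y hy z hz => ?_,
    fun j => ?_, hb, hb0, hmean, fun j => ?_, hint, ?_, ?_⟩⟩
  · have : (0 : ℝ) < d := mod_cast Nat.pos_of_neZero d
    positivity
  · rw [P_eq] at hy hz
    exact dist_le_of_mem_dyadicCell hy hz
  · rw [P_eq, volume_dyadicCell, mul_pow, ENNReal.ofReal_mul (by positivity)]
  · refine (hcell j).trans ((mul_le_mul_right (setLIntegral_stoppingCell_le j.2) 2).trans_eq ?_)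
    ring
  · rw [← ENNReal.tsum_mul_left]
    refine (ENNReal.tsum_le_tsum fun j : ι => mul_volume_stoppingCell_le j.2).trans ?_
    rw [← lintegral_iUnion hP hdisj]
    exact setLIntegral_le_lintegral _ _
  · filter_upwards [ae_enorm_le_of_forall_not_isHeavy hfi.locallyIntegrable α] with y hlight
    by_cases hy : ∃ j, y ∈ P j
    · obtain ⟨j, hj⟩ := hy
      rw [hbP j y hj, sub_sub_cancel]
      exact (ENNReal.mul_le_mul_iff_left (h0 j) (htop j)).1
        ((enorm_setAverage_mul_le (h0 j) (htop j) f).trans (setLIntegral_stoppingCell_le j.2))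
    · have hby : b y = 0 := hb0 (by simpa using hy)
      rw [hby, sub_zero]
      refine (hlight fun n hn => ?_).trans (le_mul_of_one_le_left' (one_le_pow₀ one_le_two))
      obtain ⟨j, hj⟩ := hn.exists_mem_stoppingCell hα hfin
      exact hy ⟨⟨j, y, hj⟩, hj⟩

end Existence

lemma rpow_tsum_mul_le {ι : Type*} [Countable ι] {r : ℝ} (hr : 1 < r) (m v : ι → ℝ≥0∞) :
    (∑' i, m i * v i) ^ r ≤ (∑' i, m i) ^ (r - 1) * ∑' i, m i * v i ^ r := by
  let _ : MeasurableSpace ι := ⊤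
  simpa only [lintegral_count] using rpow_lintegral_mul_le (μ := Measure.count) hr
    (measurable_from_top (f := m)) (measurable_from_top (f := v))

lemma radialKernel_rpow_mul {h w : ℝ} (hh : 0 < h) (n : ℕ) (a b : ℝ) :
    radialKernel (fun t => t ^ a) n h w * ENNReal.ofReal ((h / w) ^ b) =
      radialKernel (fun t => t ^ (a + b)) n h w := by
  unfold radialKernel
  split_ifs with hw
  · have hw0 : 0 < w := hh.trans_le hw
    simp only [Real.rpow_add (div_pos hh hw0)]
    rw [← ENNReal.ofReal_mul (by positivity)]
    congr 1
    ring
  · rw [zero_mul]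

lemma radialKernel_le_mul_radialKernel {φ : ℝ → ℝ} (hφ : MonotoneOn φ (Ici 0)) {N A : ℝ}
    (hN : 0 < N) (hA : 0 ≤ A) (hφA : ∀ t, 0 ≤ t → φ (N * t) ≤ A * φ t)
    (n : ℕ) {h w W : ℝ} (hh : 0 < h) (hhW : h ≤ W) (hW : W ≤ N * w) :
    radialKernel φ n h w ≤ ENNReal.ofReal (A * N ^ n) * radialKernel φ n h W := by
  have hW0 : 0 < W := hh.trans_le hhW
  have hw0 : 0 < w := pos_of_mul_pos_right (hW0.trans_le hW) hN.le
  unfold radialKernel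
  split_ifs
  · have hφ_le : φ (h / w) ≤ A * φ (h / W) := by
      refine le_trans (hφ (mem_Ici.2 (by positivity)) (mem_Ici.2 (by positivity)) ?_)
        (hφA _ (by positivity))
      rw [← mul_div_assoc, div_le_div_iff₀ hw0 hW0]
      nlinarith
    have hpow_le : (w ^ n)⁻¹ ≤ N ^ n * (W ^ n)⁻¹ := by
      rw [← div_eq_mul_inv, inv_le_comm₀ (by positivity) (by positivity), inv_div, ← div_pow]
      exact pow_le_pow_left₀ (by positivity) ((div_le_iff₀' hN).2 hW) n
    calc ENNReal.ofReal (φ (h / w) / w ^ n)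
        = ENNReal.ofReal (φ (h / w)) * ENNReal.ofReal (w ^ n)⁻¹ := by
          rw [div_eq_mul_inv, ENNReal.ofReal_mul' (by positivity)]
      _ ≤ ENNReal.ofReal (A * φ (h / W)) * ENNReal.ofReal (N ^ n * (W ^ n)⁻¹) := by gcongr
      _ = ENNReal.ofReal (A * N ^ n) * ENNReal.ofReal (φ (h / W) / W ^ n) := by
          rw [← ENNReal.ofReal_mul' (by positivity), ← ENNReal.ofReal_mul (by positivity)]
          congr 1
          ring
  · exact zero_le

section Annulus

variable {α : Type*} [PseudoMetricSpace α]

lemma exists_abs_dist_sub_le_of_inter_annulus_nonempty {P : Set α} {δ : ℝ}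
    (hδ : ∀ y ∈ P, ∀ z ∈ P, dist y z ≤ δ) {ξ : α} {a b : ℝ}
    (hin : (P ∩ annulus ξ a b).Nonempty) (hout : ¬ P ⊆ annulus ξ a b) :
    ∃ r, (r = a ∨ r = b) ∧ ∀ w ∈ P, |dist ξ w - r| ≤ δ := by
  obtain ⟨y, hy, hya, hyb⟩ := hin
  obtain ⟨z, hz, hzA⟩ := not_subset.1 hout
  have hdist : ∀ u ∈ P, ∀ w ∈ P, dist ξ u ≤ dist ξ w + δ := fun u hu w hw =>
    (dist_triangle ξ w u).trans (by gcongr; exact hδ w hw u hu)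
  rcases le_or_gt (dist ξ z) a with hza | hza
  · exact ⟨a, .inl rfl, fun w hw => abs_le.2
      ⟨by linarith [hdist y hy w hw], by linarith [hdist w hw z hz]⟩⟩
  · have hzb : b < dist ξ z := lt_of_not_ge fun h => hzA ⟨hza, h⟩
    exact ⟨b, .inr rfl, fun w hw => abs_le.2
      ⟨by linarith [hdist z hz w hw], by linarith [hdist w hw y hy]⟩⟩

lemma tsum_setLIntegral_inter_annulus_le [MeasurableSpace α] [OpensMeasurableSpace α]
    (μ : Measure α) (ξ : α) {ε : ℕ → ℝ} (hε : Antitone ε) {P : Set α} (hP : MeasurableSet P)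
    (u : α → ℝ≥0∞) :
    ∑' i, ∫⁻ y in P ∩ annulus ξ (ε (i + 1)) (ε i), u y ∂μ ≤ ∫⁻ y in P, u y ∂μ := by
  simpa only [setLIntegral_indicator hP, lintegral_indicator hP] using
    tsum_setLIntegral_annulus_le μ ξ hε (P.indicator u)

end Annulus

namespace CZDecomposition

variable {d : ℕ} {f : Rd d → ℝ} {α : ℝ≥0∞} (D : CZDecomposition f α)

lemma integrable_bad (hf : Integrable f) : Integrable D.bad :=
  ⟨D.measurable_bad.aestronglyMeasurable, D.lintegral_bad_le.trans_lt
    (ENNReal.mul_lt_top ENNReal.ofNat_lt_top hf.hasFiniteIntegral)⟩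

/-- The size at `x` of a kernel with profile `φ` centred at the `j`-th cell, at twice the scale of
that cell. -/
def weight (φ : ℝ → ℝ) (x : Rd d) (j : D.ι) : ℝ≥0∞ :=
  radialKernel φ d (2 * D.scale j) (dist x (D.centre j))

/-- The total contribution at `x` of the cells in `J`, each weighted with the mass of the bad part
on it. -/
def tail (J : Set D.ι) (φ : ℝ → ℝ) (x : Rd d) : ℝ≥0∞ :=
  ∑' j : J, D.weight φ x j * ∫⁻ y in D.cell j, ‖D.bad y‖ₑ

/-- The cells whose distance to `ξ` is at least four times their scale. -/
def farCells (ξ : Rd d) : Set D.ι := {j | ∀ y ∈ D.cell j, 4 * D.scale j ≤ dist ξ y}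

/-- The cells meeting both `A` and its complement. -/
def straddling (A : Set (Rd d)) : Set D.ι := {j | (D.cell j ∩ A).Nonempty ∧ ¬ D.cell j ⊆ A}

variable {D} {ξ : Rd d} {j : D.ι}

lemma four_mul_scale_le_dist_centre (hj : j ∈ D.farCells ξ) :
    4 * D.scale j ≤ dist ξ (D.centre j) := hj _ (D.centre_mem j)

lemma half_dist_centre_le (hj : j ∈ D.farCells ξ) {y : Rd d} (hy : y ∈ D.cell j) :
    dist ξ (D.centre j) / 2 ≤ dist ξ y := by
  linarith [hj y hy, D.dist_le_scale j y hy _ (D.centre_mem j), dist_triangle ξ y (D.centre j),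
    D.scale_pos j]

lemma weight_of_mem_farCells (hj : j ∈ D.farCells ξ) (φ : ℝ → ℝ) :
    D.weight φ ξ j = ENNReal.ofReal
      (φ (2 * D.scale j / dist ξ (D.centre j)) / dist ξ (D.centre j) ^ d) :=
  if_pos (by linarith [four_mul_scale_le_dist_centre hj, D.scale_pos j])

lemma weight_le_sphereWeight_add {a b : ℝ} (hj : j ∈ D.farCells ξ)
    (hstr : j ∈ D.straddling (annulus ξ a b)) {y : Rd d} (hy : y ∈ D.cell j) :
    D.weight (fun t => t ^ (-(1 / 2) : ℝ)) ξ j ≤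
      2 ^ d * (sphereWeight ξ a y + sphereWeight ξ b y) := by
  obtain ⟨r, hr, hdist⟩ :=
    exists_abs_dist_sub_le_of_inter_annulus_nonempty (D.dist_le_scale j) hstr.1 hstr.2
  have hs := D.scale_pos j
  have hw := four_mul_scale_le_dist_centre hj
  have hwr := abs_le.1 (hdist _ (D.centre_mem j))
  set s := D.scale j
  set w := dist ξ (D.centre j)
  have hr0 : 0 < r := by linarith
  have hw0 : 0 < w := by linarith
  have hsphere := ofReal_sqrt_div_le_sphereWeight hs (by linarith) (hdist y hy)
  rw [finrank_euclideanSpace_fin] at hsphere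
  have hpow : (2 * s / w) ^ (-(1 / 2) : ℝ) ≤ √(r / s) := by
    rw [Real.rpow_neg (by positivity), ← Real.sqrt_eq_rpow, ← Real.sqrt_inv, inv_div]
    refine Real.sqrt_le_sqrt ((div_le_div_iff₀ (by positivity) hs).2 ?_)
    nlinarith
  calc D.weight (fun t => t ^ (-(1 / 2) : ℝ)) ξ j
      = ENNReal.ofReal ((2 * s / w) ^ (-(1 / 2) : ℝ) / w ^ d) := weight_of_mem_farCells hj _
    _ ≤ ENNReal.ofReal (√(r / s) / (r / 2) ^ d) := by
        refine ENNReal.ofReal_le_ofReal (div_le_div₀ (by positivity) hpow (by positivity) ?_)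
        exact pow_le_pow_left₀ (by positivity) (by linarith) d
    _ = 2 ^ d * ENNReal.ofReal (√(r / s) / r ^ d) := by
        rw [← ENNReal.ofReal_ofNat 2, ← ENNReal.ofReal_pow (by norm_num),
          ← ENNReal.ofReal_mul (by positivity)]
        congr 1
        rw [div_pow]
        field_simp
    _ ≤ 2 ^ d * (sphereWeight ξ a y + sphereWeight ξ b y) := by
        gcongr
        rcases hr with rfl | rfl
        exacts [hsphere.trans le_self_add, hsphere.trans le_add_self]

lemma tail_mono {J J' : Set D.ι} (h : J ⊆ J') (φ : ℝ → ℝ) (x : Rd d) :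
    D.tail J φ x ≤ D.tail J' φ x :=
  ENNReal.tsum_mono_subtype (fun j => D.weight φ x j * ∫⁻ y in D.cell j, ‖D.bad y‖ₑ) h

lemma rpow_tsum_weight_one_mul_le {ρ : ℝ} (hρ : 1 < ρ) (β : D.ι → ℝ≥0∞) (J : Set D.ι) :
    (∑' j : J, D.weight 1 ξ j * β j) ^ ρ ≤
      (∑' j : J, D.weight (fun t => t ^ (-(1 / 2) : ℝ)) ξ j * β j) ^ (ρ - 1) *
        ∑' j : J, D.weight (fun t => t ^ ((ρ - 1) / 2)) ξ j * β j := by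
  have hmul (j : D.ι) (b : ℝ) : D.weight (fun t => t ^ (-(1 / 2) : ℝ)) ξ j *
      ENNReal.ofReal ((2 * D.scale j / dist ξ (D.centre j)) ^ b) =
        D.weight (fun t => t ^ (-(1 / 2) + b)) ξ j :=
    radialKernel_rpow_mul (mul_pos two_pos (D.scale_pos j)) d _ b
  have hone : (1 : ℝ → ℝ) = fun t => t ^ (-(1 / 2) + 1 / 2 : ℝ) := by ext; simp
  have hexp : -(1 / 2) + 1 / 2 * ρ = (ρ - 1) / 2 := by ring
  have h := rpow_tsum_mul_le hρ (fun j : J => D.weight (fun t => t ^ (-(1 / 2) : ℝ)) ξ j * β j)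
    fun j => ENNReal.ofReal ((2 * D.scale j / dist ξ (D.centre j)) ^ (1 / 2 : ℝ))
  have hnonneg (j : D.ι) : 0 ≤ 2 * D.scale j / dist ξ (D.centre j) :=
    div_nonneg (mul_pos two_pos (D.scale_pos j)).le dist_nonneg
  simp only [
    ENNReal.ofReal_rpow_of_nonneg (Real.rpow_nonneg (hnonneg _) _) (zero_le_one.trans hρ.le),
    ← Real.rpow_mul (hnonneg _), mul_right_comm _ (β _), hmul, hexp] at h
  rwa [← hone] at h

end CZDecomposition

/-! ### Variation of the bad part -/

namespace CZO

variable {d : ℕ} (S : CZO d) {ρ : ℝ} {f : Rd d → ℝ} {α : ℝ≥0∞} {ξ : Rd d}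

lemma ofReal_abs_trunc_indicator_iUnion_sub_le {ι : Type*} [Countable ι] {P : ι → Set (Rd d)}
    (hP : ∀ j, MeasurableSet (P j)) (hdisj : Pairwise (Function.onFun Disjoint P))
    (hf : Integrable f) (ξ : Rd d) {a b : ℝ} (ha : 0 < a) (hab : a ≤ b) :
    ENNReal.ofReal |S.trunc a ((⋃ j, P j).indicator f) ξ - S.trunc b ((⋃ j, P j).indicator f) ξ| ≤
      ∑' j, ‖∫ y in P j ∩ annulus ξ a b, S.K ξ y * f y‖ₑ := by
  have hU : MeasurableSet (⋃ j, P j) := .iUnion hP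
  have hsum := hasSum_integral_iUnion (μ := volume) (s := fun j => P j ∩ annulus ξ a b)
    (f := fun y => S.K ξ y * f y) (fun j => (hP j).inter (measurableSet_annulus ξ a b))
    (fun i j hij => (hdisj hij).mono inter_subset_left inter_subset_left)
    ((S.integrableOn_K_mul hf ξ ha).mono_set (iUnion_subset fun j y hy => hy.2.1))
  have heq : ∀ y, S.K ξ y * (⋃ j, P j).indicator f y =
      (⋃ j, P j).indicator (fun y => S.K ξ y * f y) y := fun y =>
    (indicator_mul_right _ (S.K ξ) f).symm
  rw [S.trunc_sub_trunc (hf.indicator hU) ξ ha hab, ← Real.enorm_eq_ofReal_abs]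
  simp only [heq]
  rw [setIntegral_indicator hU, inter_comm, iUnion_inter, ← hsum.tsum_eq]
  exact enorm_tsum_le_tsum_enorm

section FarCell

variable {D : CZDecomposition f α} {j : D.ι}

-- The bad part has mean zero on the cell, so the kernel may be replaced by its difference with the
-- value at the centre.
lemma enorm_setIntegral_cell_le (hf : Integrable f) (hj : j ∈ D.farCells ξ) :
    ‖∫ y in D.cell j, S.K ξ y * D.bad y‖ₑ ≤
      ENNReal.ofReal S.Cst * (D.weight S.ω ξ j * ∫⁻ y in D.cell j, ‖D.bad y‖ₑ) := by
  have hs := D.scale_pos j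
  have hb := D.integrable_bad hf
  have hint : IntegrableOn (fun y => S.K ξ y * D.bad y) (D.cell j) :=
    (S.integrableOn_K_mul hb ξ hs).mono_set fun y hy => show D.scale j < dist ξ y by
      linarith [hj y hy]
  have hmean : ∫ y in D.cell j, S.K ξ y * D.bad y =
      ∫ y in D.cell j, (S.K ξ y - S.K ξ (D.centre j)) * D.bad y := by
    simp only [sub_mul]
    rw [integral_sub hint (hb.integrableOn.const_mul _), integral_const_mul,
      D.integral_cell_bad j, mul_zero, sub_zero]
  rw [hmean, ← mul_assoc, ← lintegral_const_mul _ D.measurable_bad.enorm]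
  refine (enorm_integral_le_lintegral_enorm _).trans
    (setLIntegral_mono' (D.measurableSet_cell j) fun y hy => ?_)
  rw [enorm_mul, CZDecomposition.weight, dist_comm]
  gcongr
  refine S.enorm_K_sub_right_le (by positivity) ?_ ?_
  · rw [mul_div_cancel_left₀ _ two_ne_zero]
    exact D.dist_le_scale j _ (D.centre_mem j) y hy
  · rw [dist_comm]
    linarith [CZDecomposition.four_mul_scale_le_dist_centre hj]

lemma enorm_setIntegral_cell_inter_le_weight_one (hj : j ∈ D.farCells ξ) {A : Set (Rd d)}
    (hA : MeasurableSet A) :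
    ‖∫ y in D.cell j ∩ A, S.K ξ y * D.bad y‖ₑ ≤
      ENNReal.ofReal (S.Cst * 2 ^ d) * (D.weight 1 ξ j * ∫⁻ y in D.cell j ∩ A, ‖D.bad y‖ₑ) := by
  have hw : 0 < dist ξ (D.centre j) := by
    linarith [CZDecomposition.four_mul_scale_le_dist_centre hj, D.scale_pos j]
  rw [← mul_assoc, ← lintegral_const_mul _ D.measurable_bad.enorm]
  refine (enorm_integral_le_lintegral_enorm _).trans
    (setLIntegral_mono' ((D.measurableSet_cell j).inter hA) fun y hy => ?_)
  have hCst := S.hCst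
  rw [enorm_mul, CZDecomposition.weight_of_mem_farCells hj, ← ENNReal.ofReal_mul (by positivity),
    Real.enorm_eq_ofReal_abs]
  gcongr
  refine (S.abs_K_le (by positivity) (CZDecomposition.half_dist_centre_le hj hy.1)).trans_eq ?_
  rw [div_pow, Pi.one_apply]
  field_simp

lemma enorm_setIntegral_cell_inter_le (hf : Integrable f) (hj : j ∈ D.farCells ξ)
    {A : Set (Rd d)} (hA : MeasurableSet A) :
    ‖∫ y in D.cell j ∩ A, S.K ξ y * D.bad y‖ₑ ≤
      ENNReal.ofReal S.Cst * (D.weight S.ω ξ j * ∫⁻ y in D.cell j ∩ A, ‖D.bad y‖ₑ) +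
      ENNReal.ofReal (S.Cst * 2 ^ d) * (D.straddling A).indicator
        (fun j => D.weight 1 ξ j * ∫⁻ y in D.cell j ∩ A, ‖D.bad y‖ₑ) j := by
  by_cases hstr : j ∈ D.straddling A
  · rw [indicator_of_mem hstr]
    exact (S.enorm_setIntegral_cell_inter_le_weight_one hj hA).trans le_add_self
  · refine le_trans ?_ le_self_add
    rcases (D.cell j ∩ A).eq_empty_or_nonempty with hempty | hne
    · simp [hempty]
    · rw [inter_eq_left.2 (not_not.1 fun hsub => hstr ⟨hne, hsub⟩)]
      exact S.enorm_setIntegral_cell_le hf hj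

end FarCell

end CZO

namespace CZDecomposition

variable {d : ℕ}

lemma exists_tsum_straddling_annulus_le [NeZero d] :
    ∃ C : ℝ≥0∞, C ≠ ∞ ∧ ∀ {f : Rd d → ℝ} {α : ℝ≥0∞} (D : CZDecomposition f α) {ξ : Rd d}
      {a b : ℝ}, 0 < a → 0 < b → ∀ J ⊆ D.farCells ξ ∩ D.straddling (annulus ξ a b),
      D.tail J (fun t => t ^ (-(1 / 2) : ℝ)) ξ ≤ C * α := by
  obtain ⟨C, hC, hsphere⟩ := exists_lintegral_sphereWeight_le (volume : Measure (Rd d))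
  refine ⟨2 ^ (d + 1) * 2 ^ d * (C + C), by finiteness, fun {f α} D {ξ a b} ha hb J hJ => ?_⟩
  set σ : Rd d → ℝ≥0∞ := fun y => sphereWeight ξ a y + sphereWeight ξ b y
  have hcell (j : J) : D.weight (fun t => t ^ (-(1 / 2) : ℝ)) ξ j *
      ∫⁻ y in D.cell j, ‖D.bad y‖ₑ ≤ 2 ^ (d + 1) * 2 ^ d * α * ∫⁻ y in D.cell j, σ y := by
    set w := D.weight (fun t => t ^ (-(1 / 2) : ℝ)) ξ j
    calc _ ≤ w * (2 ^ (d + 1) * α * volume (D.cell j)) := by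
          gcongr
          exact D.lintegral_cell_bad_le j
      _ = 2 ^ (d + 1) * α * ∫⁻ _ in D.cell j, w := by rw [setLIntegral_const]; ring
      _ ≤ 2 ^ (d + 1) * α * ∫⁻ y in D.cell j, 2 ^ d * σ y := by
          refine mul_le_mul_right (setLIntegral_mono' (D.measurableSet_cell j) fun y hy => ?_) _
          exact weight_le_sphereWeight_add (hJ j.2).1 (hJ j.2).2 hy
      _ = _ := by rw [lintegral_const_mul' _ _ (by finiteness)]; ring
  calc D.tail J (fun t => t ^ (-(1 / 2) : ℝ)) ξ
      ≤ ∑' j : J, 2 ^ (d + 1) * 2 ^ d * α * ∫⁻ y in D.cell j, σ y := ENNReal.tsum_le_tsum hcell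
    _ = 2 ^ (d + 1) * 2 ^ d * α * ∫⁻ y in ⋃ j : J, D.cell j, σ y := by
        rw [ENNReal.tsum_mul_left, lintegral_iUnion (s := fun j : J => D.cell j)
          (fun j => D.measurableSet_cell j)
          fun i j hij => D.pairwise_disjoint_cell (Subtype.coe_ne_coe.2 hij)]
    _ ≤ 2 ^ (d + 1) * 2 ^ d * α * (C + C) := by
        gcongr
        refine (setLIntegral_le_lintegral _ _).trans ?_
        rw [lintegral_add_left (measurable_sphereWeight ξ a)]
        exact add_le_add (hsphere ξ a ha) (hsphere ξ b hb)
    _ = _ := by ring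

variable {f : Rd d → ℝ} {α : ℝ≥0∞}

lemma tsum_tsum_weight_mul_annulus_le (D : CZDecomposition f α) (J : Set D.ι) (φ : ℝ → ℝ)
    (ξ : Rd d) {ε : ℕ → ℝ} (hε : Antitone ε) :
    ∑' i, ∑' j : J, D.weight φ ξ j *
      ∫⁻ y in D.cell j ∩ annulus ξ (ε (i + 1)) (ε i), ‖D.bad y‖ₑ ≤ D.tail J φ ξ := by
  rw [ENNReal.tsum_comm]
  refine ENNReal.tsum_le_tsum fun j => ?_
  rw [ENNReal.tsum_mul_left]
  gcongr
  exact tsum_setLIntegral_inter_annulus_le volume ξ hε (D.measurableSet_cell j) _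

lemma exists_tsum_rpow_straddling_le [NeZero d] {ρ : ℝ} (hρ : 1 < ρ) :
    ∃ C : ℝ≥0∞, C ≠ ∞ ∧ ∀ {f : Rd d → ℝ} {α : ℝ≥0∞} (D : CZDecomposition f α) {ξ : Rd d}
      (J : Set D.ι), J ⊆ D.farCells ξ → ∀ {ε : ℕ → ℝ}, Antitone ε → (∀ i, 0 < ε i) →
      ∑' i, (∑' j : ↥(J ∩ D.straddling (annulus ξ (ε (i + 1)) (ε i))), D.weight 1 ξ j *
        ∫⁻ y in D.cell j ∩ annulus ξ (ε (i + 1)) (ε i), ‖D.bad y‖ₑ) ^ ρ ≤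
      C * (α ^ (ρ - 1) * D.tail J (fun t => t ^ ((ρ - 1) / 2)) ξ) := by
  obtain ⟨C, hC, hboundary⟩ := exists_tsum_straddling_annulus_le (d := d)
  have hρ1 : 0 ≤ ρ - 1 := by linarith
  refine ⟨C ^ (ρ - 1), ENNReal.rpow_ne_top_of_nonneg hρ1 hC, fun {f α} D {ξ} J hJ {ε} hanti hpos =>
    ?_⟩
  rw [← mul_assoc, ← ENNReal.mul_rpow_of_nonneg _ _ hρ1]
  refine le_trans ?_ (mul_le_mul_right (D.tsum_tsum_weight_mul_annulus_le J _ ξ hanti) _)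
  rw [← ENNReal.tsum_mul_left]
  refine ENNReal.tsum_le_tsum fun i => ?_
  set A := annulus ξ (ε (i + 1)) (ε i)
  set β : D.ι → ℝ≥0∞ := fun j => ∫⁻ y in D.cell j ∩ A, ‖D.bad y‖ₑ
  refine (rpow_tsum_weight_one_mul_le hρ β _).trans (mul_le_mul' ?_ ?_)
  · refine ENNReal.rpow_le_rpow (le_trans (ENNReal.tsum_le_tsum fun j => ?_)
      (hboundary D (hpos (i + 1)) (hpos i) _ (inter_subset_inter_left _ hJ))) hρ1
    exact mul_le_mul_right (lintegral_mono_set inter_subset_left) _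
  · exact ENNReal.tsum_mono_subtype
      (fun j => D.weight (fun t => t ^ ((ρ - 1) / 2)) ξ j * β j) inter_subset_left

end CZDecomposition

namespace CZO

variable {d : ℕ} (S : CZO d) {ρ : ℝ}

lemma ofReal_abs_trunc_cells_sub_le {f : Rd d → ℝ} {α : ℝ≥0∞} (D : CZDecomposition f α)
    (hf : Integrable f) {ξ : Rd d} {J : Set D.ι} (hJ : J ⊆ D.farCells ξ) {a b : ℝ} (ha : 0 < a)
    (hab : a ≤ b) :
    ENNReal.ofReal |S.trunc a ((⋃ j : J, D.cell j).indicator D.bad) ξ -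
        S.trunc b ((⋃ j : J, D.cell j).indicator D.bad) ξ| ≤
      ENNReal.ofReal S.Cst *
        (∑' j : J, D.weight S.ω ξ j * ∫⁻ y in D.cell j ∩ annulus ξ a b, ‖D.bad y‖ₑ) +
      ENNReal.ofReal (S.Cst * 2 ^ d) * ∑' j : ↥(J ∩ D.straddling (annulus ξ a b)),
        D.weight 1 ξ j * ∫⁻ y in D.cell j ∩ annulus ξ a b, ‖D.bad y‖ₑ := by
  set g : D.ι → ℝ≥0∞ := fun j => D.weight 1 ξ j * ∫⁻ y in D.cell j ∩ annulus ξ a b, ‖D.bad y‖ₑ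
  have hstr : ∑' j : ↥(J ∩ D.straddling (annulus ξ a b)), g j =
      ∑' j : J, (D.straddling (annulus ξ a b)).indicator g j := by
    rw [tsum_subtype, tsum_subtype J, indicator_indicator]
  rw [hstr, ← ENNReal.tsum_mul_left, ← ENNReal.tsum_mul_left, ← ENNReal.tsum_add]
  refine (S.ofReal_abs_trunc_indicator_iUnion_sub_le (P := fun j : J => D.cell j)
    (fun j => D.measurableSet_cell j)
    (fun i j hij => D.pairwise_disjoint_cell (Subtype.coe_ne_coe.2 hij))
    (D.integrable_bad hf) ξ ha hab).trans (ENNReal.tsum_le_tsum fun j => ?_)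
  exact S.enorm_setIntegral_cell_inter_le hf (hJ j.2) (measurableSet_annulus ξ a b)

variable [NeZero d]

lemma exists_var_cells_le (hρ : 1 < ρ) :
    ∃ C : ℝ≥0∞, C ≠ ∞ ∧ ∀ {f : Rd d → ℝ} {α : ℝ≥0∞} (D : CZDecomposition f α), Integrable f →
      ∀ {ξ : Rd d} (J : Set D.ι), J ⊆ D.farCells ξ →
      S.var ρ ((⋃ j : J, D.cell j).indicator D.bad) ξ ≤ C * (D.tail J S.ω ξ +
        (α ^ (ρ - 1) * D.tail J (fun t => t ^ ((ρ - 1) / 2)) ξ) ^ (1 / ρ)) := by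
  obtain ⟨C, hC, hstr⟩ := CZDecomposition.exists_tsum_rpow_straddling_le (d := d) hρ
  have hρ0 : 0 < ρ := by linarith
  set c₁ := ENNReal.ofReal S.Cst
  set c₂ := ENNReal.ofReal (S.Cst * 2 ^ d)
  have hC' : C ^ (1 / ρ) ≠ ∞ := ENNReal.rpow_ne_top_of_nonneg (by positivity) hC
  refine ⟨c₁ + c₂ * C ^ (1 / ρ), by finiteness, fun {f α} D hf {ξ} J hJ =>
    iSup₂_le fun ε ⟨hanti, hpos, _⟩ => ?_⟩
  set X : ℕ → ℝ≥0∞ := fun i => ∑' j : J, D.weight S.ω ξ j *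
    ∫⁻ y in D.cell j ∩ annulus ξ (ε (i + 1)) (ε i), ‖D.bad y‖ₑ
  set Z : ℕ → ℝ≥0∞ := fun i => ∑' j : ↥(J ∩ D.straddling (annulus ξ (ε (i + 1)) (ε i))),
    D.weight 1 ξ j * ∫⁻ y in D.cell j ∩ annulus ξ (ε (i + 1)) (ε i), ‖D.bad y‖ₑ
  set H := α ^ (ρ - 1) * D.tail J (fun t => t ^ ((ρ - 1) / 2)) ξ
  have hX : (∑' i, (c₁ * X i) ^ ρ) ^ (1 / ρ) ≤ c₁ * D.tail J S.ω ξ := by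
    refine (tsum_rpow_rpow_inv_antitone one_pos hρ.le _).trans ?_
    simp only [ENNReal.rpow_one, div_one, ENNReal.tsum_mul_left]
    gcongr
    exact D.tsum_tsum_weight_mul_annulus_le J _ ξ hanti.antitone
  have hZ : (∑' i, (c₂ * Z i) ^ ρ) ^ (1 / ρ) ≤ c₂ * (C ^ (1 / ρ) * H ^ (1 / ρ)) := by
    simp only [ENNReal.mul_rpow_of_nonneg _ _ hρ0.le, ENNReal.tsum_mul_left]
    rw [ENNReal.mul_rpow_of_nonneg _ _ (by positivity), one_div, ENNReal.rpow_rpow_inv hρ0.ne',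
      ← ENNReal.mul_rpow_of_nonneg _ _ (by positivity)]
    gcongr
    exact hstr D J hJ hanti.antitone hpos
  calc _ ≤ (∑' i, (c₁ * X i + c₂ * Z i) ^ ρ) ^ (1 / ρ) := by
        gcongr with i
        exact S.ofReal_abs_trunc_cells_sub_le D hf hJ (hpos (i + 1)) (hanti.antitone i.le_succ)
    _ ≤ c₁ * D.tail J S.ω ξ + c₂ * (C ^ (1 / ρ) * H ^ (1 / ρ)) :=
        (tsum_add_rpow_le hρ.le _ _).trans (add_le_add hX hZ)
    _ ≤ (c₁ + c₂ * C ^ (1 / ρ)) * (D.tail J S.ω ξ + H ^ (1 / ρ)) := by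
        rw [mul_add, ← mul_assoc]
        gcongr
        exacts [le_self_add, le_add_self]

end CZO

namespace CZDecomposition

variable {d : ℕ} {f : Rd d → ℝ} {α : ℝ≥0∞}

/-- The dilated cells, outside of which the bad part is only seen from afar. The factor makes every
cell that meets `(3Q)ᶜ` far from all points of `Q`, whenever `Q` has a point off this set. -/
def exceptionalSet (D : CZDecomposition f α) : Set (Rd d) :=
  ⋃ j, closedBall (D.centre j) (6 * (1 + √d) * D.scale j)

variable {D : CZDecomposition f α} {x ξ y : Rd d} {j : D.ι}

lemma lt_dist_centre_of_notMem_exceptionalSet (hx : x ∉ D.exceptionalSet) (j : D.ι) :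
    6 * (1 + √d) * D.scale j < dist x (D.centre j) :=
  not_le.1 fun h => hx (mem_iUnion.2 ⟨j, h⟩)

lemma five_mul_scale_le_dist {κ : ℝ} (hκ : 0 ≤ κ) (hy : y ∈ D.cell j)
    (hxξ : dist x ξ ≤ κ * dist ξ y) (hx : 6 * (1 + κ) * D.scale j < dist x (D.centre j)) :
    5 * D.scale j ≤ dist ξ y := by
  have hs := D.scale_pos j
  have hyc := D.dist_le_scale j y hy _ (D.centre_mem j)
  have htri := dist_triangle4 x ξ y (D.centre j)
  refine le_of_mul_le_mul_left ?_ (by linarith : 0 < 1 + κ)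
  nlinarith

lemma mem_farCells_of_dist_le {κ : ℝ} (hκ : 0 ≤ κ) (hy : y ∈ D.cell j)
    (hxξ : dist x ξ ≤ κ * dist ξ y) (hx : 6 * (1 + κ) * D.scale j < dist x (D.centre j)) :
    j ∈ D.farCells ξ := fun z hz => by
  linarith [five_mul_scale_le_dist hκ hy hxξ hx, D.dist_le_scale j z hz y hy, dist_triangle ξ z y]

lemma tail_le_mul_tail_univ {φ : ℝ → ℝ} (hφ : MonotoneOn φ (Ici 0)) {N A : ℝ} (hN : 0 < N)
    (hA : 0 ≤ A) (hφA : ∀ t, 0 ≤ t → φ (N * t) ≤ A * φ t) {J : Set D.ι}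
    (hx : ∀ j ∈ J, 2 * D.scale j ≤ dist x (D.centre j))
    (hxξ : ∀ j ∈ J, dist x (D.centre j) ≤ N * dist ξ (D.centre j)) :
    D.tail J φ ξ ≤ ENNReal.ofReal (A * N ^ d) * D.tail univ φ x := by
  refine le_trans ?_ (mul_le_mul_right (tail_mono (subset_univ J) φ x) _)
  rw [tail, tail, ← ENNReal.tsum_mul_left]
  refine ENNReal.tsum_le_tsum fun j => ?_
  rw [← mul_assoc]
  exact mul_le_mul_left (radialKernel_le_mul_radialKernel hφ hN hA hφA d
    (mul_pos two_pos (D.scale_pos j)) (hx j j.2) (hxξ j j.2)) _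

lemma two_mul_scale_le_dist_centre (hx : x ∉ D.exceptionalSet) (j : D.ι) :
    2 * D.scale j ≤ dist x (D.centre j) := by
  nlinarith [lt_dist_centre_of_notMem_exceptionalSet hx j, D.scale_pos j,
    mul_nonneg (Real.sqrt_nonneg d) (D.scale_pos j).le]

lemma mem_farCells_of_notMem_dilate {Q : Cube d} (hx : x ∉ D.exceptionalSet) (hxQ : x ∈ Q.set)
    (hξ : ξ ∈ Q.set) (hyj : y ∈ D.cell j) (hy : y ∉ Q.dilate 3) : j ∈ D.farCells ξ :=
  mem_farCells_of_dist_le (Real.sqrt_nonneg d) hyj (Q.dist_le_sqrt_mul_dist hxQ hξ hy)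
    (lt_dist_centre_of_notMem_exceptionalSet hx j)

lemma mem_ball_diff_ball_of_not_cell_subset {Q Q₀ : Cube d} (hx : x ∉ D.exceptionalSet)
    (hxQ : x ∈ Q.set) (hξ : ξ ∈ Q.set) (hQ : Q.set ⊆ Q₀.set) (hy : y ∈ Q₀.dilate 3 \ Q.dilate 3)
    (hyj : y ∈ D.cell j) (hj : ¬ D.cell j ⊆ Q₀.dilate 3 \ Q.dilate 3) :
    y ∈ ball x ((6 * √d + 1) * Q.l) \ ball ξ Q.l ∪
      ball x ((6 * √d + 1) * (Q₀.l / 2)) \ ball ξ (Q₀.l / 2) := by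
  obtain ⟨z, hzj, hz⟩ := not_subset.1 hj
  have hl := Q.hl
  have hl₀ := Q₀.hl
  have hd := Real.sqrt_nonneg d
  have hfar : 4 * D.scale j ≤ dist ξ z := mem_farCells_of_notMem_dilate hx hxQ hξ hyj hy.2 z hzj
  have hyz := D.dist_le_scale j y hyj z hzj
  simp only [mem_union, Set.mem_sdiff, mem_ball', not_lt]
  by_cases hzQ : z ∈ Q.dilate 3
  · have hxz := Q.dist_le_of_mem_dilate three_pos.le (Q.set_subset_dilate_three hxQ) hzQ
    have hξz := Q.dist_le_of_mem_dilate three_pos.le (Q.set_subset_dilate_three hξ) hzQ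
    refine .inl ⟨?_, Q.le_dist_of_notMem_dilate_three hξ hy.2⟩
    nlinarith [dist_triangle x z y, dist_comm y z, mul_nonneg hd hl.le]
  · have hzQ₀ : z ∉ Q₀.dilate 3 := fun h => hz ⟨h, hzQ⟩
    have hxy := Q₀.dist_le_of_mem_dilate three_pos.le (Q₀.set_subset_dilate_three (hQ hxQ)) hy.1
    have hξz := Q₀.le_dist_of_notMem_dilate_three (hQ hξ) hzQ₀
    exact .inr ⟨by linarith, by linarith [dist_triangle ξ y z]⟩

end CZDecomposition

namespace CZO

variable {d : ℕ} (S : CZO d) {ρ : ℝ}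

lemma var_indicator_diff_cells_le (hρ : 1 ≤ ρ) {f : Rd d → ℝ} {α : ℝ≥0∞} (D : CZDecomposition f α)
    (hf : Integrable f) {x ξ : Rd d} {Q Q₀ : Cube d} (hx : x ∉ D.exceptionalSet) (hxQ : x ∈ Q.set)
    (hξ : ξ ∈ Q.set) (hQ : Q.set ⊆ Q₀.set) :
    S.var ρ (((Q₀.dilate 3 \ Q.dilate 3) \
      ⋃ j : {j | D.cell j ⊆ Q₀.dilate 3 \ Q.dilate 3}, D.cell j).indicator D.bad) ξ ≤
    2 * (ENNReal.ofReal (S.Cst * (6 * √d + 1) ^ d) * volume (ball (0 : Rd d) 1)) *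
      hlMaximal volume (fun y => ‖D.bad y‖ₑ) x := by
  have := D.countable_ι
  set R := 6 * √d + 1
  have hR : 0 < R := by positivity
  set E := Q₀.dilate 3 \ Q.dilate 3
  have hE : MeasurableSet E := (Q₀.measurableSet_dilate 3).diff (Q.measurableSet_dilate 3)
  set B := ⋃ j : {j | D.cell j ⊆ E}, D.cell j
  have hB : MeasurableSet B := .iUnion fun j => D.measurableSet_cell j
  set U := ball x (R * Q.l) \ ball ξ Q.l
  set U₀ := ball x (R * (Q₀.l / 2)) \ ball ξ (Q₀.l / 2)
  have hU : ∀ y ∈ E \ B, y ∉ U ∪ U₀ → D.bad y = 0 := fun y hy hyU => D.bad_eq_zero fun hycell => by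
    obtain ⟨j, hyj⟩ := mem_iUnion.1 hycell
    exact hyU (CZDecomposition.mem_ball_diff_ball_of_not_cell_subset hx hxQ hξ hQ hy.1 hyj
      fun hj => hy.2 (mem_iUnion.2 ⟨⟨j, hj⟩, hyj⟩))
  have hmeas : MeasurableSet (U ∪ U₀) := (measurableSet_ball.diff measurableSet_ball).union
    (measurableSet_ball.diff measurableSet_ball)
  calc S.var ρ ((E \ B).indicator D.bad) ξ
      ≤ ∫⁻ y in E \ B, ‖S.K ξ y * D.bad y‖ₑ :=
        S.var_indicator_le_setLIntegral hρ (D.integrable_bad hf) (hE.diff hB) ξ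
    _ ≤ ∫⁻ y in U ∪ U₀, ‖S.K ξ y * D.bad y‖ₑ := by
        rw [← lintegral_indicator (hE.diff hB), ← lintegral_indicator hmeas]
        refine lintegral_mono (indicator_le fun y hy => ?_)
        by_cases hyU : y ∈ U ∪ U₀
        · rw [indicator_of_mem hyU]
        · simp [hU y hy hyU]
    _ ≤ (∫⁻ y in U, ‖S.K ξ y * D.bad y‖ₑ) + ∫⁻ y in U₀, ‖S.K ξ y * D.bad y‖ₑ :=
        lintegral_union_le _ _ _
    _ ≤ _ := by
        rw [mul_assoc, two_mul]
        exact add_le_add (S.setLIntegral_enorm_K_mul_le_hlMaximal D.bad x ξ Q.hl hR)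
          (S.setLIntegral_enorm_K_mul_le_hlMaximal D.bad x ξ (half_pos Q₀.hl) hR)

/-- The pointwise bound, off the exceptional set, for the grand maximal function of the bad part. -/
def badMajorant (ρ : ℝ) {f : Rd d → ℝ} {α : ℝ≥0∞} (D : CZDecomposition f α) (x : Rd d) : ℝ≥0∞ :=
  D.tail univ S.ω x + (α ^ (ρ - 1) * D.tail univ (fun t => t ^ ((ρ - 1) / 2)) x) ^ (1 / ρ) +
    hlMaximal volume (fun y => ‖D.bad y‖ₑ) x

lemma exists_var_cells_le_badMajorant [NeZero d] (hρ : 1 < ρ) :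
    ∃ C : ℝ≥0∞, C ≠ ∞ ∧ ∀ {f : Rd d → ℝ} {α : ℝ≥0∞} (D : CZDecomposition f α), Integrable f →
      ∀ {x ξ : Rd d} {Q : Cube d}, x ∉ D.exceptionalSet → x ∈ Q.set → ξ ∈ Q.set →
      ∀ J : Set D.ι, (∀ j ∈ J, Disjoint (D.cell j) (Q.dilate 3)) →
        S.var ρ ((⋃ j : J, D.cell j).indicator D.bad) ξ ≤ C * S.badMajorant ρ D x := by
  obtain ⟨C, hC, hcells⟩ := S.exists_var_cells_le hρ
  set N : ℕ := ⌈1 + √d⌉₊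
  have hNd : 1 + √d ≤ N := Nat.le_ceil _
  have hN : (0 : ℝ) < N := lt_of_lt_of_le (by positivity) hNd
  have ha : 0 < (ρ - 1) / 2 := by linarith
  have hρ' : 0 ≤ 1 / ρ := by positivity
  set a := (ρ - 1) / 2
  set c₁ := ENNReal.ofReal (N * (N : ℝ) ^ d)
  set c₂ := ENNReal.ofReal ((N : ℝ) ^ a * (N : ℝ) ^ d)
  have hc₂ : c₂ ^ (1 / ρ) ≠ ∞ := ENNReal.rpow_ne_top_of_nonneg hρ' ENNReal.ofReal_ne_top
  refine ⟨C * (c₁ + c₂ ^ (1 / ρ)), by finiteness, fun {f α} D hf {x ξ Q} hx hxQ hξ J hJ => ?_⟩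
  have hout (j) (hj : j ∈ J) : D.centre j ∉ Q.dilate 3 :=
    (hJ j hj).notMem_of_mem_left (D.centre_mem j)
  have hfar : J ⊆ D.farCells ξ := fun j hj =>
    CZDecomposition.mem_farCells_of_notMem_dilate hx hxQ hξ (D.centre_mem j) (hout j hj)
  have hscale (j) (_ : j ∈ J) := CZDecomposition.two_mul_scale_le_dist_centre hx j
  have hcomp (j) (hj : j ∈ J) : dist x (D.centre j) ≤ N * dist ξ (D.centre j) :=
    (Q.dist_le_one_add_sqrt_mul_dist hxQ hξ (hout j hj)).trans (by gcongr)
  have hω : D.tail J S.ω ξ ≤ c₁ * D.tail univ S.ω x :=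
    D.tail_le_mul_tail_univ S.ω_mono hN hN.le (fun t => S.ω_nat_mul_le N) hscale hcomp
  have hpow : D.tail J (fun t => t ^ a) ξ ≤ c₂ * D.tail univ (fun t => t ^ a) x :=
    D.tail_le_mul_tail_univ (fun s hs t _ hst => Real.rpow_le_rpow hs hst ha.le) hN (by positivity)
      (fun t ht => (Real.mul_rpow hN.le ht).le) hscale hcomp
  calc S.var ρ ((⋃ j : J, D.cell j).indicator D.bad) ξ
      ≤ C * (D.tail J S.ω ξ + (α ^ (ρ - 1) * D.tail J (fun t => t ^ a) ξ) ^ (1 / ρ)) :=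
        hcells D hf J hfar
    _ ≤ C * (c₁ * D.tail univ S.ω x +
          (c₂ * (α ^ (ρ - 1) * D.tail univ (fun t => t ^ a) x)) ^ (1 / ρ)) := by
        rw [mul_left_comm c₂]
        gcongr
    _ ≤ C * (c₁ + c₂ ^ (1 / ρ)) * S.badMajorant ρ D x := by
        rw [ENNReal.mul_rpow_of_nonneg _ _ hρ', mul_assoc]
        refine mul_le_mul_right (le_trans ?_ (mul_le_mul_right le_self_add _)) C
        rw [mul_add]
        gcongr
        exacts [le_self_add, le_add_self]

lemma exists_grandMaxLoc_bad_le [NeZero d] (hρ : 1 < ρ) :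
    ∃ C : ℝ≥0∞, C ≠ ∞ ∧ ∀ {f : Rd d → ℝ} {α : ℝ≥0∞} (D : CZDecomposition f α), Integrable f →
      ∀ (Q₀ : Cube d) {x : Rd d}, x ∉ D.exceptionalSet →
        S.grandMaxLoc ρ Q₀ D.bad x ≤ C * S.badMajorant ρ D x := by
  obtain ⟨C, hC, hcells⟩ := S.exists_var_cells_le_badMajorant hρ
  set c := 2 * (ENNReal.ofReal (S.Cst * (6 * √d + 1) ^ d) * volume (ball (0 : Rd d) 1))
  have hc : c ≠ ∞ := by
    have := measure_ball_lt_top (μ := volume) (x := (0 : Rd d)) (r := 1)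
    finiteness
  refine ⟨C + c, by finiteness, fun {f α} D hf Q₀ {x} hx =>
    S.grandMaxLoc_le_of_forall fun Q hxQ hQ ξ hξ => ?_⟩
  have := D.countable_ι
  set E := Q₀.dilate 3 \ Q.dilate 3
  have hE : MeasurableSet E := (Q₀.measurableSet_dilate 3).diff (Q.measurableSet_dilate 3)
  set J := {j | D.cell j ⊆ E}
  set B := ⋃ j : J, D.cell j
  have hB : MeasurableSet B := .iUnion fun j => D.measurableSet_cell j
  have hsplit : E.indicator D.bad = fun y => B.indicator D.bad y + (E \ B).indicator D.bad y := by
    rw [← indicator_union_of_disjoint disjoint_sdiff_right,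
      union_sdiff_cancel (iUnion_subset fun j : J => j.2)]
  have hbad := D.integrable_bad hf
  calc S.var ρ (E.indicator D.bad) ξ
      ≤ S.var ρ (B.indicator D.bad) ξ + S.var ρ ((E \ B).indicator D.bad) ξ := by
        rw [hsplit]
        exact S.var_add_le hρ.le (hbad.indicator hB) (hbad.indicator (hE.diff hB)) ξ
    _ ≤ C * S.badMajorant ρ D x + c * hlMaximal volume (fun y => ‖D.bad y‖ₑ) x :=
        add_le_add (hcells D hf hx hxQ hξ J fun j hj => disjoint_sdiff_left.mono_left hj)
          (S.var_indicator_diff_cells_le hρ.le D hf hx hxQ hξ hQ)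
    _ ≤ (C + c) * S.badMajorant ρ D x := by
        rw [add_mul]
        gcongr
        exact le_add_self

end CZO

/-! ### Weak type and interpolation -/

lemma lt_rpow_mul_of_lt_mul_rpow {r : ℝ} (hr : 1 ≤ r) {a c b : ℝ≥0∞}
    (h : a < c * (a ^ (r - 1) * b) ^ (1 / r)) : a < c ^ r * b := by
  have hr0 : 0 < r := by linarith
  refine lt_of_mul_lt_mul_left' (a := a ^ (r - 1)) ?_
  calc a ^ (r - 1) * a = a ^ r := rpow_sub_one_mul_self hr a
    _ < (c * (a ^ (r - 1) * b) ^ (1 / r)) ^ r := ENNReal.rpow_lt_rpow h hr0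
    _ = a ^ (r - 1) * (c ^ r * b) := by
        rw [ENNReal.mul_rpow_of_nonneg _ _ hr0.le, ← ENNReal.rpow_mul, one_div_mul_cancel hr0.ne',
          ENNReal.rpow_one, mul_left_comm]

section LevelSets

variable {X : Type*} [MeasurableSpace X] {μ : Measure X}

lemma measure_lt_le_of_le_add {F G H : X → ℝ≥0∞} (h : ∀ x, F x ≤ G x + H x) (t : ℝ≥0∞) :
    μ {x | t < F x} ≤ μ {x | t < 2 * G x} + μ {x | t < 2 * H x} := by
  refine (measure_mono fun x (hx : t < F x) => ?_).trans (measure_union_le _ _)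
  rcases le_total (G x) (H x) with hGH | hHG
  · exact .inr ((hx.trans_le (h x)).trans_le (by rw [two_mul]; gcongr))
  · exact .inl ((hx.trans_le (h x)).trans_le (by rw [two_mul]; gcongr))

lemma rpow_mul_measure_lt_const_mul_le {F : X → ℝ≥0∞} {q : ℝ} (hq : 0 < q) {B : ℝ≥0∞}
    (h : ∀ t, t ^ q * μ {x | t < F x} ≤ B) {c : ℝ≥0∞} (hc : c ≠ ∞) (t : ℝ≥0∞) :
    t ^ q * μ {x | t < c * F x} ≤ c ^ q * B := by
  rcases eq_or_ne c 0 with rfl | hc0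
  · simp
  have hset : {x | t < c * F x} = {x | t / c < F x} := by
    simp only [ENNReal.div_lt_iff (.inl hc0) (.inl hc), mul_comm]
  calc t ^ q * μ {x | t < c * F x} = c ^ q * ((t / c) ^ q * μ {x | t / c < F x}) := by
        rw [hset, ← mul_assoc, ← ENNReal.mul_rpow_of_nonneg _ _ hq.le,
          ENNReal.mul_div_cancel hc0 hc]
    _ ≤ c ^ q * B := by gcongr; exact h _

lemma mul_measure_lt_const_mul_le {F : X → ℝ≥0∞} {B : ℝ≥0∞}
    (h : ∀ t, t * μ {x | t < F x} ≤ B) {c : ℝ≥0∞} (hc : c ≠ ∞) (t : ℝ≥0∞) :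
    t * μ {x | t < c * F x} ≤ c * B := by
  simpa using rpow_mul_measure_lt_const_mul_le one_pos (by simpa using h) hc t

lemma mul_measure_lt_le_lintegral {F : X → ℝ≥0∞} (hF : Measurable F) (t : ℝ≥0∞) :
    t * μ {x | t < F x} ≤ ∫⁻ x, F x ∂μ :=
  (mul_le_mul_right (measure_mono fun _ (h : t < _) => h.le) t).trans
    (mul_meas_ge_le_lintegral hF t)

lemma lintegral_enorm_rpow_le_of_ae_le {F : Type*} [NormedAddCommGroup F] [MeasurableSpace F]
    [OpensMeasurableSpace F] {g : X → F} (hg : Measurable g) {M : ℝ≥0∞}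
    (hM : ∀ᵐ x ∂μ, ‖g x‖ₑ ≤ M) {q : ℝ} (hq : 1 ≤ q) :
    ∫⁻ x, ‖g x‖ₑ ^ q ∂μ ≤ M ^ (q - 1) * ∫⁻ x, ‖g x‖ₑ ∂μ := by
  rw [← lintegral_const_mul _ hg.enorm]
  refine lintegral_mono_ae ?_
  filter_upwards [hM] with x hx
  rw [← rpow_sub_one_mul_self hq]
  gcongr

lemma lintegral_enorm_indicator_rpow {F : Type*} [NormedAddCommGroup F] {A : Set X}
    (hA : MeasurableSet A) (g : X → F) {q : ℝ} (hq : 0 < q) :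
    ∫⁻ x, ‖A.indicator g x‖ₑ ^ q ∂μ = ∫⁻ x in A, ‖g x‖ₑ ^ q ∂μ := by
  rw [← lintegral_indicator hA]
  exact lintegral_congr fun x => by by_cases hx : x ∈ A <;> simp [hx, hq]

end LevelSets

namespace CZDecomposition

variable {d : ℕ} {f : Rd d → ℝ} {α : ℝ≥0∞} (D : CZDecomposition f α)

lemma measurable_weight {φ : ℝ → ℝ} (hφ : MonotoneOn φ (Ici 0)) (j : D.ι) :
    Measurable fun x => D.weight φ x j :=
  (measurable_radialKernel hφ d (mul_pos two_pos (D.scale_pos j)).le).comp (by fun_prop)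

lemma measurable_tail {φ : ℝ → ℝ} (hφ : MonotoneOn φ (Ici 0)) (J : Set D.ι) :
    Measurable (D.tail J φ) := by
  have := D.countable_ι
  exact Measurable.tsum fun j => (D.measurable_weight hφ j).mul_const _

lemma lintegral_weight_le {φ : ℝ → ℝ} (hφ : MonotoneOn φ (Ici 0)) (j : D.ι) :
    ∫⁻ x, D.weight φ x j ≤ 2 ^ d * volume (ball (0 : Rd d) 1) * dyadicSum φ := by
  have h := lintegral_radialKernel_le volume hφ (mul_pos two_pos (D.scale_pos j)) (D.centre j)
  simp only [finrank_euclideanSpace_fin, dist_comm (D.centre j)] at h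
  exact h

lemma tsum_setLIntegral_bad_le (J : Set D.ι) :
    ∑' j : J, ∫⁻ y in D.cell j, ‖D.bad y‖ₑ ≤ 2 * ∫⁻ y, ‖f y‖ₑ := by
  have := D.countable_ι
  rw [← lintegral_iUnion (fun j : J => D.measurableSet_cell j)
    fun i j hij => D.pairwise_disjoint_cell (Subtype.coe_ne_coe.2 hij)]
  exact (setLIntegral_le_lintegral _ _).trans D.lintegral_bad_le

lemma lintegral_tail_le {φ : ℝ → ℝ} (hφ : MonotoneOn φ (Ici 0)) (J : Set D.ι) :
    ∫⁻ x, D.tail J φ x ≤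
      2 ^ d * volume (ball (0 : Rd d) 1) * dyadicSum φ * (2 * ∫⁻ y, ‖f y‖ₑ) := by
  have := D.countable_ι
  simp only [tail]
  rw [lintegral_tsum fun j : J => ((D.measurable_weight hφ j).mul_const _).aemeasurable]
  simp only [lintegral_mul_const _ (D.measurable_weight hφ _)]
  calc _ ≤ ∑' j : J, 2 ^ d * volume (ball (0 : Rd d) 1) * dyadicSum φ *
          ∫⁻ y in D.cell j, ‖D.bad y‖ₑ :=
        ENNReal.tsum_le_tsum fun j => mul_le_mul_left (D.lintegral_weight_le hφ j) _
    _ ≤ _ := by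
        rw [ENNReal.tsum_mul_left]
        gcongr
        exact D.tsum_setLIntegral_bad_le J

lemma mul_volume_exceptionalSet_le :
    α * volume D.exceptionalSet ≤ ENNReal.ofReal ((6 * (1 + √d)) ^ d) * ENNReal.ofReal (√d ^ d) *
      volume (ball (0 : Rd d) 1) * ∫⁻ y, ‖f y‖ₑ := by
  have := D.countable_ι
  set c := ENNReal.ofReal ((6 * (1 + √d)) ^ d) * ENNReal.ofReal (√d ^ d) *
    volume (ball (0 : Rd d) 1)
  have hball (j : D.ι) :
      volume (closedBall (D.centre j) (6 * (1 + √d) * D.scale j)) ≤ c * volume (D.cell j) := by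
    have := D.scale_pos j
    rw [Measure.addHaar_closedBall _ _ (by positivity), finrank_euclideanSpace_fin, mul_pow,
      ENNReal.ofReal_mul (by positivity), mul_right_comm _ _ (volume (D.cell j)), mul_assoc _ _
      (volume (D.cell j))]
    gcongr
    exact D.scale_pow_le j
  calc α * volume D.exceptionalSet ≤ α * ∑' j, c * volume (D.cell j) := by
        gcongr
        exact (measure_iUnion_le _).trans (ENNReal.tsum_le_tsum hball)
    _ = c * (α * ∑' j, volume (D.cell j)) := by rw [ENNReal.tsum_mul_left, mul_left_comm]
    _ ≤ c * ∫⁻ y, ‖f y‖ₑ := by gcongr; exact D.tsum_volume_cell_le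

lemma lintegral_good_le (hf : Measurable f) :
    ∫⁻ y, ‖f y - D.bad y‖ₑ ≤ 3 * ∫⁻ y, ‖f y‖ₑ :=
  calc ∫⁻ y, ‖f y - D.bad y‖ₑ ≤ ∫⁻ y, (‖f y‖ₑ + ‖D.bad y‖ₑ) := lintegral_mono fun y => enorm_sub_le
    _ = (∫⁻ y, ‖f y‖ₑ) + ∫⁻ y, ‖D.bad y‖ₑ := lintegral_add_left hf.enorm _
    _ ≤ (∫⁻ y, ‖f y‖ₑ) + 2 * ∫⁻ y, ‖f y‖ₑ := by gcongr; exact D.lintegral_bad_le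
    _ = 3 * ∫⁻ y, ‖f y‖ₑ := by ring

end CZDecomposition

namespace CZO

variable {d : ℕ} (S : CZO d) {ρ q : ℝ}

lemma grandMaxLoc_add_le (hρ : 1 ≤ ρ) (Q₀ : Cube d) {g b : Rd d → ℝ} (hg : Integrable g)
    (hb : Integrable b) (x : Rd d) :
    S.grandMaxLoc ρ Q₀ (fun y => g y + b y) x ≤
      S.grandMaxLoc ρ Q₀ g x + S.grandMaxLoc ρ Q₀ b x := by
  unfold grandMaxLoc
  split_ifs with hx
  swap
  · simp
  refine iSup₂_le fun Q hQ => ?_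
  have hE : MeasurableSet (Q₀.dilate 3 \ Q.dilate 3) :=
    (Q₀.measurableSet_dilate 3).diff (Q.measurableSet_dilate 3)
  refine (essSup_mono_ae (Eventually.of_forall fun ξ => ?_)).trans <|
    (ENNReal.essSup_add_le (S.var ρ ((Q₀.dilate 3 \ Q.dilate 3).indicator g))
      (S.var ρ ((Q₀.dilate 3 \ Q.dilate 3).indicator b))).trans <|
    add_le_add (le_iSup₂_of_le Q hQ le_rfl) (le_iSup₂_of_le Q hQ le_rfl)
  rw [indicator_add]
  exact S.var_add_le hρ (hg.indicator hE) (hb.indicator hE) ξ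

lemma grandMaxLoc_indicator_dilate (Q₀ : Cube d) (f : Rd d → ℝ) :
    S.grandMaxLoc ρ Q₀ ((Q₀.dilate 3).indicator f) = S.grandMaxLoc ρ Q₀ f := by
  ext x
  simp only [grandMaxLoc, indicator_indicator, inter_eq_left.2 sdiff_subset]

lemma volume_lt_mul_badMajorant_le (hρ : 1 ≤ ρ) {f : Rd d → ℝ} {α : ℝ≥0∞}
    (D : CZDecomposition f α) (c : ℝ≥0∞) :
    volume {x | α < c * S.badMajorant ρ D x} ≤
      volume {x | α < 4 * c * D.tail univ S.ω x} +
      volume {x | α < (4 * c) ^ ρ * D.tail univ (fun t => t ^ ((ρ - 1) / 2)) x} +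
      volume {x | α < 2 * c * hlMaximal volume (fun y => ‖D.bad y‖ₑ) x} := by
  refine (measure_lt_le_of_le_add (fun x => (mul_add c _ _).le) α).trans ?_
  simp only [← mul_assoc]
  gcongr
  refine (measure_lt_le_of_le_add (fun x => (mul_add (2 * c) _ _).le) α).trans ?_
  simp only [← mul_assoc, show (2 : ℝ≥0∞) * 2 = 4 by norm_num]
  exact add_le_add_right (measure_mono fun x => lt_rpow_mul_of_lt_mul_rpow hρ) _

lemma exists_mul_volume_badMajorant_le [NeZero d] (hρ : 1 < ρ) {c : ℝ≥0∞} (hc : c ≠ ∞) :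
    ∃ C : ℝ≥0∞, C ≠ ∞ ∧ ∀ {f : Rd d → ℝ} {α : ℝ≥0∞} (D : CZDecomposition f α),
      α * volume {x | α < c * S.badMajorant ρ D x} ≤ C * ∫⁻ y, ‖f y‖ₑ := by
  have ha : 0 < (ρ - 1) / 2 := by linarith
  have h4 : 4 * c ≠ ∞ := by finiteness
  have h4ρ : (4 * c) ^ ρ ≠ ∞ := ENNReal.rpow_ne_top_of_nonneg (by linarith) h4
  set B : ℝ≥0∞ := 2 ^ d * volume (ball (0 : Rd d) 1)
  have hB : B ≠ ∞ := ENNReal.mul_ne_top (by finiteness) measure_ball_lt_top.ne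
  have hω := S.dyadicSum_ω_ne_top
  have hpow := dyadicSum_rpow_ne_top ha
  refine ⟨4 * c * (B * dyadicSum S.ω * 2) +
    (4 * c) ^ ρ * (B * dyadicSum (fun t => t ^ ((ρ - 1) / 2)) * 2) + 2 * c * (5 ^ d * 2),
    by finiteness, fun {f α} D => ?_⟩
  have htail {φ : ℝ → ℝ} (hφ : MonotoneOn φ (Ici 0)) {k : ℝ≥0∞} (hk : k ≠ ∞) :
      α * volume {x | α < k * D.tail univ φ x} ≤ k * (B * dyadicSum φ * (2 * ∫⁻ y, ‖f y‖ₑ)) :=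
    mul_measure_lt_const_mul_le (fun t => (mul_measure_lt_le_lintegral
      (D.measurable_tail hφ univ) t).trans (D.lintegral_tail_le hφ univ)) hk α
  have hmax : α * volume {x | α < 2 * c * hlMaximal volume (fun y => ‖D.bad y‖ₑ) x} ≤
      2 * c * (5 ^ d * (2 * ∫⁻ y, ‖f y‖ₑ)) :=
    mul_measure_lt_const_mul_le (fun t => (hlMaximal_weak_type _ t).trans (by
      rw [finrank_euclideanSpace_fin]
      gcongr
      exact D.lintegral_bad_le)) (by finiteness) α
  calc _ ≤ _ := mul_le_mul_right (S.volume_lt_mul_badMajorant_le hρ.le D c) α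
    _ ≤ 4 * c * (B * dyadicSum S.ω * (2 * ∫⁻ y, ‖f y‖ₑ)) +
        (4 * c) ^ ρ * (B * dyadicSum (fun t => t ^ ((ρ - 1) / 2)) * (2 * ∫⁻ y, ‖f y‖ₑ)) +
        2 * c * (5 ^ d * (2 * ∫⁻ y, ‖f y‖ₑ)) := by
      rw [mul_add, mul_add]
      exact add_le_add (add_le_add (htail S.ω_mono h4)
        (htail (fun s hs t _ hst => Real.rpow_le_rpow hs hst ha.le) h4ρ)) hmax
    _ = _ := by ring

lemma exists_mul_volume_grandMaxLoc_bad_le [NeZero d] (hρ : 1 < ρ) :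
    ∃ C : ℝ≥0∞, C ≠ ∞ ∧ ∀ {f : Rd d → ℝ} {α : ℝ≥0∞} (D : CZDecomposition f α), Integrable f →
      ∀ Q₀ : Cube d, α * volume {x | α < 2 * S.grandMaxLoc ρ Q₀ D.bad x} ≤ C * ∫⁻ y, ‖f y‖ₑ := by
  obtain ⟨c, hc, hpt⟩ := S.exists_grandMaxLoc_bad_le hρ
  obtain ⟨C, hC, hmaj⟩ := S.exists_mul_volume_badMajorant_le hρ (c := 2 * c) (by finiteness)
  set c₀ := ENNReal.ofReal ((6 * (1 + √d)) ^ d) * ENNReal.ofReal (√d ^ d) *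
    volume (ball (0 : Rd d) 1)
  have hc₀ : c₀ ≠ ∞ := ENNReal.mul_ne_top (by finiteness) measure_ball_lt_top.ne
  refine ⟨c₀ + C, by finiteness, fun {f α} D hf Q₀ => ?_⟩
  have hsub : {x | α < 2 * S.grandMaxLoc ρ Q₀ D.bad x} ⊆
      D.exceptionalSet ∪ {x | α < 2 * c * S.badMajorant ρ D x} := fun x (hx : α < _) =>
    or_iff_not_imp_left.2 fun hxD => hx.trans_le (by
      rw [mul_assoc]
      gcongr
      exact hpt D hf Q₀ hxD)
  calc _ ≤ α * volume D.exceptionalSet + α * volume {x | α < 2 * c * S.badMajorant ρ D x} := by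
        rw [← mul_add]
        gcongr
        exact (measure_mono hsub).trans (measure_union_le _ _)
    _ ≤ (c₀ + C) * ∫⁻ y, ‖f y‖ₑ := by
        rw [add_mul]
        exact add_le_add D.mul_volume_exceptionalSet_le (hmaj D)

lemma exists_mul_volume_grandMaxLoc_good_le [NeZero d] (hρ : 1 < ρ) (hq : 1 < q)
    (hbdd : S.VarBdd ρ q) :
    ∃ C : ℝ≥0∞, C ≠ ∞ ∧ ∀ {f : Rd d → ℝ} {α : ℝ≥0∞} (D : CZDecomposition f α), Measurable f →
      α ≠ 0 → α ≠ ∞ → ∀ Q₀ : Cube d,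
        α * volume {x | α < 2 * S.grandMaxLoc ρ Q₀ (fun y => f y - D.bad y) x} ≤
          C * ∫⁻ y, ‖f y‖ₑ := by
  obtain ⟨C, hC, hweak⟩ := S.exists_rpow_mul_volume_grandMaxLoc_le hρ hq hbdd
  have hq1 : 0 ≤ q - 1 := by linarith
  have h2 : (2 : ℝ≥0∞) ^ q ≠ ∞ := ENNReal.rpow_ne_top_of_nonneg (by linarith) ENNReal.ofNat_ne_top
  have h2d : ((2 : ℝ≥0∞) ^ d) ^ (q - 1) ≠ ∞ := ENNReal.rpow_ne_top_of_nonneg hq1 (by finiteness)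
  refine ⟨2 ^ q * (C * ((2 ^ d) ^ (q - 1) * 3)), by finiteness, fun {f α} D hf hα hα' Q₀ => ?_⟩
  set g : Rd d → ℝ := fun y => f y - D.bad y
  have hg : Measurable g := hf.sub D.measurable_bad
  have hα0 : α ^ (q - 1) ≠ 0 := (ENNReal.rpow_pos (pos_iff_ne_zero.2 hα) hα').ne'
  refine (ENNReal.mul_le_mul_iff_right hα0 (ENNReal.rpow_ne_top_of_nonneg hq1 hα')).1 ?_
  calc α ^ (q - 1) * (α * volume {x | α < 2 * S.grandMaxLoc ρ Q₀ g x})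
      = α ^ q * volume {x | α < 2 * S.grandMaxLoc ρ Q₀ g x} := by
        rw [← mul_assoc, rpow_sub_one_mul_self hq.le]
    _ ≤ 2 ^ q * (C * ∫⁻ y, ‖g y‖ₑ ^ q) :=
        rpow_mul_measure_lt_const_mul_le (by linarith) (hweak Q₀ g hg) ENNReal.ofNat_ne_top α
    _ ≤ 2 ^ q * (C * ((2 ^ d * α) ^ (q - 1) * (3 * ∫⁻ y, ‖f y‖ₑ))) := by
        gcongr
        exact (lintegral_enorm_rpow_le_of_ae_le hg D.ae_enorm_good_le hq.le).trans
          (mul_le_mul_right (D.lintegral_good_le hf) _)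
    _ = α ^ (q - 1) * (2 ^ q * (C * ((2 ^ d) ^ (q - 1) * 3)) * ∫⁻ y, ‖f y‖ₑ) := by
        rw [ENNReal.mul_rpow_of_nonneg _ _ hq1]
        ring

lemma exists_mul_volume_grandMaxLoc_le [NeZero d] (hρ : 1 < ρ) (hq : 1 < q)
    (hbdd : S.VarBdd ρ q) :
    ∃ C : ℝ≥0∞, C ≠ ∞ ∧ ∀ (Q₀ : Cube d) (f : Rd d → ℝ), Measurable f →
      ∀ t : ℝ≥0∞, t * volume {x | t < S.grandMaxLoc ρ Q₀ f x} ≤ C * ∫⁻ x, ‖f x‖ₑ := by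
  obtain ⟨C, hC, hgood⟩ := S.exists_mul_volume_grandMaxLoc_good_le hρ hq hbdd
  obtain ⟨C', hC', hbad⟩ := S.exists_mul_volume_grandMaxLoc_bad_le hρ
  refine ⟨C + C' + 1, by finiteness, fun Q₀ f hf t => ?_⟩
  rcases eq_or_ne (∫⁻ x, ‖f x‖ₑ) ∞ with hfin | hfin
  · simp [hfin]
  have hfi : Integrable f := ⟨hf.aestronglyMeasurable, lt_top_iff_ne_top.2 hfin⟩
  rcases eq_or_ne t 0 with rfl | ht0
  · simp
  rcases eq_or_ne t ∞ with rfl | ht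
  · simp
  obtain ⟨D⟩ := nonempty_czDecomposition hf hfi ht0
  have hsum (x : Rd d) : S.grandMaxLoc ρ Q₀ f x ≤
      S.grandMaxLoc ρ Q₀ (f - D.bad) x + S.grandMaxLoc ρ Q₀ D.bad x := by
    have hb := D.integrable_bad hfi
    simpa only [Pi.sub_apply, sub_add_cancel] using S.grandMaxLoc_add_le hρ.le Q₀ (hfi.sub hb) hb x
  calc _ ≤ t * (volume {x | t < 2 * S.grandMaxLoc ρ Q₀ (fun y => f y - D.bad y) x} +
          volume {x | t < 2 * S.grandMaxLoc ρ Q₀ D.bad x}) := by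
        gcongr
        exact measure_lt_le_of_le_add hsum t
    _ ≤ (C + C') * ∫⁻ x, ‖f x‖ₑ := by
        rw [mul_add, add_mul]
        exact add_le_add (hgood D hf ht0 ht Q₀) (hbad D hfi Q₀)
    _ ≤ (C + C' + 1) * ∫⁻ x, ‖f x‖ₑ := mul_le_mul_left le_self_add _

lemma volume_lt_grandMaxLoc_le_add_truncations (hρ : 1 ≤ ρ) (hq : 0 < q) {C₁ C₂ : ℝ≥0∞}
    {Q₀ : Cube d}
    (h₁ : ∀ f : Rd d → ℝ, Measurable f → ∀ t : ℝ≥0∞,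
      t * volume {x | t < S.grandMaxLoc ρ Q₀ f x} ≤ C₁ * ∫⁻ x, ‖f x‖ₑ)
    (h₂ : ∀ f : Rd d → ℝ, Measurable f → ∀ t : ℝ≥0∞,
      t ^ q * volume {x | t < S.grandMaxLoc ρ Q₀ f x} ≤ C₂ * ∫⁻ x, ‖f x‖ₑ ^ q)
    {f : Rd d → ℝ} (hfi : Integrable f) (hf : Measurable f) {t : ℝ} (ht : 0 < t) :
    volume {x | ENNReal.ofReal t < S.grandMaxLoc ρ Q₀ f x} ≤
      2 * C₁ * (ENNReal.ofReal t)⁻¹ * (∫⁻ y in {y | ENNReal.ofReal t < ‖f y‖ₑ}, ‖f y‖ₑ) +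
      2 ^ q * C₂ * (ENNReal.ofReal t ^ q)⁻¹ *
        ∫⁻ y in {y | ‖f y‖ₑ ≤ ENNReal.ofReal t}, ‖f y‖ₑ ^ q := by
  set τ := ENNReal.ofReal t
  have hτ0 : τ ≠ 0 := (ENNReal.ofReal_pos.2 ht).ne'
  have hτ'0 : τ ^ q ≠ 0 := (ENNReal.rpow_pos (pos_iff_ne_zero.2 hτ0) ENNReal.ofReal_ne_top).ne'
  have hτ' : τ ^ q ≠ ∞ := ENNReal.rpow_ne_top_of_nonneg hq.le ENNReal.ofReal_ne_top
  set A : Set (Rd d) := {y | τ < ‖f y‖ₑ}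
  have hA : MeasurableSet A := measurableSet_lt measurable_const hf.enorm
  have hAc : Aᶜ = {y | ‖f y‖ₑ ≤ τ} := by ext; simp [A]
  have hsum (x : Rd d) : S.grandMaxLoc ρ Q₀ f x ≤
      S.grandMaxLoc ρ Q₀ (A.indicator f) x + S.grandMaxLoc ρ Q₀ (Aᶜ.indicator f) x := by
    simpa only [indicator_self_add_compl_apply] using
      S.grandMaxLoc_add_le hρ Q₀ (hfi.indicator hA) (hfi.indicator hA.compl) x
  refine (measure_lt_le_of_le_add hsum τ).trans (add_le_add ?_ ?_)
  · have h := mul_measure_lt_const_mul_le (h₁ _ (hf.indicator hA))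
      (ENNReal.ofNat_ne_top (n := 2)) τ
    have hint := lintegral_enorm_indicator_rpow (μ := volume) hA f one_pos
    simp only [ENNReal.rpow_one] at hint
    rw [hint, ENNReal.mul_le_iff_le_inv hτ0 ENNReal.ofReal_ne_top] at h
    exact h.trans_eq (by ring)
  · have h := rpow_mul_measure_lt_const_mul_le hq (h₂ _ (hf.indicator hA.compl))
      (ENNReal.ofNat_ne_top (n := 2)) τ
    rw [lintegral_enorm_indicator_rpow hA.compl f hq, ENNReal.mul_le_iff_le_inv hτ'0 hτ'] at h
    rw [← hAc]
    exact h.trans_eq (by ring)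

lemma exists_lintegral_grandMaxLoc_rpow_le_of_lt [NeZero d] (hρ : 1 < ρ)
    (hbdd : S.VarBdd ρ q) {p : ℝ} (hp : 1 < p) (hpq : p < q) :
    ∃ C : ℝ≥0∞, C ≠ ∞ ∧ ∀ (Q₀ : Cube d) (f : Rd d → ℝ), Measurable f →
      ∫⁻ x, S.grandMaxLoc ρ Q₀ f x ^ p ≤ C * ∫⁻ x, ‖f x‖ₑ ^ p := by
  have hq : 1 < q := hp.trans hpq
  obtain ⟨C₁, hC₁, h₁⟩ := S.exists_mul_volume_grandMaxLoc_le hρ hq hbdd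
  obtain ⟨C₂, hC₂, h₂⟩ := S.exists_rpow_mul_volume_grandMaxLoc_le hρ hq hbdd
  have h2 : (2 : ℝ≥0∞) ^ q ≠ ∞ := ENNReal.rpow_ne_top_of_nonneg (by linarith) ENNReal.ofNat_ne_top
  set C := ENNReal.ofReal p *
    (2 * C₁ / ENNReal.ofReal (p - 1) + 2 ^ q * C₂ / ENNReal.ofReal (q - p))
  have hC : C ≠ ∞ := by
    have hp1 : ENNReal.ofReal (p - 1) ≠ 0 := by simpa using hp
    have hqp : ENNReal.ofReal (q - p) ≠ 0 := by simpa using hpq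
    finiteness
  refine ⟨C + 1, by finiteness, fun Q₀ f hf => ?_⟩
  rcases eq_or_ne (∫⁻ x, ‖f x‖ₑ ^ p) ∞ with hfin | hfin
  · simp [hfin]
  have hmeas := Q₀.measurableSet_dilate 3
  set F : Rd d → ℝ := (Q₀.dilate 3).indicator f
  have hF : Integrable F := integrable_indicator_of_lintegral_rpow_ne_top hp.le hf hfin hmeas
    (Q₀.volume_dilate_lt_top (by norm_num))
  have hFm : Measurable F := hf.indicator hmeas
  calc ∫⁻ x, S.grandMaxLoc ρ Q₀ f x ^ p = ∫⁻ x, S.grandMaxLoc ρ Q₀ F x ^ p := by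
        rw [S.grandMaxLoc_indicator_dilate]
    _ ≤ C * ∫⁻ x, ‖F x‖ₑ ^ p := marcinkiewicz_interpolation hp hpq _ _ _ hFm.enorm fun t =>
        S.volume_lt_grandMaxLoc_le_add_truncations hρ.le (by linarith) (h₁ Q₀) (h₂ Q₀) hF hFm
    _ ≤ (C + 1) * ∫⁻ x, ‖f x‖ₑ ^ p := by
        gcongr with x
        exacts [le_self_add, enorm_indicator_le_enorm_self f x]

end CZO

lemma exists_pos_le_ofReal {C : ℝ≥0∞} (hC : C ≠ ∞) : ∃ c : ℝ, 0 < c ∧ C ≤ ENNReal.ofReal c :=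
  ⟨C.toReal + 1, by positivity, (ENNReal.le_ofReal_iff_toReal_le hC (by positivity)).2 (by simp)⟩

theorem grandMaxLoc_bounded_general {d : ℕ} [NeZero d] (S : CZO d) {ρ q : ℝ} (hρ : 1 < ρ)
    (hbdd : S.VarBdd ρ q) {p : ℝ} (hp : 1 < p) (hpq : p ≤ q) :
    (∃ C : ℝ, 0 < C ∧ ∀ (Q₀ : Cube d) (f : Rd d → ℝ), Measurable f →
        ∫⁻ x, S.grandMaxLoc ρ Q₀ f x ^ p ∂volume ≤
          ENNReal.ofReal C * ∫⁻ x, ENNReal.ofReal |f x| ^ p ∂volume) ∧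
    (∃ C : ℝ, 0 < C ∧ ∀ (Q₀ : Cube d) (f : Rd d → ℝ), Measurable f → ∀ t : ℝ, 0 < t →
        ENNReal.ofReal t * volume {x | ENNReal.ofReal t < S.grandMaxLoc ρ Q₀ f x} ≤
          ENNReal.ofReal C * ∫⁻ x, ENNReal.ofReal |f x| ∂volume) := by
  simp only [← Real.enorm_eq_ofReal_abs]
  constructor
  · obtain ⟨C, hC, hstrong⟩ : ∃ C : ℝ≥0∞, C ≠ ∞ ∧ ∀ (Q₀ : Cube d) (f : Rd d → ℝ), Measurable f →
        ∫⁻ x, S.grandMaxLoc ρ Q₀ f x ^ p ≤ C * ∫⁻ x, ‖f x‖ₑ ^ p := by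
      rcases hpq.eq_or_lt with rfl | hlt
      · exact S.exists_lintegral_grandMaxLoc_rpow_le hρ hp hbdd
      · exact S.exists_lintegral_grandMaxLoc_rpow_le_of_lt hρ hbdd hp hlt
    obtain ⟨c, hc, hCc⟩ := exists_pos_le_ofReal hC
    exact ⟨c, hc, fun Q₀ f hf => (hstrong Q₀ f hf).trans (by gcongr)⟩
  · obtain ⟨C, hC, hweak⟩ := S.exists_mul_volume_grandMaxLoc_le hρ (hp.trans_le hpq) hbdd
    obtain ⟨c, hc, hCc⟩ := exists_pos_le_ofReal hC
    exact ⟨c, hc, fun Q₀ f hf t _ => (hweak Q₀ f hf _).trans (by gcongr)⟩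

/-- The local grand maximal truncated operator `M_{V_ρ(T_*),Q₀}` is bounded
on `L^p(ℝ^d)` for `p ∈ (1,q]` and of weak type `(1,1)`, with operator norms independent of
the cube `Q₀`. -/
theorem grandMaxLoc_bounded
    (d : ℕ) (hd : 0 < d) (S : CZO d) (ρ q : ℝ) (hρ : 2 < ρ) (hq : 1 < q)
    (hbdd : S.VarBdd ρ q) (p : ℝ) (hp : 1 < p) (hpq : p ≤ q) :
    (∃ C : ℝ, 0 < C ∧ ∀ (Q₀ : Cube d) (f : Rd d → ℝ), Measurable f →
        ∫⁻ x, S.grandMaxLoc ρ Q₀ f x ^ p ∂volume ≤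
          ENNReal.ofReal C * ∫⁻ x, ENNReal.ofReal |f x| ^ p ∂volume) ∧
    (∃ C : ℝ, 0 < C ∧ ∀ (Q₀ : Cube d) (f : Rd d → ℝ), Measurable f → ∀ t : ℝ, 0 < t →
        ENNReal.ofReal t * volume {x | ENNReal.ofReal t < S.grandMaxLoc ρ Q₀ f x} ≤
          ENNReal.ofReal C * ∫⁻ x, ENNReal.ofReal |f x| ∂volume) := by
  have : NeZero d := ⟨hd.ne'⟩
  exact grandMaxLoc_bounded_general S (one_lt_two.trans hρ) hbdd hp hpq
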